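/- Let 𝒳 be the closure of the admissible set 𝒜 in L∞(Ω_T;ℝ²), so that (𝒳, L∞) is a nonempty complete metric space, every element of 𝒳 is Lipschitz and agrees with w* on ∂Ω_T, and the a.e.-gradient map ∇ : 𝒳 → L¹(Ω_T; M^{2×2}) is well defined. If w = (u,v) ∈ 𝒳 is a point at which the map ∇ is continuous, then u is a Lipschitz solution to the initial–Neumann problem u_t = (σ(u_x))_x + b u_x + c u + f, u(·,0) = u0, u_x = 0 on ∂Ω×(0,T), and u satisfies: (a) u = u* in Ω¹_T ∪ Ω³_T, ‖u − u*‖_{L∞(Ω_T)} < ε, ‖u_t − u*_t‖_{L∞(Ω_T)} < ε; (b) u_x < s^−_{r1} in Ω¹_T, u_x ∈ [s^−_{r1}, s^−_{r2}] ∪ [s^+_{r1}, s^+_{r2}] a.e. in Ω²_T, u_x > s^+_{r2} in Ω³_T; (c) u_x = s^−_{r1} a.e. in Ω^{0,−}_T and u_x = s^+_{r2} a.e. in Ω^{0,+}_T; (d) with F^±_T = {(x,t) ∈ Ω²_T : u_x ∈ [s^±_{r1}, s^±_{r2}]}: |F^+_T| = γ_u^E |Ω²_T|, |F^−_T| = (1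 − γ_u^E)|Ω²_T|, and |γ_u^E − Γ_{w*}^E| < ε, where E = Ω²_T. -/

import Mathlib

open MeasureTheory Set
open scoped NNReal

noncomputable section

/-- The open space-time domain `Ω_T = (0,1) × (0,T)`. -/
def OmegaT (T : ℝ) : Set (ℝ × ℝ) := Ioo (0:ℝ) 1 ×ˢ Ioo (0:ℝ) T

/-- The closed space-time domain `cl Ω_T = [0,1] × [0,T]`. -/
def ClOmegaT (T : ℝ) : Set (ℝ × ℝ) := Icc (0:ℝ) 1 ×ˢ Icc (0:ℝ) T

/-- Parabolic α-Hölder continuity on `cl Ω_T`. -/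
def ParabolicHolder (α T : ℝ) (g : ℝ → ℝ → ℝ) : Prop :=
  ∃ C : ℝ, ∀ x ∈ Icc (0:ℝ) 1, ∀ y ∈ Icc (0:ℝ) 1, ∀ t ∈ Icc (0:ℝ) T, ∀ s ∈ Icc (0:ℝ) T,
    |g x t - g y s| ≤ C * (|x - y| ^ α + |t - s| ^ (α / 2))

/-- Hypotheses on the forward-backward diffusion flux `σ`, with derivative function `σ'`
(one-sided derivative on `(-∞,s1]` and `[s2,∞)`). -/
structure FluxHyp (α s1 s2 lam Lam : ℝ) (sigma sigma' : ℝ → ℝ) : Prop where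
  alpha_pos : 0 < α
  alpha_lt_one : α < 1
  s1_pos : 0 < s1
  s1_lt_s2 : s1 < s2
  lam_pos : 0 < lam
  lam_le_Lam : lam ≤ Lam
  deriv_left : ∀ s ∈ Iic s1, HasDerivWithinAt sigma (sigma' s) (Iic s1) s
  deriv_right : ∀ s ∈ Ici s2, HasDerivWithinAt sigma (sigma' s) (Ici s2) s
  holder_left : ∃ C : ℝ, ∀ s ∈ Iic s1, ∀ t ∈ Iic s1, |sigma' s - sigma' t| ≤ C * |s - t| ^ α
  holder_right : ∃ C : ℝ, ∀ s ∈ Ici s2, ∀ t ∈ Ici s2, |sigma' s - sigma' t| ≤ C * |s - t| ^ α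
  deriv_pos : ∀ s : ℝ, s < s1 ∨ s2 < s → 0 < sigma' s
  deriv_lb : ∀ s : ℝ, s < s1 / 2 ∨ 2 * s2 < s → lam ≤ sigma' s
  deriv_ub : ∀ s : ℝ, s < s1 / 2 ∨ 2 * s2 < s → sigma' s ≤ Lam
  sigma_zero : sigma 0 = 0
  sigma_s2_lt_s1 : sigma s2 < sigma s1
  sigma_s2_nonneg : 0 ≤ sigma s2

/-- Hypotheses on the convection coefficient `b` (with spatial derivative `bx`),
reaction coefficient `c`, source `f` and the function `d` with `c = b_x + d(t)`. -/
structure CoeffHyp (α T : ℝ) (b bx c f : ℝ → ℝ → ℝ) (d : ℝ → ℝ) : Prop where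
  b_cont : ContinuousOn (fun p : ℝ × ℝ => b p.1 p.2) (ClOmegaT T)
  b_holder : ParabolicHolder α T b
  b_deriv : ∀ p ∈ ClOmegaT T, HasDerivWithinAt (fun y => b y p.2) (bx p.1 p.2) (Icc (0:ℝ) 1) p.1
  bx_cont : ContinuousOn (fun p : ℝ × ℝ => bx p.1 p.2) (ClOmegaT T)
  c_cont : ContinuousOn (fun p : ℝ × ℝ => c p.1 p.2) (ClOmegaT T)
  c_holder : ParabolicHolder α T c
  f_cont : ContinuousOn (fun p : ℝ × ℝ => f p.1 p.2) (ClOmegaT T)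
  f_holder : ParabolicHolder α T f
  d_cont : ContinuousOn d (Icc (0:ℝ) T)
  c_eq : ∀ p ∈ ClOmegaT T, c p.1 p.2 = bx p.1 p.2 + d p.2

/-- Hypotheses on the initial datum `u0 ∈ C^{2+α}([0,1])` with `u0'(0) = u0'(1) = 0`. -/
structure InitHyp (α : ℝ) (u0 u0' u0'' : ℝ → ℝ) : Prop where
  deriv1 : ∀ x ∈ Icc (0:ℝ) 1, HasDerivWithinAt u0 (u0' x) (Icc (0:ℝ) 1) x
  deriv2 : ∀ x ∈ Icc (0:ℝ) 1, HasDerivWithinAt u0' (u0'' x) (Icc (0:ℝ) 1) x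
  holder : ∃ C : ℝ, ∀ x ∈ Icc (0:ℝ) 1, ∀ y ∈ Icc (0:ℝ) 1, |u0'' x - u0'' y| ≤ C * |x - y| ^ α
  compat0 : u0' 0 = 0
  compat1 : u0' 1 = 0

/-- `u` (with a.e. spatial derivative `ux`) is a Lipschitz (weak) solution of the
initial–Neumann problem for `u_t = (σ(u_x))_x + b u_x + c u + f` on `Ω_T`. -/
def IsLipschitzSolution (T : ℝ) (sigma : ℝ → ℝ) (b c f : ℝ → ℝ → ℝ) (u0 : ℝ → ℝ)
    (u ux : ℝ → ℝ → ℝ) : Prop :=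
  (∃ K : ℝ≥0, LipschitzOnWith K (fun p : ℝ × ℝ => u p.1 p.2) (ClOmegaT T)) ∧
  (∀ᵐ p ∂(volume.restrict (OmegaT T)), HasDerivAt (fun y => u y p.2) (ux p.1 p.2) p.1) ∧
  (∀ ζ : ℝ → ℝ → ℝ, ContDiff ℝ (⊤ : ℕ∞) (fun p : ℝ × ℝ => ζ p.1 p.2) →
    ∀ s ∈ Icc (0:ℝ) T,
      (∫ t in Ioo (0:ℝ) s, ∫ x in Ioo (0:ℝ) 1,
        (u x t * deriv (fun τ => ζ x τ) t - sigma (ux x t) * deriv (fun y => ζ y t) x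
          + (b x t * ux x t + c x t * u x t + f x t) * ζ x t))
      = ∫ x in Ioo (0:ℝ) 1, (u x s * ζ x s - u0 x * ζ x 0))

/-- The forward-phase constraint: `u_x ∈ (-∞,s1) ∪ (s2,∞)` a.e. in `Ω_T`. -/
def ForwardRange (T s1 s2 : ℝ) (ux : ℝ → ℝ → ℝ) : Prop :=
  ∀ᵐ p ∂(volume.restrict (OmegaT T)), ux p.1 p.2 < s1 ∨ s2 < ux p.1 p.2

/-- `F(x,t) = ∫_0^x f(y,t) dy`. -/
def Fint (f : ℝ → ℝ → ℝ) (x t : ℝ) : ℝ := ∫ y in (0:ℝ)..x, f y t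

/-- The potential operator `P_u(x,t) = ∫_0^x (c(y,t) - b_y(y,t)) u(y,t) dy`. -/
def Pot (c bx : ℝ → ℝ → ℝ) (u : ℝ → ℝ → ℝ) (x t : ℝ) : ℝ :=
  ∫ y in (0:ℝ)..x, (c y t - bx y t) * u y t

/-- The quantity `v_t - b u - P_u - F` at `(x,t)` (the second coordinate of the gradient
constraint in the nonlocal differential inclusion). -/
def GVal (b c bx f : ℝ → ℝ → ℝ) (u vt : ℝ → ℝ → ℝ) (x t : ℝ) : ℝ :=
  vt x t - b x t * u x t - Pot c bx u x t - Fint f x t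

/-- `Σ0`, the graph of `σ`. -/
def Sigma0 (sigma : ℝ → ℝ) : Set (ℝ × ℝ) := {q | q.2 = sigma q.1}

/-- `U0 = {(s,r) : σ(s2) < r < σ(s1), s_r^- < s < s_r^+}`. -/
def U0set (sigma : ℝ → ℝ) (s1 s2 : ℝ) (sm sp : ℝ → ℝ) : Set (ℝ × ℝ) :=
  {q | sigma s2 < q.2 ∧ q.2 < sigma s1 ∧ sm q.2 < q.1 ∧ q.1 < sp q.2}

/-- `K0 = {(s,σ(s)) : s ∈ [s1*,s1] ∪ [s2,s2*]}`. -/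
def K0set (sigma : ℝ → ℝ) (s1star s1 s2 s2star : ℝ) : Set (ℝ × ℝ) :=
  {q | (q.1 ∈ Icc s1star s1 ∨ q.1 ∈ Icc s2 s2star) ∧ q.2 = sigma q.1}

/-- `w = (u,v)` (with a.e. partial derivatives `ux`, `vx`, `vt`) is a subsolution of the
nonlocal differential inclusion: `v_x = u` and `(u_x, v_t - bu - P_u - F) ∈ Σ0 ∪ U0` a.e. -/
structure IsSubsolution (T : ℝ) (sigma : ℝ → ℝ) (s1 s2 : ℝ) (sm sp : ℝ → ℝ)
    (b bx c f : ℝ → ℝ → ℝ) (u v ux vx vt : ℝ → ℝ → ℝ) : Prop where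
  lip_u : ∃ K : ℝ≥0, LipschitzOnWith K (fun p : ℝ × ℝ => u p.1 p.2) (ClOmegaT T)
  lip_v : ∃ K : ℝ≥0, LipschitzOnWith K (fun p : ℝ × ℝ => v p.1 p.2) (ClOmegaT T)
  du : ∀ᵐ p ∂(volume.restrict (OmegaT T)), HasDerivAt (fun y => u y p.2) (ux p.1 p.2) p.1
  dvx : ∀ᵐ p ∂(volume.restrict (OmegaT T)), HasDerivAt (fun y => v y p.2) (vx p.1 p.2) p.1
  dvt : ∀ᵐ p ∂(volume.restrict (OmegaT T)), HasDerivAt (fun τ => v p.1 τ) (vt p.1 p.2) p.2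
  vx_eq_u : ∀ᵐ p ∂(volume.restrict (OmegaT T)), vx p.1 p.2 = u p.1 p.2
  incl : ∀ᵐ p ∂(volume.restrict (OmegaT T)),
    (ux p.1 p.2, GVal b c bx f u vt p.1 p.2) ∈ Sigma0 sigma ∪ U0set sigma s1 s2 sm sp

/-- The transition set `O^w` of a subsolution `w = (u,v)`. -/
def TransSet (T : ℝ) (sigma : ℝ → ℝ) (s1star s1 s2 s2star : ℝ) (sm sp : ℝ → ℝ)
    (b bx c f : ℝ → ℝ → ℝ) (u vt ux : ℝ → ℝ → ℝ) : Set (ℝ × ℝ) :=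
  {p ∈ OmegaT T | (ux p.1 p.2, GVal b c bx f u vt p.1 p.2)
      ∈ K0set sigma s1star s1 s2 s2star ∪ U0set sigma s1 s2 sm sp}

/-- `Z_w = (u_x - S_w^-)/(S_w^+ - S_w^-)` with `S_w^± = s^±_{v_t - bu - P_u - F}`. -/
def Zfun (sm sp : ℝ → ℝ) (b bx c f : ℝ → ℝ → ℝ) (u vt ux : ℝ → ℝ → ℝ) (p : ℝ × ℝ) : ℝ :=
  (ux p.1 p.2 - sm (GVal b c bx f u vt p.1 p.2))
    / (sp (GVal b c bx f u vt p.1 p.2) - sm (GVal b c bx f u vt p.1 p.2))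

/-- The transition gauge `Γ_w^E = (1/|E|) ∫_E Z_w`. -/
def Gauge (sm sp : ℝ → ℝ) (b bx c f : ℝ → ℝ → ℝ) (u vt ux : ℝ → ℝ → ℝ)
    (E : Set (ℝ × ℝ)) : ℝ :=
  ((volume E).toReal)⁻¹ * ∫ p in E, Zfun sm sp b bx c f u vt ux p

/-- Membership in `C^{2,1}(cl Ω_T)`, with the derivative data `ux`, `uxx`, `ut`. -/
structure C21 (T : ℝ) (u ux uxx ut : ℝ → ℝ → ℝ) : Prop where
  dx : ∀ p ∈ ClOmegaT T, HasDerivWithinAt (fun y => u y p.2) (ux p.1 p.2) (Icc (0:ℝ) 1) p.1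
  dxx : ∀ p ∈ ClOmegaT T, HasDerivWithinAt (fun y => ux y p.2) (uxx p.1 p.2) (Icc (0:ℝ) 1) p.1
  dt : ∀ p ∈ ClOmegaT T, HasDerivWithinAt (fun τ => u p.1 τ) (ut p.1 p.2) (Icc (0:ℝ) T) p.2
  cont : ContinuousOn (fun p : ℝ × ℝ => u p.1 p.2) (ClOmegaT T)
  cont_x : ContinuousOn (fun p : ℝ × ℝ => ux p.1 p.2) (ClOmegaT T)
  cont_xx : ContinuousOn (fun p : ℝ × ℝ => uxx p.1 p.2) (ClOmegaT T)
  cont_t : ContinuousOn (fun p : ℝ × ℝ => ut p.1 p.2) (ClOmegaT T)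

/-- Membership in `C^{3,1}(cl Ω_T)`, with the derivative data `vx`, `vxx`, `vxxx`, `vt`. -/
structure C31 (T : ℝ) (v vx vxx vxxx vt : ℝ → ℝ → ℝ) : Prop where
  dx : ∀ p ∈ ClOmegaT T, HasDerivWithinAt (fun y => v y p.2) (vx p.1 p.2) (Icc (0:ℝ) 1) p.1
  dxx : ∀ p ∈ ClOmegaT T, HasDerivWithinAt (fun y => vx y p.2) (vxx p.1 p.2) (Icc (0:ℝ) 1) p.1
  dxxx : ∀ p ∈ ClOmegaT T, HasDerivWithinAt (fun y => vxx y p.2) (vxxx p.1 p.2) (Icc (0:ℝ) 1) p.1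
  dt : ∀ p ∈ ClOmegaT T, HasDerivWithinAt (fun τ => v p.1 τ) (vt p.1 p.2) (Icc (0:ℝ) T) p.2
  cont : ContinuousOn (fun p : ℝ × ℝ => v p.1 p.2) (ClOmegaT T)
  cont_x : ContinuousOn (fun p : ℝ × ℝ => vx p.1 p.2) (ClOmegaT T)
  cont_xx : ContinuousOn (fun p : ℝ × ℝ => vxx p.1 p.2) (ClOmegaT T)
  cont_xxx : ContinuousOn (fun p : ℝ × ℝ => vxxx p.1 p.2) (ClOmegaT T)
  cont_t : ContinuousOn (fun p : ℝ × ℝ => vt p.1 p.2) (ClOmegaT T)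

/-- `Ω¹_T = {(x,t) ∈ Ω_T : u*_x(x,t) < s^-_{r1}}`. -/
def Omega1 (T smr1 : ℝ) (usx : ℝ → ℝ → ℝ) : Set (ℝ × ℝ) :=
  {p ∈ OmegaT T | usx p.1 p.2 < smr1}

/-- `Ω²_T = {(x,t) ∈ Ω_T : s^-_{r1} < u*_x(x,t) < s^+_{r2}}`. -/
def Omega2 (T smr1 spr2 : ℝ) (usx : ℝ → ℝ → ℝ) : Set (ℝ × ℝ) :=
  {p ∈ OmegaT T | smr1 < usx p.1 p.2 ∧ usx p.1 p.2 < spr2}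

/-- `Ω³_T = {(x,t) ∈ Ω_T : u*_x(x,t) > s^+_{r2}}`. -/
def Omega3 (T spr2 : ℝ) (usx : ℝ → ℝ → ℝ) : Set (ℝ × ℝ) :=
  {p ∈ OmegaT T | spr2 < usx p.1 p.2}

/-- `Ω^{0,-}_T = {(x,t) ∈ Ω_T : u*_x(x,t) = s^-_{r1}}`. -/
def Omega0m (T smr1 : ℝ) (usx : ℝ → ℝ → ℝ) : Set (ℝ × ℝ) :=
  {p ∈ OmegaT T | usx p.1 p.2 = smr1}

/-- `Ω^{0,+}_T = {(x,t) ∈ Ω_T : u*_x(x,t) = s^+_{r2}}`. -/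
def Omega0p (T spr2 : ℝ) (usx : ℝ → ℝ → ℝ) : Set (ℝ × ℝ) :=
  {p ∈ OmegaT T | usx p.1 p.2 = spr2}

/-- The `L∞(Ω_T)` norm (essential supremum over `Ω_T` of the absolute value). -/
def EssSupAbs (T : ℝ) (g : ℝ → ℝ → ℝ) : ℝ :=
  essSup (fun p : ℝ × ℝ => |g p.1 p.2|) (volume.restrict (OmegaT T))

/-- Hypotheses on the modified flux `σ̃ ∈ C^{1+α}(ℝ)` (with derivative `σ̃'`). -/
structure TildeHyp (α r1 r2 lamt Lamt : ℝ) (sigma sm sp sigmat sigmat' : ℝ → ℝ) : Prop where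
  deriv : ∀ s : ℝ, HasDerivAt sigmat (sigmat' s) s
  holder : ∃ C : ℝ, ∀ s t : ℝ, |sigmat' s - sigmat' t| ≤ C * |s - t| ^ α
  eq_left : ∀ s : ℝ, s ≤ sm r1 → sigmat s = sigma s
  eq_right : ∀ s : ℝ, sp r2 ≤ s → sigmat s = sigma s
  lt_mid : ∀ s : ℝ, sm r1 < s → s ≤ sm r2 → sigmat s < sigma s
  gt_mid : ∀ s : ℝ, sp r1 ≤ s → s < sp r2 → sigma s < sigmat s
  lamt_pos : 0 < lamt
  lamt_le_Lamt : lamt ≤ Lamt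
  deriv_lb : ∀ s : ℝ, lamt ≤ sigmat' s
  deriv_ub : ∀ s : ℝ, sigmat' s ≤ Lamt

/-- `u*` is the classical solution in `C^{2+α,1+α/2}(cl Ω_T)` of the modified problem. -/
structure StarSol (α T : ℝ) (sigmat sigmat' : ℝ → ℝ) (b bx c f : ℝ → ℝ → ℝ) (u0 : ℝ → ℝ)
    (us usx usxx ust : ℝ → ℝ → ℝ) : Prop where
  reg : C21 T us usx usxx ust
  holder_xx : ParabolicHolder α T usxx
  holder_t : ParabolicHolder α T ust
  pde : ∀ p ∈ OmegaT T, ust p.1 p.2 =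
    sigmat' (usx p.1 p.2) * usxx p.1 p.2 + b p.1 p.2 * usx p.1 p.2
      + c p.1 p.2 * us p.1 p.2 + f p.1 p.2
  ic : ∀ x ∈ Icc (0:ℝ) 1, us x 0 = u0 x
  bc : ∀ t ∈ Icc (0:ℝ) T, usx 0 t = 0 ∧ usx 1 t = 0

/-- The auxiliary function
`v*(x,t) = ∫_0^t (σ̃(u*_x) + b u* + P_{u*} + F)(x,τ) dτ + ∫_0^x u0(y) dy`. -/
def VStar (sigmat : ℝ → ℝ) (b bx c f : ℝ → ℝ → ℝ) (u0 : ℝ → ℝ) (us usx : ℝ → ℝ → ℝ)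
    (x t : ℝ) : ℝ :=
  (∫ τ in (0:ℝ)..t, (sigmat (usx x τ) + b x τ * us x τ + Pot c bx us x τ + Fint f x τ))
    + ∫ y in (0:ℝ)..x, u0 y

/-- The classical time derivative of `v*`: `v*_t = σ̃(u*_x) + b u* + P_{u*} + F`. -/
def VStarT (sigmat : ℝ → ℝ) (b bx c f : ℝ → ℝ → ℝ) (us usx : ℝ → ℝ → ℝ) (x t : ℝ) : ℝ :=
  sigmat (usx x t) + b x t * us x t + Pot c bx us x t + Fint f x t

/-- A `2×2` matrix `(a b; c d)` regarded as a point of Euclidean `ℝ⁴`, so that the Euclidean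
distance is the Hilbert–Schmidt distance. -/
def mk4 (a b c d : ℝ) : EuclideanSpace ℝ (Fin 4) :=
  (WithLp.equiv 2 (Fin 4 → ℝ)).symm ![a, b, c, d]

/-- `K' = {(s,σ(s)) : s ∈ [s^-_{r1}, s^-_{r2}] ∪ [s^+_{r1}, s^+_{r2}]}`. -/
def Kprime (sigma : ℝ → ℝ) (sm sp : ℝ → ℝ) (r1 r2 : ℝ) : Set (ℝ × ℝ) :=
  {q | (q.1 ∈ Icc (sm r1) (sm r2) ∨ q.1 ∈ Icc (sp r1) (sp r2)) ∧ q.2 = sigma q.1}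

/-- `U' = {(s,r) : r1 < r < r2, s_r^- < s < s_r^+}`. -/
def Uprime (sm sp : ℝ → ℝ) (r1 r2 : ℝ) : Set (ℝ × ℝ) :=
  {q | r1 < q.2 ∧ q.2 < r2 ∧ sm q.2 < q.1 ∧ q.1 < sp q.2}

/-- The compact matrix set `K((x,t);u)` (as a subset of Euclidean `ℝ⁴`). -/
def KmatSet (sigma sm sp : ℝ → ℝ) (r1 r2 mstar : ℝ) (b c bx f : ℝ → ℝ → ℝ)
    (u : ℝ → ℝ → ℝ) (x t : ℝ) : Set (EuclideanSpace ℝ (Fin 4)) :=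
  {A | ∃ s c' q : ℝ, A = mk4 s c' (u x t) q ∧ |c'| ≤ mstar ∧
    (s, q - b x t * u x t - Pot c bx u x t - Fint f x t) ∈ Kprime sigma sm sp r1 r2}

/-- The condition `∇w(x,t) ∈ U((x,t);u)` for `w = (u,v)` with gradient data
`ux, ut, vx, vt`. -/
def GradInU (r1 r2 mstar : ℝ) (sm sp : ℝ → ℝ) (b c bx f : ℝ → ℝ → ℝ)
    (u ux ut vx vt : ℝ → ℝ → ℝ) (p : ℝ × ℝ) : Prop :=
  vx p.1 p.2 = u p.1 p.2 ∧ |ut p.1 p.2| < mstar ∧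
    (ux p.1 p.2, GVal b c bx f u vt p.1 p.2) ∈ Uprime sm sp r1 r2

/-- A pair `w = (u,v)` together with all relevant partial-derivative data. -/
structure PairData where
  u : ℝ → ℝ → ℝ
  ux : ℝ → ℝ → ℝ
  uxx : ℝ → ℝ → ℝ
  ut : ℝ → ℝ → ℝ
  v : ℝ → ℝ → ℝ
  vx : ℝ → ℝ → ℝ
  vxx : ℝ → ℝ → ℝ
  vxxx : ℝ → ℝ → ℝ
  vt : ℝ → ℝ → ℝ

/-- Membership in the admissible set `𝒜` of subsolutions. Here `us, usx, ust` are the data of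
`u*`, `vs` is `v*`, `E = Ω²_T`, `mstar = m*` and `GammaStar = Γ_{w*}^E`. -/
def InAdmissible (T r1 r2 mstar ε GammaStar : ℝ) (sigma sm sp : ℝ → ℝ)
    (b bx c f : ℝ → ℝ → ℝ) (us ust vs : ℝ → ℝ → ℝ) (E : Set (ℝ × ℝ))
    (W : PairData) : Prop :=
  C21 T W.u W.ux W.uxx W.ut ∧
  C31 T W.v W.vx W.vxx W.vxxx W.vt ∧
  (∃ O : Set (ℝ × ℝ), IsOpen O ∧ closure O ⊆ E ∧ IsCompact (closure O) ∧
    volume (frontier O) = 0 ∧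
    (∀ p ∈ OmegaT T \ closure O, W.u p.1 p.2 = us p.1 p.2 ∧ W.v p.1 p.2 = vs p.1 p.2) ∧
    (∀ p ∈ OmegaT T \ closure O, Pot c bx W.u p.1 p.2 = Pot c bx us p.1 p.2)) ∧
  EssSupAbs T (fun x t => W.u x t - us x t) < ε / 2 ∧
  EssSupAbs T (fun x t => W.ut x t - ust x t) < ε / 2 ∧
  (∀ p ∈ E, GradInU r1 r2 mstar sm sp b c bx f W.u W.ux W.ut W.vx W.vt p) ∧
  |Gauge sm sp b bx c f W.u W.vt W.ux E - GammaStar| < ε / 2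

/-- Membership in the set `𝒜_δ` of `δ`-approximating subsolutions (the extra integral
condition beyond membership in `𝒜`). -/
def DeltaApproxCond (r1 r2 mstar δ : ℝ) (sigma sm sp : ℝ → ℝ)
    (b bx c f : ℝ → ℝ → ℝ) (E : Set (ℝ × ℝ)) (W : PairData) : Prop :=
  (∫ p in E, Metric.infDist
      (mk4 (W.ux p.1 p.2) (W.ut p.1 p.2) (W.vx p.1 p.2) (W.vt p.1 p.2))
      (KmatSet sigma sm sp r1 r2 mstar b c bx f W.u p.1 p.2))
    ≤ δ * (volume E).toReal

/-!
An admissible pair `W = (u, v)` modifies `w*` only inside `E = Ω²_T`, and its flux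
`G = v_t - b u - P_u - F` satisfies `G_x = u_t - (b u_x + c u + f)`; hence `u` solves the problem
in the weak sense with `G` in place of `σ(u_x)`. On `E` the pair `(u_x, G)` lies strictly between
the two increasing branches of `σ`, at `s_G^- < u_x < s_G^+`.

Where `u_x` keeps a distance `τ` from both branches, `W` can be perturbed inside `𝒜` by adding
`k⁻² χ(x,t) cos(k x)` to `v`, with a cut-off `0 ≤ χ ≤ τ / 2`. For large `k` this is uniformly
small in `u` and `v`, but it moves `u_x` by an amount whose `L¹` norm is at least `τ / 8` times the
measure of that gap set. If `∇` is continuous at `w`, the gap sets along a sequence in `𝒜`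
converging to `w` therefore shrink to null sets, so that `u_x ∈ {s_G^-, s_G^+}` a.e. in `E`. Then
`G = σ(u_x)` a.e., the weak formulation passes to the limit, and `Z_w` is a.e. the indicator of the
phase `u_x ∈ [s^+_{r1}, s^+_{r2}]`, which turns the gauge into its volume fraction.
-/

theorem isOpen_OmegaT (T : ℝ) : IsOpen (OmegaT T) := isOpen_Ioo.prod isOpen_Ioo

theorem measurableSet_OmegaT (T : ℝ) : MeasurableSet (OmegaT T) :=
  (isOpen_OmegaT T).measurableSet

theorem isCompact_ClOmegaT (T : ℝ) : IsCompact (ClOmegaT T) := isCompact_Icc.prod isCompact_Icc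

theorem OmegaT_subset_ClOmegaT (T : ℝ) : OmegaT T ⊆ ClOmegaT T :=
  prod_mono Ioo_subset_Icc_self Ioo_subset_Icc_self

theorem closure_OmegaT {T : ℝ} (hT : 0 < T) : closure (OmegaT T) = ClOmegaT T := by
  rw [OmegaT, ClOmegaT, closure_prod_eq, closure_Ioo zero_ne_one, closure_Ioo hT.ne]

theorem Icc_mem_nhds_fst {T : ℝ} {p : ℝ × ℝ} (hp : p ∈ OmegaT T) : Icc (0 : ℝ) 1 ∈ nhds p.1 :=
  Icc_mem_nhds hp.1.1 hp.1.2

theorem Icc_mem_nhds_snd {T : ℝ} {p : ℝ × ℝ} (hp : p ∈ OmegaT T) : Icc (0 : ℝ) T ∈ nhds p.2 :=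
  Icc_mem_nhds hp.2.1 hp.2.2

theorem volume_OmegaT_lt_top (T : ℝ) : volume (OmegaT T) < ⊤ :=
  (measure_mono (OmegaT_subset_ClOmegaT T)).trans_lt (isCompact_ClOmegaT T).measure_lt_top

instance isFiniteMeasure_restrict_OmegaT (T : ℝ) :
    IsFiniteMeasure ((volume : Measure (ℝ × ℝ)).restrict (OmegaT T)) :=
  ⟨by rw [Measure.restrict_apply_univ]; exact volume_OmegaT_lt_top T⟩

theorem ae_restrict_OmegaT_neBot {T : ℝ} (hT : 0 < T) :
    (ae ((volume : Measure (ℝ × ℝ)).restrict (OmegaT T))).NeBot := by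
  rw [ae_neBot, Ne, Measure.restrict_eq_zero]
  exact ((isOpen_OmegaT T).measure_pos _
    ((nonempty_Ioo.2 one_pos).prod (nonempty_Ioo.2 hT))).ne'

theorem exists_abs_le_of_continuousOn_ClOmegaT {T : ℝ} {g : ℝ × ℝ → ℝ}
    (hg : ContinuousOn g (ClOmegaT T)) : ∃ M, 0 ≤ M ∧ ∀ p ∈ ClOmegaT T, |g p| ≤ M := by
  obtain ⟨M, hM⟩ := (isCompact_ClOmegaT T).exists_bound_of_continuousOn hg
  exact ⟨max M 0, le_max_right _ _, fun p hp => (hM p hp).trans (le_max_left _ _)⟩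

theorem EssSupAbs_le_of_ae_le {T : ℝ} (hT : 0 < T) {g : ℝ → ℝ → ℝ} {C : ℝ}
    (h : ∀ᵐ p ∂(volume.restrict (OmegaT T)), |g p.1 p.2| ≤ C) : EssSupAbs T g ≤ C := by
  have := ae_restrict_OmegaT_neBot hT
  exact essSup_le_of_ae_le C h (Filter.IsBoundedUnder.isCoboundedUnder_le ⟨0, by simp⟩)

theorem EssSupAbs_le_of_forall_le {T : ℝ} (hT : 0 < T) {g : ℝ → ℝ → ℝ} {C : ℝ}
    (h : ∀ p ∈ OmegaT T, |g p.1 p.2| ≤ C) : EssSupAbs T g ≤ C :=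
  EssSupAbs_le_of_ae_le hT (ae_restrict_of_forall_mem (measurableSet_OmegaT T) h)

theorem forall_mem_le_of_ae_le {X : Type*} [TopologicalSpace X] [MeasurableSpace X]
    [OpensMeasurableSpace X] {μ : Measure X} [μ.IsOpenPosMeasure] {U : Set X} {g : X → ℝ} {C : ℝ}
    (hU : IsOpen U) (hg : ContinuousOn g U) (h : ∀ᵐ p ∂(μ.restrict U), g p ≤ C) :
    ∀ p ∈ U, g p ≤ C := by
  by_contra! ⟨p, hp, hlt⟩
  have hpos := (hg.isOpen_inter_preimage hU isOpen_Ioi).measure_pos μ ⟨p, hp, hlt⟩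
  refine hpos.ne' (measure_mono_null ?_ ((ae_restrict_iff' hU.measurableSet).1 h))
  exact fun q hq h' => (h' hq.1).not_gt hq.2

theorem abs_le_EssSupAbs {T : ℝ} {g : ℝ → ℝ → ℝ}
    (hg : ContinuousOn (fun p : ℝ × ℝ => g p.1 p.2) (ClOmegaT T)) :
    ∀ p ∈ OmegaT T, |g p.1 p.2| ≤ EssSupAbs T g := by
  obtain ⟨M, -, hM⟩ := exists_abs_le_of_continuousOn_ClOmegaT hg
  have hbdd : Filter.IsBoundedUnder (· ≤ ·) (ae (volume.restrict (OmegaT T)))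
      fun p : ℝ × ℝ => |g p.1 p.2| :=
    ⟨M, ae_restrict_of_forall_mem (measurableSet_OmegaT T)
      fun p hp => hM p (OmegaT_subset_ClOmegaT T hp)⟩
  exact forall_mem_le_of_ae_le (isOpen_OmegaT T) (hg.mono (OmegaT_subset_ClOmegaT T)).abs
    (ae_le_essSup hbdd)

theorem eqOn_ClOmegaT_diff_closure {T : ℝ} (hT : 0 < T) {O : Set (ℝ × ℝ)} {g h : ℝ × ℝ → ℝ}
    (hg : ContinuousOn g (ClOmegaT T)) (hh : ContinuousOn h (ClOmegaT T))
    (heq : EqOn g h (OmegaT T \ closure O)) : EqOn g h (ClOmegaT T \ closure O) := by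
  rw [← closure_OmegaT hT] at hg hh ⊢
  have hsub : closure (OmegaT T) \ closure O ⊆ closure (OmegaT T \ closure O) := by
    rw [sdiff_eq, sdiff_eq, inter_comm, inter_comm (OmegaT T)]
    exact isClosed_closure.isOpen_compl.inter_closure
  refine (heq.of_subset_closure (hg.mono ?_) (hh.mono ?_) subset_closure subset_rfl).mono hsub <;>
  exact closure_mono sdiff_subset

theorem continuousOn_slice_fst {X : Type*} [TopologicalSpace X] {g : ℝ → X → ℝ} {a b : ℝ}
    {s : Set X} (hg : ContinuousOn (fun p : ℝ × X => g p.1 p.2) (Icc a b ×ˢ s)) {t : X}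
    (ht : t ∈ s) : ContinuousOn (fun x => g x t) (Icc a b) :=
  hg.comp (f := fun x => (x, t)) (by fun_prop) fun _ hx => ⟨hx, ht⟩

theorem continuousOn_slice_snd {X : Type*} [TopologicalSpace X] {g : X → ℝ → ℝ} {c d : ℝ}
    {s : Set X} (hg : ContinuousOn (fun p : X × ℝ => g p.1 p.2) (s ×ˢ Icc c d)) {x : X}
    (hx : x ∈ s) : ContinuousOn (fun t => g x t) (Icc c d) :=
  hg.comp (f := fun t => (x, t)) (by fun_prop) fun _ ht => ⟨hx, ht⟩

section Calculus

variable {a b c d x t : ℝ}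

theorem intervalIntegrable_of_continuousOn_Icc {g : ℝ → ℝ} (hg : ContinuousOn g (Icc a b))
    (hx : x ∈ Icc a b) : IntervalIntegrable g volume a x :=
  (hg.mono (Icc_subset_Icc_right hx.2)).intervalIntegrable_of_Icc hx.1

theorem integral_congr_Icc {g h : ℝ → ℝ} (hx : x ∈ Icc a b) (hgh : ∀ y ∈ Icc a b, g y = h y) :
    ∫ y in a..x, g y = ∫ y in a..x, h y := by
  refine intervalIntegral.integral_congr fun y hy => ?_
  rw [uIcc_of_le hx.1] at hy
  exact hgh y ⟨hy.1, hy.2.trans hx.2⟩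

theorem hasDerivWithinAt_primitive {g : ℝ → ℝ} (hg : ContinuousOn g (Icc a b))
    (hx : x ∈ Icc a b) :
    HasDerivWithinAt (fun z => ∫ y in a..z, g y) (g x) (Icc a b) x := by
  have : Fact (x ∈ Icc a b) := ⟨hx⟩
  exact intervalIntegral.integral_hasDerivWithinAt_right
    (intervalIntegrable_of_continuousOn_Icc hg hx)
    (hg.stronglyMeasurableAtFilter_nhdsWithin measurableSet_Icc x) (hg x hx)

theorem integral_eq_sub_of_hasDerivWithinAt_Icc {g g' : ℝ → ℝ}
    (hd : ∀ x ∈ Icc a b, HasDerivWithinAt g (g' x) (Icc a b) x)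
    (hc : ContinuousOn g' (Icc a b)) (hx : x ∈ Icc a b) :
    ∫ y in a..x, g' y = g x - g a := by
  have hcg : ContinuousOn g (Icc a b) := fun y hy => (hd y hy).continuousWithinAt
  refine intervalIntegral.integral_eq_sub_of_hasDerivAt_of_le hx.1
    (hcg.mono (Icc_subset_Icc_right hx.2)) (fun y hy => ?_)
    (intervalIntegrable_of_continuousOn_Icc hc hx)
  have hyb : y < b := hy.2.trans_le hx.2
  exact (hd y ⟨hy.1.le, hyb.le⟩).hasDerivAt (Icc_mem_nhds hy.1 hyb)

theorem continuousOn_primitive_fst {X : Type*} [TopologicalSpace X]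
    {g : ℝ → X → ℝ} {s : Set X}
    (hg : ContinuousOn (fun p : ℝ × X => g p.1 p.2) (Icc a b ×ˢ s)) :
    ContinuousOn (fun p : ℝ × X => ∫ y in a..p.1, g y p.2) (Icc a b ×ˢ s) := by
  rcases lt_or_ge b a with hba | hab
  · simp [Icc_eq_empty_of_lt hba]
  set S : Set (ℝ × X) := Icc a b ×ˢ s
  have hext : Continuous fun q : S × ℝ => g (projIcc a b hab q.2) q.1.1.2 := by
    refine hg.comp_continuous (f := fun q : S × ℝ => ((projIcc a b hab q.2 : ℝ), q.1.1.2))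
      ?_ fun q => ⟨(projIcc a b hab q.2).2, q.1.2.2⟩
    fun_prop
  rw [continuousOn_iff_continuous_domRestrict]
  refine (intervalIntegral.continuous_parametric_intervalIntegral_of_continuous
    (μ := volume) (a₀ := a) (f := fun (p : S) (y : ℝ) => g (projIcc a b hab y) p.1.2) hext
    (s := fun p => p.1.1) (by fun_prop)).congr fun p => ?_
  exact integral_congr_Icc p.2.1 fun y hy => by rw [projIcc_of_mem hab hy]

theorem intervalIntegral_intervalIntegral_swap {g : ℝ → ℝ → ℝ}
    (hg : ContinuousOn (fun p : ℝ × ℝ => g p.1 p.2) (Icc a b ×ˢ Icc c d))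
    (hx : x ∈ Icc a b) (ht : t ∈ Icc c d) :
    ∫ y in a..x, ∫ τ in c..t, g y τ = ∫ τ in c..t, ∫ y in a..x, g y τ := by
  simp only [intervalIntegral.integral_of_le hx.1, intervalIntegral.integral_of_le ht.1]
  refine integral_integral_swap ?_
  rw [Measure.prod_restrict]
  exact (hg.integrableOn_compact (isCompact_Icc.prod isCompact_Icc)).mono_set
    (prod_mono (Ioc_subset_Icc_self.trans (Icc_subset_Icc_right hx.2))
      (Ioc_subset_Icc_self.trans (Icc_subset_Icc_right ht.2)))

theorem hasDerivWithinAt_integral_fst {u ut : ℝ → ℝ → ℝ}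
    (hu : ContinuousOn (fun p : ℝ × ℝ => u p.1 p.2) (Icc a b ×ˢ Icc c d))
    (hut : ContinuousOn (fun p : ℝ × ℝ => ut p.1 p.2) (Icc a b ×ˢ Icc c d))
    (hd : ∀ p ∈ Icc a b ×ˢ Icc c d,
      HasDerivWithinAt (fun τ => u p.1 τ) (ut p.1 p.2) (Icc c d) p.2)
    (hx : x ∈ Icc a b) (ht : t ∈ Icc c d) :
    HasDerivWithinAt (fun τ => ∫ y in a..x, u y τ) (∫ y in a..x, ut y t) (Icc c d) t := by
  have hc : c ∈ Icc c d := left_mem_Icc.2 (ht.1.trans ht.2)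
  have hslice : ∀ τ ∈ Icc c d, IntervalIntegrable (fun y => u y τ) volume a x := fun τ hτ =>
    intervalIntegrable_of_continuousOn_Icc (continuousOn_slice_fst hu hτ) hx
  have key : ∀ τ ∈ Icc c d, ∫ y in a..x, u y τ
      = (∫ s in c..τ, ∫ y in a..x, ut y s) + ∫ y in a..x, u y c := fun τ hτ => by
    rw [← intervalIntegral_intervalIntegral_swap hut hx hτ, ← sub_eq_iff_eq_add,
      ← intervalIntegral.integral_sub (hslice τ hτ) (hslice c hc)]
    exact integral_congr_Icc hx fun y hy => (integral_eq_sub_of_hasDerivWithinAt_Icc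
      (fun s hs => hd (y, s) ⟨hy, hs⟩) (continuousOn_slice_snd hut hy) hτ).symm
  have hcont : ContinuousOn (fun s => ∫ y in a..x, ut y s) (Icc c d) :=
    continuousOn_slice_snd (g := fun x s => ∫ y in a..x, ut y s)
      (continuousOn_primitive_fst hut) hx
  exact ((hasDerivWithinAt_primitive hcont ht).add_const _).congr key (key t ht)

end Calculus

section Branch

variable {σ τ : ℝ → ℝ} {S : Set ℝ} {A B p q : ℝ}

theorem strictMonoOn_of_rightInverse (hσ : StrictMonoOn σ S)
    (hτ : ∀ r ∈ Icc A B, τ r ∈ S ∧ σ (τ r) = r) : StrictMonoOn τ (Icc A B) := by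
  intro r hr r' hr' hlt
  rwa [← hσ.lt_iff_lt (hτ r hr).1 (hτ r' hr').1, (hτ r hr).2, (hτ r' hr').2]

theorem continuousOn_Ioo_of_rightInverse (hσ : StrictMonoOn σ S)
    (hS : Icc p q ⊆ S) (hp : σ p = A) (hq : σ q = B)
    (hτ : ∀ r ∈ Icc A B, τ r ∈ Icc p q ∧ σ (τ r) = r) : ContinuousOn τ (Ioo A B) := by
  intro r hr
  have hmono := strictMonoOn_of_rightInverse hσ fun r hr => ⟨hS (hτ r hr).1, (hτ r hr).2⟩
  obtain ⟨hrpq, hr_eq⟩ := hτ r (Ioo_subset_Icc_self hr)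
  have hpq : p ≤ q := hrpq.1.trans hrpq.2
  have hpS : p ∈ S := hS (left_mem_Icc.2 hpq)
  have hqS : q ∈ S := hS (right_mem_Icc.2 hpq)
  refine (continuousAt_of_monotoneOn_of_image_mem_nhds (s := Icc A B) hmono.monotoneOn
    (Icc_mem_nhds hr.1 hr.2) ?_).continuousWithinAt
  have hlo : p < τ r := by rw [← hσ.lt_iff_lt hpS (hS hrpq), hr_eq, hp]; exact hr.1
  have hhi : τ r < q := by rw [← hσ.lt_iff_lt (hS hrpq) hqS, hr_eq, hq]; exact hr.2
  refine Filter.mem_of_superset (Icc_mem_nhds hlo hhi) fun y hy => ?_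
  have hmem : σ y ∈ Icc A B := by
    rw [← hp, ← hq]
    exact ⟨hσ.monotoneOn hpS (hS hy) hy.1, hσ.monotoneOn (hS hy) hqS hy.2⟩
  exact ⟨σ y, hmem, hσ.injOn (hS (hτ _ hmem).1) (hS hy) (hτ _ hmem).2⟩

theorem FluxHyp.strictMonoOn_Iic {α s1 s2 lam Lam : ℝ} {sigma sigma' : ℝ → ℝ}
    (h : FluxHyp α s1 s2 lam Lam sigma sigma') : StrictMonoOn sigma (Iic s1) := by
  refine strictMonoOn_of_deriv_pos (convex_Iic s1)
    (fun s hs => (h.deriv_left s hs).continuousWithinAt) fun x hx => ?_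
  rw [interior_Iic, mem_Iio] at hx
  rw [((h.deriv_left x hx.le).hasDerivAt (Iic_mem_nhds hx)).deriv]
  exact h.deriv_pos x (Or.inl hx)

theorem FluxHyp.strictMonoOn_Ici {α s1 s2 lam Lam : ℝ} {sigma sigma' : ℝ → ℝ}
    (h : FluxHyp α s1 s2 lam Lam sigma sigma') : StrictMonoOn sigma (Ici s2) := by
  refine strictMonoOn_of_deriv_pos (convex_Ici s2)
    (fun s hs => (h.deriv_right s hs).continuousWithinAt) fun x hx => ?_
  rw [interior_Ici, mem_Ioi] at hx
  rw [((h.deriv_right x hx.le).hasDerivAt (Ici_mem_nhds hx)).deriv]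
  exact h.deriv_pos x (Or.inr hx)

end Branch

section PartialDerivatives

variable {φ ψ : ℝ × ℝ → ℝ} {S : Set (ℝ × ℝ)} {p : ℝ × ℝ}

/-- The spatial partial derivative `∂φ/∂x` of a function of `(x, t)`. -/
def partialX (φ : ℝ × ℝ → ℝ) (p : ℝ × ℝ) : ℝ := fderiv ℝ φ p (1, 0)

/-- The time partial derivative `∂φ/∂t` of a function of `(x, t)`. -/
def partialT (φ : ℝ × ℝ → ℝ) (p : ℝ × ℝ) : ℝ := fderiv ℝ φ p (0, 1)

theorem hasDerivAt_partialX (hφ : DifferentiableAt ℝ φ p) :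
    HasDerivAt (fun y => φ (y, p.2)) (partialX φ p) p.1 :=
  hφ.hasFDerivAt.comp_hasDerivAt (f := fun y => (y, p.2)) p.1
    ((hasDerivAt_id p.1).prodMk (hasDerivAt_const p.1 p.2))

theorem hasDerivAt_partialT (hφ : DifferentiableAt ℝ φ p) :
    HasDerivAt (fun τ => φ (p.1, τ)) (partialT φ p) p.2 :=
  hφ.hasFDerivAt.comp_hasDerivAt (f := fun τ => (p.1, τ)) p.2
    ((hasDerivAt_const p.2 p.1).prodMk (hasDerivAt_id p.2))

theorem contDiff_partialX (hφ : ContDiff ℝ (⊤ : ℕ∞) φ) : ContDiff ℝ (⊤ : ℕ∞) (partialX φ) :=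
  (hφ.fderiv_right (by simp)).clm_apply contDiff_const

theorem contDiff_partialT (hφ : ContDiff ℝ (⊤ : ℕ∞) φ) : ContDiff ℝ (⊤ : ℕ∞) (partialT φ) :=
  (hφ.fderiv_right (by simp)).clm_apply contDiff_const

theorem eq_of_hasDerivAt_fst_of_eqOn (hS : IsOpen S) (hp : p ∈ S) (h : EqOn φ ψ S) {a a' : ℝ}
    (hφ : HasDerivAt (fun y => φ (y, p.2)) a p.1) (hψ : HasDerivAt (fun y => ψ (y, p.2)) a' p.1) :
    a = a' := by
  have hmem : ∀ᶠ y in nhds p.1, (y, p.2) ∈ S :=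
    (Continuous.continuousAt (f := fun y : ℝ => (y, p.2)) (by fun_prop)).eventually
      (hS.mem_nhds hp)
  exact hφ.unique (hψ.congr_of_eventuallyEq (hmem.mono fun y hy => h hy))

theorem eq_of_hasDerivAt_snd_of_eqOn (hS : IsOpen S) (hp : p ∈ S) (h : EqOn φ ψ S) {a a' : ℝ}
    (hφ : HasDerivAt (fun τ => φ (p.1, τ)) a p.2) (hψ : HasDerivAt (fun τ => ψ (p.1, τ)) a' p.2) :
    a = a' := by
  have hmem : ∀ᶠ τ in nhds p.2, (p.1, τ) ∈ S :=
    (Continuous.continuousAt (f := fun τ : ℝ => (p.1, τ)) (by fun_prop)).eventually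
      (hS.mem_nhds hp)
  exact hφ.unique (hψ.congr_of_eventuallyEq (hmem.mono fun y hy => h hy))

end PartialDerivatives

section Coefficients

variable {α T x t : ℝ} {b bx c f u ux vt : ℝ → ℝ → ℝ} {d : ℝ → ℝ}

theorem continuousOn_Pot_integrand (hcoeff : CoeffHyp α T b bx c f d)
    (hu : ContinuousOn (fun p : ℝ × ℝ => u p.1 p.2) (ClOmegaT T)) :
    ContinuousOn (fun p : ℝ × ℝ => (c p.1 p.2 - bx p.1 p.2) * u p.1 p.2) (ClOmegaT T) :=
  (hcoeff.c_cont.sub hcoeff.bx_cont).mul hu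

theorem continuousOn_Pot (hcoeff : CoeffHyp α T b bx c f d)
    (hu : ContinuousOn (fun p : ℝ × ℝ => u p.1 p.2) (ClOmegaT T)) :
    ContinuousOn (fun p : ℝ × ℝ => Pot c bx u p.1 p.2) (ClOmegaT T) :=
  continuousOn_primitive_fst (g := fun y t => (c y t - bx y t) * u y t)
    (continuousOn_Pot_integrand hcoeff hu)

theorem continuousOn_Fint (hcoeff : CoeffHyp α T b bx c f d) :
    ContinuousOn (fun p : ℝ × ℝ => Fint f p.1 p.2) (ClOmegaT T) :=
  continuousOn_primitive_fst hcoeff.f_cont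

theorem continuousOn_GVal (hcoeff : CoeffHyp α T b bx c f d)
    (hu : ContinuousOn (fun p : ℝ × ℝ => u p.1 p.2) (ClOmegaT T))
    (hvt : ContinuousOn (fun p : ℝ × ℝ => vt p.1 p.2) (ClOmegaT T)) :
    ContinuousOn (fun p : ℝ × ℝ => GVal b c bx f u vt p.1 p.2) (ClOmegaT T) :=
  ((hvt.sub (hcoeff.b_cont.mul hu)).sub (continuousOn_Pot hcoeff hu)).sub
    (continuousOn_Fint hcoeff)

theorem Pot_eq_mul_integral (hcoeff : CoeffHyp α T b bx c f d) (hx : x ∈ Icc (0 : ℝ) 1)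
    (ht : t ∈ Icc 0 T) : Pot c bx u x t = d t * ∫ y in (0 : ℝ)..x, u y t := by
  rw [Pot, ← intervalIntegral.integral_const_mul]
  refine integral_congr_Icc hx fun y hy => ?_
  linear_combination u y t * hcoeff.c_eq (y, t) ⟨hy, ht⟩

theorem hasDerivWithinAt_lowerOrder (hcoeff : CoeffHyp α T b bx c f d)
    (hu : ContinuousOn (fun p : ℝ × ℝ => u p.1 p.2) (ClOmegaT T))
    (hd : ∀ p ∈ ClOmegaT T, HasDerivWithinAt (fun y => u y p.2) (ux p.1 p.2) (Icc (0 : ℝ) 1) p.1)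
    (hx : x ∈ Icc (0 : ℝ) 1) (ht : t ∈ Icc 0 T) :
    HasDerivWithinAt (fun y => b y t * u y t + Pot c bx u y t + Fint f y t)
      (b x t * ux x t + c x t * u x t + f x t) (Icc 0 1) x := by
  have hbu : HasDerivWithinAt (fun y => b y t * u y t) (bx x t * u x t + b x t * ux x t)
      (Icc 0 1) x := (hcoeff.b_deriv (x, t) ⟨hx, ht⟩).mul (hd (x, t) ⟨hx, ht⟩)
  have hPot : HasDerivWithinAt (fun y => Pot c bx u y t) ((c x t - bx x t) * u x t) (Icc 0 1) x :=
    hasDerivWithinAt_primitive (continuousOn_slice_fst (g := fun y t => (c y t - bx y t) * u y t)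
      (continuousOn_Pot_integrand hcoeff hu) ht) hx
  have hF : HasDerivWithinAt (fun y => Fint f y t) (f x t) (Icc 0 1) x :=
    hasDerivWithinAt_primitive (continuousOn_slice_fst hcoeff.f_cont ht) hx
  exact ((hbu.add hPot).add hF).congr_deriv (by ring)

end Coefficients

section StarSolution

variable {α T x t : ℝ} {b bx c f us usx usxx ust : ℝ → ℝ → ℝ} {d u0 sigmat sigmat' : ℝ → ℝ}

theorem continuousOn_VStarT (hcoeff : CoeffHyp α T b bx c f d)
    (hst : ∀ s, HasDerivAt sigmat (sigmat' s) s)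
    (hstar : StarSol α T sigmat sigmat' b bx c f u0 us usx usxx ust) :
    ContinuousOn (fun p : ℝ × ℝ => VStarT sigmat b bx c f us usx p.1 p.2) (ClOmegaT T) := by
  have hc : Continuous sigmat := continuous_iff_continuousAt.2 fun s => (hst s).continuousAt
  exact (((hc.comp_continuousOn hstar.reg.cont_x).add (hcoeff.b_cont.mul hstar.reg.cont)).add
    (continuousOn_Pot hcoeff hstar.reg.cont)).add (continuousOn_Fint hcoeff)

theorem hasDerivAt_VStarT (hcoeff : CoeffHyp α T b bx c f d)
    (hst : ∀ s, HasDerivAt sigmat (sigmat' s) s)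
    (hstar : StarSol α T sigmat sigmat' b bx c f u0 us usx usxx ust)
    (hx : x ∈ Ioo (0 : ℝ) 1) (ht : t ∈ Ioo 0 T) :
    HasDerivAt (fun y => VStarT sigmat b bx c f us usx y t) (ust x t) x := by
  have hxI := Ioo_subset_Icc_self hx
  have htI := Ioo_subset_Icc_self ht
  have hn : Icc (0 : ℝ) 1 ∈ nhds x := Icc_mem_nhds hx.1 hx.2
  have hflux : HasDerivAt (fun y => sigmat (usx y t)) (sigmat' (usx x t) * usxx x t) x :=
    (hst (usx x t)).comp x ((hstar.reg.dxx (x, t) ⟨hxI, htI⟩).hasDerivAt hn)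
  have hlow :=
    (hasDerivWithinAt_lowerOrder hcoeff hstar.reg.cont hstar.reg.dx hxI htI).hasDerivAt hn
  refine ((hflux.add hlow).congr_deriv ?_).congr_of_eventuallyEq (.of_forall fun y => ?_)
  · linear_combination -hstar.pde (x, t) ⟨hx, ht⟩
  · simp only [VStarT, Pi.add_apply]; ring

theorem VStarT_eq_add_integral (hcoeff : CoeffHyp α T b bx c f d)
    (hst : ∀ s, HasDerivAt sigmat (sigmat' s) s)
    (hstar : StarSol α T sigmat sigmat' b bx c f u0 us usx usxx ust)
    (hx : x ∈ Icc (0 : ℝ) 1) (ht : t ∈ Ioo 0 T) :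
    VStarT sigmat b bx c f us usx x t
      = VStarT sigmat b bx c f us usx 0 t + ∫ y in (0 : ℝ)..x, ust y t := by
  have htI := Ioo_subset_Icc_self ht
  rw [intervalIntegral.integral_eq_sub_of_hasDerivAt_of_le hx.1
    ((continuousOn_slice_fst (g := VStarT sigmat b bx c f us usx)
      (continuousOn_VStarT hcoeff hst hstar) htI).mono (Icc_subset_Icc_right hx.2))
    (fun y hy => hasDerivAt_VStarT hcoeff hst hstar ⟨hy.1, hy.2.trans_le hx.2⟩ ht)
    (intervalIntegrable_of_continuousOn_Icc (continuousOn_slice_fst hstar.reg.cont_t htI) hx)]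
  ring

theorem hasDerivWithinAt_VStar_snd (hcoeff : CoeffHyp α T b bx c f d)
    (hst : ∀ s, HasDerivAt sigmat (sigmat' s) s)
    (hstar : StarSol α T sigmat sigmat' b bx c f u0 us usx usxx ust)
    (hx : x ∈ Icc (0 : ℝ) 1) (ht : t ∈ Icc 0 T) :
    HasDerivWithinAt (fun τ => VStar sigmat b bx c f u0 us usx x τ)
      (VStarT sigmat b bx c f us usx x t) (Icc 0 T) t :=
  (hasDerivWithinAt_primitive (continuousOn_slice_snd (g := VStarT sigmat b bx c f us usx)
    (continuousOn_VStarT hcoeff hst hstar) hx) ht).add_const _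

theorem integral_integral_ust (hstar : StarSol α T sigmat sigmat' b bx c f u0 us usx usxx ust)
    (hx : x ∈ Icc (0 : ℝ) 1) (ht : t ∈ Icc 0 T) :
    ∫ τ in (0 : ℝ)..t, ∫ y in (0 : ℝ)..x, ust y τ
      = (∫ y in (0 : ℝ)..x, us y t) - ∫ y in (0 : ℝ)..x, u0 y := by
  rw [integral_eq_sub_of_hasDerivWithinAt_Icc (fun s hs => hasDerivWithinAt_integral_fst
      hstar.reg.cont hstar.reg.cont_t hstar.reg.dt hx hs)
    (continuousOn_slice_snd (g := fun x s => ∫ y in (0 : ℝ)..x, ust y s)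
      (continuousOn_primitive_fst hstar.reg.cont_t) hx) ht]
  exact congrArg _ (integral_congr_Icc hx hstar.ic)

theorem VStar_eq_add_integral (hcoeff : CoeffHyp α T b bx c f d)
    (hst : ∀ s, HasDerivAt sigmat (sigmat' s) s)
    (hstar : StarSol α T sigmat sigmat' b bx c f u0 us usx usxx ust)
    (hx : x ∈ Icc (0 : ℝ) 1) (ht : t ∈ Ioo 0 T) :
    VStar sigmat b bx c f u0 us usx x t
      = VStar sigmat b bx c f u0 us usx 0 t + ∫ y in (0 : ℝ)..x, us y t := by
  have htI := Ioo_subset_Icc_self ht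
  have hint : ∫ τ in (0 : ℝ)..t, VStarT sigmat b bx c f us usx x τ
      = (∫ τ in (0 : ℝ)..t, VStarT sigmat b bx c f us usx 0 τ)
        + ∫ τ in (0 : ℝ)..t, ∫ y in (0 : ℝ)..x, ust y τ := by
    rw [← intervalIntegral.integral_add]
    · refine intervalIntegral.integral_congr_ae (.of_forall fun τ hτ => ?_)
      rw [uIoc_of_le ht.1.le] at hτ
      exact VStarT_eq_add_integral hcoeff hst hstar hx ⟨hτ.1, hτ.2.trans_lt ht.2⟩
    · exact intervalIntegrable_of_continuousOn_Icc
        (continuousOn_slice_snd (g := VStarT sigmat b bx c f us usx)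
          (continuousOn_VStarT hcoeff hst hstar) (left_mem_Icc.2 zero_le_one)) htI
    · exact intervalIntegrable_of_continuousOn_Icc
        (continuousOn_slice_snd (g := fun x s => ∫ y in (0 : ℝ)..x, ust y s)
          (continuousOn_primitive_fst hstar.reg.cont_t) hx) htI
  have hdef : ∀ z, VStar sigmat b bx c f u0 us usx z t
    = (∫ τ in (0 : ℝ)..t, VStarT sigmat b bx c f us usx z τ) + ∫ y in (0 : ℝ)..z, u0 y :=
    fun _ => rfl
  rw [hdef, hdef, hint, integral_integral_ust hstar hx htI, intervalIntegral.integral_same]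
  ring

theorem hasDerivWithinAt_VStar_fst (hcoeff : CoeffHyp α T b bx c f d)
    (hst : ∀ s, HasDerivAt sigmat (sigmat' s) s)
    (hstar : StarSol α T sigmat sigmat' b bx c f u0 us usx usxx ust)
    (hx : x ∈ Icc (0 : ℝ) 1) (ht : t ∈ Ioo 0 T) :
    HasDerivWithinAt (fun y => VStar sigmat b bx c f u0 us usx y t) (us x t) (Icc 0 1) x :=
  ((hasDerivWithinAt_primitive (continuousOn_slice_fst hstar.reg.cont
    (Ioo_subset_Icc_self ht)) hx).const_add _).congr
    (fun _ hy => VStar_eq_add_integral hcoeff hst hstar hy ht)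
    (VStar_eq_add_integral hcoeff hst hstar hx ht)

end StarSolution

/-- The pointwise information on an admissible pair `W = (u, v)` that the argument uses: `W` is a
classical subsolution of the differential inclusion which modifies `w*` inside `E` only, and whose
flux `v_t - b u - P_u - F` vanishes on the lateral boundary. -/
structure IsStarModification (T r1 r2 ε : ℝ) (sm sp sigmat : ℝ → ℝ) (b bx c f : ℝ → ℝ → ℝ)
    (u0 : ℝ → ℝ) (us usx ust : ℝ → ℝ → ℝ) (E : Set (ℝ × ℝ)) (W : PairData) : Prop where
  c21 : C21 T W.u W.ux W.uxx W.ut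
  c31 : C31 T W.v W.vx W.vxx W.vxxx W.vt
  u_eq : ∀ p ∈ OmegaT T \ E, W.u p.1 p.2 = us p.1 p.2
  ux_eq : ∀ p ∈ OmegaT T \ E, W.ux p.1 p.2 = usx p.1 p.2
  GVal_eq : ∀ p ∈ OmegaT T \ E, GVal b c bx f W.u W.vt p.1 p.2 = sigmat (usx p.1 p.2)
  mem_Uprime : ∀ p ∈ E, (W.ux p.1 p.2, GVal b c bx f W.u W.vt p.1 p.2) ∈ Uprime sm sp r1 r2
  vx_eq : ∀ p ∈ OmegaT T, W.vx p.1 p.2 = W.u p.1 p.2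
  GVal_left : ∀ t ∈ Icc 0 T, GVal b c bx f W.u W.vt 0 t = 0
  GVal_right : ∀ t ∈ Icc 0 T, GVal b c bx f W.u W.vt 1 t = 0
  u_init : ∀ x ∈ Icc (0 : ℝ) 1, W.u x 0 = u0 x
  abs_u_sub_le : ∀ p ∈ OmegaT T, |W.u p.1 p.2 - us p.1 p.2| ≤ ε / 2
  abs_ut_sub_le : ∀ p ∈ OmegaT T, |W.ut p.1 p.2 - ust p.1 p.2| ≤ ε / 2

section Admissible

variable {α T r1 r2 mstar ε GammaStar : ℝ} {sigma sm sp sigmat sigmat' u0 d : ℝ → ℝ}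
  {b bx c f us usx usxx ust : ℝ → ℝ → ℝ} {E O : Set (ℝ × ℝ)} {W : PairData}

theorem GVal_eq_off_closure (hcoeff : CoeffHyp α T b bx c f d)
    (hst : ∀ s, HasDerivAt sigmat (sigmat' s) s)
    (hstar : StarSol α T sigmat sigmat' b bx c f u0 us usx usxx ust)
    (hv : C31 T W.v W.vx W.vxx W.vxxx W.vt)
    (heq : ∀ p ∈ OmegaT T \ closure O,
      W.u p.1 p.2 = us p.1 p.2 ∧ W.v p.1 p.2 = VStar sigmat b bx c f u0 us usx p.1 p.2)
    (hPot : ∀ p ∈ OmegaT T \ closure O, Pot c bx W.u p.1 p.2 = Pot c bx us p.1 p.2) :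
    EqOn (fun p => GVal b c bx f W.u W.vt p.1 p.2) (fun p => sigmat (usx p.1 p.2))
      (OmegaT T \ closure O) := by
  intro p hp
  have hpC := OmegaT_subset_ClOmegaT T hp.1
  have hvt : W.vt p.1 p.2 = VStarT sigmat b bx c f us usx p.1 p.2 :=
    eq_of_hasDerivAt_snd_of_eqOn ((isOpen_OmegaT T).sdiff isClosed_closure) hp
      (φ := fun q => W.v q.1 q.2) (fun q hq => (heq q hq).2)
      ((hv.dt p hpC).hasDerivAt (Icc_mem_nhds_snd hp.1))
      ((hasDerivWithinAt_VStar_snd hcoeff hst hstar hpC.1 hpC.2).hasDerivAt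
        (Icc_mem_nhds_snd hp.1))
  simp only [GVal, hvt, (heq p hp).1, hPot p hp, VStarT]
  ring

theorem partialX_eq_off_closure (hcoeff : CoeffHyp α T b bx c f d)
    (hst : ∀ s, HasDerivAt sigmat (sigmat' s) s)
    (hstar : StarSol α T sigmat sigmat' b bx c f u0 us usx usxx ust)
    (hu : C21 T W.u W.ux W.uxx W.ut) (hv : C31 T W.v W.vx W.vxx W.vxxx W.vt)
    (heq : ∀ p ∈ OmegaT T \ closure O,
      W.u p.1 p.2 = us p.1 p.2 ∧ W.v p.1 p.2 = VStar sigmat b bx c f u0 us usx p.1 p.2) :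
    ∀ p ∈ OmegaT T \ closure O, W.ux p.1 p.2 = usx p.1 p.2 ∧ W.vx p.1 p.2 = us p.1 p.2 := by
  intro p hp
  have hpC := OmegaT_subset_ClOmegaT T hp.1
  have hn := Icc_mem_nhds_fst hp.1
  have hopen : IsOpen (OmegaT T \ closure O) := (isOpen_OmegaT T).sdiff isClosed_closure
  exact ⟨eq_of_hasDerivAt_fst_of_eqOn hopen hp (φ := fun q => W.u q.1 q.2)
      (fun q hq => (heq q hq).1) ((hu.dx p hpC).hasDerivAt hn)
      ((hstar.reg.dx p hpC).hasDerivAt hn),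
    eq_of_hasDerivAt_fst_of_eqOn hopen hp (φ := fun q => W.v q.1 q.2)
      (fun q hq => (heq q hq).2) ((hv.dx p hpC).hasDerivAt hn)
      ((hasDerivWithinAt_VStar_fst hcoeff hst hstar hpC.1 hp.1.2).hasDerivAt hn)⟩

theorem InAdmissible.isStarModification (hT : 0 < T) (hcoeff : CoeffHyp α T b bx c f d)
    (hst : ∀ s, HasDerivAt sigmat (sigmat' s) s) (hs0 : sigmat 0 = 0)
    (hstar : StarSol α T sigmat sigmat' b bx c f u0 us usx usxx ust) (hE : E ⊆ OmegaT T)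
    (hW : InAdmissible T r1 r2 mstar ε GammaStar sigma sm sp b bx c f
      us ust (VStar sigmat b bx c f u0 us usx) E W) :
    IsStarModification T r1 r2 ε sm sp sigmat b bx c f u0 us usx ust E W := by
  obtain ⟨hu, hv, ⟨O, -, hOE, -, -, heq, hPot⟩, hes, hest, hgrad, -⟩ := hW
  have hoff : ∀ p ∈ OmegaT T \ E, p ∈ OmegaT T \ closure O := fun p hp =>
    ⟨hp.1, fun h => hp.2 (hOE h)⟩
  have hbd : ∀ p ∈ ClOmegaT T \ OmegaT T, p ∈ ClOmegaT T \ closure O := fun p hp =>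
    ⟨hp.1, fun h => hp.2 (hE (hOE h))⟩
  have hx := partialX_eq_off_closure hcoeff hst hstar hu hv heq
  have hG := GVal_eq_off_closure hcoeff hst hstar hv heq hPot
  have hsc : Continuous sigmat := continuous_iff_continuousAt.2 fun s => (hst s).continuousAt
  have hGcl := eqOn_ClOmegaT_diff_closure hT (continuousOn_GVal hcoeff hu.cont hv.cont_t)
    (hsc.comp_continuousOn hstar.reg.cont_x) hG
  have hucl := eqOn_ClOmegaT_diff_closure hT hu.cont hstar.reg.cont fun p hp => (heq p hp).1
  refine ⟨hu, hv, fun p hp => (heq p (hoff p hp)).1, fun p hp => (hx p (hoff p hp)).1,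
    fun p hp => hG (hoff p hp), fun p hp => (hgrad p hp).2.2, fun p hp => ?_, fun t ht => ?_,
    fun t ht => ?_, fun x hx => ?_,
    fun p hp => (abs_le_EssSupAbs (hu.cont.sub hstar.reg.cont) p hp).trans hes.le,
    fun p hp => (abs_le_EssSupAbs (hu.cont_t.sub hstar.reg.cont_t) p hp).trans hest.le⟩
  · by_cases hpE : p ∈ E
    · exact (hgrad p hpE).1
    · have hp' := hoff p ⟨hp, hpE⟩
      exact (hx p hp').2.trans (heq p hp').1.symm
  · refine (hGcl (hbd (0, t) ⟨⟨left_mem_Icc.2 zero_le_one, ht⟩, fun h => h.1.1.false⟩)).trans ?_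
    exact (congrArg sigmat (hstar.bc t ht).1).trans hs0
  · refine (hGcl (hbd (1, t) ⟨⟨right_mem_Icc.2 zero_le_one, ht⟩, fun h => h.1.2.false⟩)).trans ?_
    exact (congrArg sigmat (hstar.bc t ht).2).trans hs0
  · exact (hucl (hbd (x, 0) ⟨⟨hx, left_mem_Icc.2 hT.le⟩, fun h => h.2.1.false⟩)).trans
      (hstar.ic x hx)

end Admissible

section WeakForm

variable {α T r1 r2 ε x t s : ℝ} {sm sp sigmat u0 d : ℝ → ℝ}
  {b bx c f us usx ust : ℝ → ℝ → ℝ} {E : Set (ℝ × ℝ)} {W : PairData} {φ : ℝ × ℝ → ℝ}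

theorem integrableOn_OmegaT_of_continuousOn_ClOmegaT {g : ℝ × ℝ → ℝ}
    (hg : ContinuousOn g (ClOmegaT T)) (hs : s ≤ T) : IntegrableOn g (OmegaT s) :=
  (hg.integrableOn_compact (isCompact_ClOmegaT T)).mono_set
    ((OmegaT_subset_ClOmegaT s).trans (prod_mono subset_rfl (Icc_subset_Icc_right hs)))

theorem setIntegral_OmegaT_eq_integral_snd {g : ℝ × ℝ → ℝ} (hg : IntegrableOn g (OmegaT s)) :
    ∫ p in OmegaT s, g p = ∫ t in Ioo 0 s, ∫ x in Ioo (0 : ℝ) 1, g (x, t) := by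
  rw [IntegrableOn, OmegaT, Measure.volume_eq_prod, ← Measure.prod_restrict] at hg
  rw [OmegaT, Measure.volume_eq_prod, ← Measure.prod_restrict]
  exact integral_prod_symm g hg

/-- The integrand `u φ_t - q φ_x + (b u_x + c u + f) φ` of the weak formulation, for a flux `q`
and a test function `φ`. -/
def weakDensity (b c f u ux q : ℝ → ℝ → ℝ) (φ : ℝ × ℝ → ℝ) (p : ℝ × ℝ) : ℝ :=
  u p.1 p.2 * partialT φ p - q p.1 p.2 * partialX φ p
    + (b p.1 p.2 * ux p.1 p.2 + c p.1 p.2 * u p.1 p.2 + f p.1 p.2) * φ p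

theorem continuousOn_weakDensity {u ux q : ℝ → ℝ → ℝ} (hcoeff : CoeffHyp α T b bx c f d)
    (hu : ContinuousOn (fun p : ℝ × ℝ => u p.1 p.2) (ClOmegaT T))
    (hux : ContinuousOn (fun p : ℝ × ℝ => ux p.1 p.2) (ClOmegaT T))
    (hq : ContinuousOn (fun p : ℝ × ℝ => q p.1 p.2) (ClOmegaT T))
    (hφ : ContDiff ℝ (⊤ : ℕ∞) φ) : ContinuousOn (weakDensity b c f u ux q φ) (ClOmegaT T) :=
  ((hu.mul (contDiff_partialT hφ).continuous.continuousOn).sub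
    (hq.mul (contDiff_partialX hφ).continuous.continuousOn)).add
    ((((hcoeff.b_cont.mul hux).add (hcoeff.c_cont.mul hu)).add hcoeff.f_cont).mul
      hφ.continuous.continuousOn)

namespace IsStarModification

theorem continuousOn_GVal
    (hW : IsStarModification T r1 r2 ε sm sp sigmat b bx c f u0 us usx ust E W)
    (hcoeff : CoeffHyp α T b bx c f d) :
    ContinuousOn (fun p : ℝ × ℝ => GVal b c bx f W.u W.vt p.1 p.2) (ClOmegaT T) :=
  _root_.continuousOn_GVal hcoeff hW.c21.cont hW.c31.cont_t

theorem v_eq_add_integral (hT : 0 < T)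
    (hW : IsStarModification T r1 r2 ε sm sp sigmat b bx c f u0 us usx ust E W)
    (hx : x ∈ Icc (0 : ℝ) 1) (ht : t ∈ Icc 0 T) :
    W.v x t = W.v 0 t + ∫ y in (0 : ℝ)..x, W.u y t := by
  have hvx : EqOn (fun p => W.vx p.1 p.2) (fun p => W.u p.1 p.2) (ClOmegaT T) := by
    simpa using eqOn_ClOmegaT_diff_closure hT (O := ∅) hW.c31.cont_x hW.c21.cont
      fun p hp => hW.vx_eq p hp.1
  rw [integral_eq_sub_of_hasDerivWithinAt_Icc (g := fun y => W.v y t)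
    (fun y hy => (hW.c31.dx (y, t) ⟨hy, ht⟩).congr_deriv (hvx ⟨hy, ht⟩))
    (continuousOn_slice_fst hW.c21.cont ht) hx]
  ring

theorem vt_eq_add_integral (hT : 0 < T)
    (hW : IsStarModification T r1 r2 ε sm sp sigmat b bx c f u0 us usx ust E W)
    (hx : x ∈ Icc (0 : ℝ) 1) (ht : t ∈ Icc 0 T) :
    W.vt x t = W.vt 0 t + ∫ y in (0 : ℝ)..x, W.ut y t :=
  (uniqueDiffOn_Icc hT t ht).eq_deriv _ (hW.c31.dt (x, t) ⟨hx, ht⟩)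
    (((hW.c31.dt (0, t) ⟨left_mem_Icc.2 zero_le_one, ht⟩).add
      (hasDerivWithinAt_integral_fst hW.c21.cont hW.c21.cont_t hW.c21.dt hx ht)).congr
      (fun _ hτ => hW.v_eq_add_integral hT hx hτ) (hW.v_eq_add_integral hT hx ht))

theorem hasDerivWithinAt_GVal (hT : 0 < T) (hcoeff : CoeffHyp α T b bx c f d)
    (hW : IsStarModification T r1 r2 ε sm sp sigmat b bx c f u0 us usx ust E W)
    (hx : x ∈ Icc (0 : ℝ) 1) (ht : t ∈ Icc 0 T) :
    HasDerivWithinAt (fun y => GVal b c bx f W.u W.vt y t)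
      (W.ut x t - (b x t * W.ux x t + c x t * W.u x t + f x t)) (Icc 0 1) x := by
  have hvt : HasDerivWithinAt (fun y => W.vt y t) (W.ut x t) (Icc 0 1) x :=
    ((hasDerivWithinAt_primitive (continuousOn_slice_fst hW.c21.cont_t ht) hx).const_add _).congr
      (fun _ hy => hW.vt_eq_add_integral hT hy ht) (hW.vt_eq_add_integral hT hx ht)
  refine (hvt.sub (hasDerivWithinAt_lowerOrder hcoeff hW.c21.cont hW.c21.dx hx ht)).congr
    (fun y _ => ?_) ?_ <;> simp only [GVal, Pi.sub_apply] <;> ring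

theorem integral_weakDensity_slice (hT : 0 < T) (hcoeff : CoeffHyp α T b bx c f d)
    (hW : IsStarModification T r1 r2 ε sm sp sigmat b bx c f u0 us usx ust E W)
    (hφ : ContDiff ℝ (⊤ : ℕ∞) φ) (ht : t ∈ Icc 0 T) :
    ∫ x in (0 : ℝ)..1, weakDensity b c f W.u W.ux (GVal b c bx f W.u W.vt) φ (x, t)
      = ∫ x in (0 : ℝ)..1, (W.ut x t * φ (x, t) + W.u x t * partialT φ (x, t)) := by
  have h1 : (1 : ℝ) ∈ Icc (0 : ℝ) 1 := right_mem_Icc.2 zero_le_one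
  have hslice {g : ℝ × ℝ → ℝ} (hg : ContinuousOn g (ClOmegaT T)) :
      ContinuousOn (fun x => g (x, t)) (Icc 0 1) :=
    continuousOn_slice_fst (g := fun x t => g (x, t)) hg ht
  have hwd := hslice (continuousOn_weakDensity hcoeff hW.c21.cont hW.c21.cont_x
    (hW.continuousOn_GVal hcoeff) hφ)
  have hut : ContinuousOn (fun x => W.ut x t * φ (x, t) + W.u x t * partialT φ (x, t)) (Icc 0 1) :=
    hslice ((hW.c21.cont_t.mul hφ.continuous.continuousOn).add
      (hW.c21.cont.mul (contDiff_partialT hφ).continuous.continuousOn))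
  have hflux := integral_eq_sub_of_hasDerivWithinAt_Icc
    (g := fun x => GVal b c bx f W.u W.vt x t * φ (x, t))
    (g' := fun x => (W.ut x t * φ (x, t) + W.u x t * partialT φ (x, t))
      - weakDensity b c f W.u W.ux (GVal b c bx f W.u W.vt) φ (x, t))
    (fun x hx => ((hW.hasDerivWithinAt_GVal hT hcoeff hx ht).mul
      (hasDerivAt_partialX (p := (x, t))
        (hφ.differentiable (by simp) _)).hasDerivWithinAt).congr_deriv
          (by simp only [weakDensity]; ring))
    (hut.sub hwd) h1
  rw [intervalIntegral.integral_sub (intervalIntegrable_of_continuousOn_Icc hut h1)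
    (intervalIntegrable_of_continuousOn_Icc hwd h1), hW.GVal_left t ht, hW.GVal_right t ht] at hflux
  linarith

theorem setIntegral_weakDensity (hT : 0 < T) (hcoeff : CoeffHyp α T b bx c f d)
    (hW : IsStarModification T r1 r2 ε sm sp sigmat b bx c f u0 us usx ust E W)
    (hφ : ContDiff ℝ (⊤ : ℕ∞) φ) (hs : s ∈ Icc 0 T) :
    ∫ p in OmegaT s, weakDensity b c f W.u W.ux (GVal b c bx f W.u W.vt) φ p
      = ∫ x in Ioo (0 : ℝ) 1, (W.u x s * φ (x, s) - u0 x * φ (x, 0)) := by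
  have hut : ContinuousOn (fun p : ℝ × ℝ => W.ut p.1 p.2 * φ (p.1, p.2)
      + W.u p.1 p.2 * partialT φ (p.1, p.2)) (ClOmegaT T) :=
    (hW.c21.cont_t.mul hφ.continuous.continuousOn).add
      (hW.c21.cont.mul (contDiff_partialT hφ).continuous.continuousOn)
  rw [setIntegral_OmegaT_eq_integral_snd (integrableOn_OmegaT_of_continuousOn_ClOmegaT
    (continuousOn_weakDensity hcoeff hW.c21.cont hW.c21.cont_x
      (hW.continuousOn_GVal hcoeff) hφ) hs.2)]
  simp only [← integral_Ioc_eq_integral_Ioo, ← intervalIntegral.integral_of_le hs.1,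
    ← intervalIntegral.integral_of_le (zero_le_one (α := ℝ))]
  rw [integral_congr_Icc hs fun t ht => hW.integral_weakDensity_slice hT hcoeff hφ ht,
    ← intervalIntegral_intervalIntegral_swap hut (right_mem_Icc.2 zero_le_one) hs]
  refine integral_congr_Icc (right_mem_Icc.2 zero_le_one) fun x hx => ?_
  rw [integral_eq_sub_of_hasDerivWithinAt_Icc (g := fun t => W.u x t * φ (x, t))
    (fun t ht => (hW.c21.dt (x, t) ⟨hx, ht⟩).mul (hasDerivAt_partialT (p := (x, t))
      (hφ.differentiable (by simp) _)).hasDerivWithinAt)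
    (continuousOn_slice_snd (g := fun x t => W.ut x t * φ (x, t) + W.u x t * partialT φ (x, t))
      hut hx) hs, hW.u_init x hx]

end IsStarModification

end WeakForm

section RiemannLebesgue

open Filter

theorem tendsto_smul_fst_cocompact :
    Tendsto (fun k : ℝ => (k / (2 * Real.pi)) • ContinuousLinearMap.fst ℝ ℝ ℝ) atTop
      (cocompact (StrongDual ℝ (ℝ × ℝ))) := by
  have hfst : 0 < ‖ContinuousLinearMap.fst ℝ ℝ ℝ‖ :=
    norm_pos_iff.2 fun h => one_ne_zero (DFunLike.congr_fun h ((1 : ℝ), (0 : ℝ)))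
  rw [← Metric.cobounded_eq_cocompact, ← tendsto_norm_atTop_iff_cobounded]
  simp only [norm_smul, Real.norm_eq_abs]
  exact (tendsto_abs_atTop_atTop.comp (tendsto_id.atTop_div_const (by positivity))).atTop_mul_const
    hfst

theorem tendsto_integral_mul_cos_fst {g : ℝ × ℝ → ℝ} (hg : Integrable g) :
    Tendsto (fun k : ℝ => ∫ p, g p * Real.cos (k * p.1)) atTop (nhds 0) := by
  have hRL := (Complex.continuous_re.tendsto 0).comp
    ((tendsto_integral_exp_smul_cocompact (fun p => (g p : ℂ)) volume).comp
      tendsto_smul_fst_cocompact)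
  refine hRL.congr fun k => ?_
  set L : StrongDual ℝ (ℝ × ℝ) := (k / (2 * Real.pi)) • ContinuousLinearMap.fst ℝ ℝ ℝ with hL
  have hint : Integrable fun p => Real.fourierChar (-(L p)) • (g p : ℂ) := by
    refine hg.norm.mono' ?_ (.of_forall fun p => by simp)
    exact (Real.continuous_fourierChar.comp (by fun_prop)).aestronglyMeasurable.smul
      (hg.ofReal (𝕜 := ℂ)).aestronglyMeasurable
  have hre := integral_re hint
  simp only [RCLike.re_to_complex] at hre
  simp only [Function.comp_apply, ← hL, ← hre]
  congr 1 with p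
  have harg : 2 * Real.pi * -(L p) = -(k * p.1) := by simp [hL]; field_simp
  rw [Circle.smul_def, Real.fourierChar_apply, harg, smul_eq_mul, Complex.re_mul_ofReal,
    Complex.exp_ofReal_mul_I_re, Real.cos_neg, mul_comm]

theorem tendsto_setIntegral_mul_cos_fst {g : ℝ × ℝ → ℝ} {s : Set (ℝ × ℝ)} (hs : MeasurableSet s)
    (hg : IntegrableOn g s) :
    Tendsto (fun k : ℝ => ∫ p in s, g p * Real.cos (k * p.1)) atTop (nhds 0) := by
  simp_rw [← integral_indicator hs, indicator_mul_left]
  exact tendsto_integral_mul_cos_fst ((integrable_indicator_iff hs).2 hg)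

end RiemannLebesgue

section CutOff

variable {X : Type*} {A K : Set X}

theorem exists_isOpen_superset_null_frontier [MetricSpace X] [ProperSpace X] [MeasurableSpace X]
    [OpensMeasurableSpace X] (μ : Measure X) [SFinite μ] (hK : IsCompact K) (hA : IsOpen A)
    (hKA : K ⊆ A) :
    ∃ V, IsOpen V ∧ K ⊆ V ∧ closure V ⊆ A ∧ IsCompact (closure V) ∧ μ (frontier V) = 0 := by
  obtain ⟨δ, hδ, hδA⟩ := hK.exists_cthickening_subset_open hA hKA
  obtain ⟨r, ⟨hr, hrδ⟩, hnull⟩ := exists_null_frontier_thickening μ K hδ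
  have hcl := Metric.closure_thickening_subset_cthickening r K
  exact ⟨Metric.thickening r K, Metric.isOpen_thickening, Metric.self_subset_thickening hr K,
    hcl.trans ((Metric.cthickening_mono hrδ.le K).trans hδA),
    hK.cthickening.of_isClosed_subset isClosed_closure hcl, hnull⟩

theorem exists_contDiff_plateau [NormedAddCommGroup X] [NormedSpace ℝ X] [FiniteDimensional ℝ X]
    (hK : IsCompact K) (hA : IsOpen A) (hKA : K ⊆ A) {h : ℝ} (hh : 0 ≤ h) :
    ∃ χ : X → ℝ, ContDiff ℝ (⊤ : ℕ∞) χ ∧ HasCompactSupport χ ∧ tsupport χ ⊆ A ∧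
      (∀ p, χ p ∈ Icc 0 h) ∧ EqOn χ (fun _ => h) K := by
  obtain ⟨s, hs, hKs, hsA, hsc⟩ := exists_open_between_and_isCompact_closure hK hA hKA
  obtain ⟨g, hg, hg01, hsupp, hone⟩ := exists_contMDiff_support_eq_eq_one_iff
    (modelWithCornersSelf ℝ X) (n := (⊤ : ℕ∞)) hs hK.isClosed hKs
  have hts : tsupport (fun p => h * g p) ⊆ closure s := by
    rw [← hsupp]; exact tsupport_mul_subset_right
  refine ⟨fun p => h * g p, contDiff_const.mul hg.contDiff,
    hsc.of_isClosed_subset (isClosed_tsupport _) hts, hts.trans hsA, fun p => ?_, fun p hp => ?_⟩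
  · have hgp := hg01 ⟨p, rfl⟩
    exact ⟨mul_nonneg hh hgp.1, mul_le_of_le_one_right hh hgp.2⟩
  · simp only [(hone p).1 hp, mul_one]

end CutOff

section UniformConvergence

open Filter

variable {ι X : Type*} {l : Filter ι}

theorem tendstoUniformly_zero_mul {c : ι → ℝ} {A : ι → X → ℝ} {M : ℝ}
    (hc : Tendsto c l (nhds 0)) (hA : ∀ i p, |A i p| ≤ M) :
    TendstoUniformly (fun i p => c i * A i p) 0 l := by
  rw [Metric.tendstoUniformly_iff]
  intro ε hε
  have hcM : Tendsto (fun i => |c i| * M) l (nhds 0) := by simpa using hc.abs.mul_const M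
  filter_upwards [hcM.eventually_lt_const hε] with i hi p
  rw [dist_comm, Real.dist_eq, Pi.zero_apply, sub_zero, abs_mul]
  exact (mul_le_mul_of_nonneg_left (hA i p) (abs_nonneg _)).trans_lt hi

theorem eventually_mapsTo_of_tendstoUniformlyOn {Y : Type*} [TopologicalSpace X]
    [PseudoMetricSpace Y] {F : ι → X → Y} {f : X → Y} {S : Set X} {U : Set Y}
    (h : TendstoUniformlyOn F f l S) (hS : IsCompact S) (hf : ContinuousOn f S) (hU : IsOpen U)
    (hfU : MapsTo f S U) : ∀ᶠ i in l, MapsTo (F i) S U := by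
  obtain ⟨δ, hδ, hδU⟩ :=
    (hS.image_of_continuousOn hf).exists_thickening_subset_open hU hfU.image_subset
  filter_upwards [Metric.tendstoUniformlyOn_iff.1 h δ hδ] with i hi p hp
  exact hδU (Metric.mem_thickening_iff.2 ⟨f p, mem_image_of_mem f hp, dist_comm (f p) _ ▸ hi p hp⟩)

theorem tendstoUniformly_of_eventuallyEq {Y : Type*} [UniformSpace Y] {F G : ι → X → Y} {f : X → Y}
    (h : TendstoUniformly F f l) (hFG : F =ᶠ[l] G) : TendstoUniformly G f l :=
  fun u hu => ((h u hu).and hFG).mono fun _ hi p => congrFun hi.2 p ▸ hi.1 p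

theorem eventually_forall_abs_lt {F : ι → X → ℝ} (h : TendstoUniformly F 0 l) {δ : ℝ}
    (hδ : 0 < δ) : ∀ᶠ i in l, ∀ p, |F i p| < δ :=
  (Metric.tendstoUniformly_iff.1 h δ hδ).mono fun i hi p => by
    simpa [Real.dist_eq] using hi p

end UniformConvergence

section Oscillation

open Filter

variable {χ φ : ℝ × ℝ → ℝ} {k : ℝ} {p : ℝ × ℝ}

theorem tsupport_partialX_subset (φ : ℝ × ℝ → ℝ) : tsupport (partialX φ) ⊆ tsupport φ :=
  tsupport_fderiv_apply_subset ℝ (1, 0)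

theorem tsupport_partialT_subset (φ : ℝ × ℝ → ℝ) : tsupport (partialT φ) ⊆ tsupport φ :=
  tsupport_fderiv_apply_subset ℝ (0, 1)

theorem exists_abs_mul_cos_le (hφ : Continuous φ) (hφc : HasCompactSupport φ) :
    ∃ M, ∀ (k : ℝ) (p : ℝ × ℝ), |φ p * Real.cos (k * p.1)| ≤ M := by
  obtain ⟨M, hM⟩ := hφ.bounded_above_of_compact_support hφc
  refine ⟨M, fun k p => ?_⟩
  rw [abs_mul]
  exact (mul_le_of_le_one_right (abs_nonneg _) (Real.abs_cos_le_one _)).trans (hM p)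

theorem exists_abs_mul_sin_le (hφ : Continuous φ) (hφc : HasCompactSupport φ) :
    ∃ M, ∀ (k : ℝ) (p : ℝ × ℝ), |φ p * Real.sin (k * p.1)| ≤ M := by
  obtain ⟨M, hM⟩ := hφ.bounded_above_of_compact_support hφc
  refine ⟨M, fun k p => ?_⟩
  rw [abs_mul]
  exact (mul_le_of_le_one_right (abs_nonneg _) (Real.abs_sin_le_one _)).trans (hM p)

/-- The high-frequency stream function `k⁻² χ(x,t) cos(k x)`; as `k → ∞` its second spatial
derivative behaves like `-χ cos(k x)`, while all the other derivatives entering the gradient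
constraint tend to zero uniformly. -/
def oscStream (χ : ℝ × ℝ → ℝ) (k : ℝ) (p : ℝ × ℝ) : ℝ := k⁻¹ ^ 2 * (χ p * Real.cos (k * p.1))

theorem contDiff_oscStream (hχ : ContDiff ℝ (⊤ : ℕ∞) χ) (k : ℝ) :
    ContDiff ℝ (⊤ : ℕ∞) (oscStream χ k) :=
  contDiff_const.mul (hχ.mul (Real.contDiff_cos.comp (contDiff_const.mul contDiff_fst)))

theorem tsupport_oscStream_subset (χ : ℝ × ℝ → ℝ) (k : ℝ) :
    tsupport (oscStream χ k) ⊆ tsupport χ :=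
  tsupport_mul_subset_right.trans tsupport_mul_subset_left

theorem hasDerivAt_mul_cos (hφ : Differentiable ℝ φ) (k : ℝ) (p : ℝ × ℝ) :
    HasDerivAt (fun y => φ (y, p.2) * Real.cos (k * y))
      (partialX φ p * Real.cos (k * p.1) - k * (φ p * Real.sin (k * p.1))) p.1 :=
  ((hasDerivAt_partialX (hφ p)).mul ((hasDerivAt_id p.1).const_mul k).cos).congr_deriv
    (by simp only [id]; ring)

theorem hasDerivAt_mul_sin (hφ : Differentiable ℝ φ) (k : ℝ) (p : ℝ × ℝ) :
    HasDerivAt (fun y => φ (y, p.2) * Real.sin (k * y))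
      (partialX φ p * Real.sin (k * p.1) + k * (φ p * Real.cos (k * p.1))) p.1 :=
  ((hasDerivAt_partialX (hφ p)).mul ((hasDerivAt_id p.1).const_mul k).sin).congr_deriv
    (by simp only [id]; ring)

theorem partialX_oscStream (hχ : ContDiff ℝ (⊤ : ℕ∞) χ) (hk : k ≠ 0) :
    partialX (oscStream χ k) = fun p => k⁻¹ ^ 2 * (partialX χ p * Real.cos (k * p.1))
      - k⁻¹ * (χ p * Real.sin (k * p.1)) := by
  funext p
  refine (hasDerivAt_partialX ((contDiff_oscStream hχ k).differentiable (by simp) p)).unique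
    (((hasDerivAt_mul_cos (hχ.differentiable (by simp)) k p).const_mul (k⁻¹ ^ 2)).congr_deriv ?_)
  field_simp

theorem partialT_oscStream (hχ : ContDiff ℝ (⊤ : ℕ∞) χ) (k : ℝ) :
    partialT (oscStream χ k) = oscStream (partialT χ) k := by
  funext p
  exact (hasDerivAt_partialT ((contDiff_oscStream hχ k).differentiable (by simp) p)).unique
    (((hasDerivAt_partialT (hχ.differentiable (by simp) p)).mul_const
      (Real.cos (k * p.1))).const_mul (k⁻¹ ^ 2))

theorem partialX_partialX_oscStream (hχ : ContDiff ℝ (⊤ : ℕ∞) χ) (hk : k ≠ 0) :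
    partialX (partialX (oscStream χ k)) = fun p =>
      k⁻¹ ^ 2 * (partialX (partialX χ) p * Real.cos (k * p.1))
        - 2 * k⁻¹ * (partialX χ p * Real.sin (k * p.1)) - χ p * Real.cos (k * p.1) := by
  have hχx := contDiff_partialX hχ
  funext p
  refine (hasDerivAt_partialX ((contDiff_partialX (contDiff_oscStream hχ k)).differentiable
    (by simp) p)).unique ?_
  rw [partialX_oscStream hχ hk]
  refine (((hasDerivAt_mul_cos (hχx.differentiable (by simp)) k p).const_mul (k⁻¹ ^ 2)).sub
    ((hasDerivAt_mul_sin (hχ.differentiable (by simp)) k p).const_mul k⁻¹)).congr_deriv ?_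
  field_simp
  ring

theorem partialT_partialX_oscStream (hχ : ContDiff ℝ (⊤ : ℕ∞) χ) (hk : k ≠ 0) :
    partialT (partialX (oscStream χ k)) = fun p =>
      k⁻¹ ^ 2 * (partialT (partialX χ) p * Real.cos (k * p.1))
        - k⁻¹ * (partialT χ p * Real.sin (k * p.1)) := by
  funext p
  refine (hasDerivAt_partialT ((contDiff_partialX (contDiff_oscStream hχ k)).differentiable
    (by simp) p)).unique ?_
  rw [partialX_oscStream hχ hk]
  exact (((hasDerivAt_partialT ((contDiff_partialX hχ).differentiable (by simp) p)).mul_const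
    (Real.cos (k * p.1))).const_mul (k⁻¹ ^ 2)).sub
    (((hasDerivAt_partialT (hχ.differentiable (by simp) p)).mul_const
      (Real.sin (k * p.1))).const_mul k⁻¹)

theorem tendsto_inv_sq_atTop : Tendsto (fun k : ℝ => k⁻¹ ^ 2) atTop (nhds 0) := by
  simpa using (tendsto_inv_atTop_zero (𝕜 := ℝ)).pow 2

theorem tendstoUniformly_oscStream (hχ : Continuous χ) (hχc : HasCompactSupport χ) :
    TendstoUniformly (oscStream χ) 0 atTop :=
  let ⟨_, hM⟩ := exists_abs_mul_cos_le hχ hχc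
  tendstoUniformly_zero_mul tendsto_inv_sq_atTop hM

theorem tendstoUniformly_inv_sq_mul_cos_sub {ψ : ℝ × ℝ → ℝ} (hφ : Continuous φ)
    (hφc : HasCompactSupport φ) (hψ : Continuous ψ) (hψc : HasCompactSupport ψ) (a : ℝ) :
    TendstoUniformly (fun k p => k⁻¹ ^ 2 * (φ p * Real.cos (k * p.1))
      - a * k⁻¹ * (ψ p * Real.sin (k * p.1))) 0 atTop := by
  obtain ⟨_, hM⟩ := exists_abs_mul_sin_le hψ hψc
  have ha : Tendsto (fun k : ℝ => a * k⁻¹) atTop (nhds 0) := by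
    simpa using tendsto_inv_atTop_zero.const_mul a
  have h := (tendstoUniformly_oscStream hφ hφc).sub (tendstoUniformly_zero_mul ha hM)
  rwa [sub_zero] at h

theorem tendstoUniformly_partialX_oscStream (hχ : ContDiff ℝ (⊤ : ℕ∞) χ)
    (hχc : HasCompactSupport χ) :
    TendstoUniformly (fun k => partialX (oscStream χ k)) 0 atTop := by
  have h := tendstoUniformly_inv_sq_mul_cos_sub (contDiff_partialX hχ).continuous
    (hχc.fderiv_apply ℝ (1, 0)) hχ.continuous hχc 1
  refine tendstoUniformly_of_eventuallyEq h ((eventually_ne_atTop 0).mono fun k hk => ?_)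
  simp only [partialX_oscStream hχ hk, one_mul]

theorem tendstoUniformly_partialT_oscStream (hχ : ContDiff ℝ (⊤ : ℕ∞) χ)
    (hχc : HasCompactSupport χ) :
    TendstoUniformly (fun k => partialT (oscStream χ k)) 0 atTop := by
  simp_rw [partialT_oscStream hχ]
  exact tendstoUniformly_oscStream (contDiff_partialT hχ).continuous
    (hχc.fderiv_apply ℝ (0, 1))

theorem tendstoUniformly_partialT_partialX_oscStream (hχ : ContDiff ℝ (⊤ : ℕ∞) χ)
    (hχc : HasCompactSupport χ) :
    TendstoUniformly (fun k => partialT (partialX (oscStream χ k))) 0 atTop := by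
  have h := tendstoUniformly_inv_sq_mul_cos_sub
    (contDiff_partialT (contDiff_partialX hχ)).continuous
    ((hχc.fderiv_apply ℝ (1, 0)).fderiv_apply ℝ (0, 1)) (contDiff_partialT hχ).continuous
    (hχc.fderiv_apply ℝ (0, 1)) 1
  refine tendstoUniformly_of_eventuallyEq h ((eventually_ne_atTop 0).mono fun k hk => ?_)
  simp only [partialT_partialX_oscStream hχ hk, one_mul]

theorem tendstoUniformly_partialX_partialX_oscStream (hχ : ContDiff ℝ (⊤ : ℕ∞) χ)
    (hχc : HasCompactSupport χ) :
    TendstoUniformly (fun k p => partialX (partialX (oscStream χ k)) p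
      + χ p * Real.cos (k * p.1)) 0 atTop := by
  have h := tendstoUniformly_inv_sq_mul_cos_sub
    (contDiff_partialX (contDiff_partialX hχ)).continuous
    ((hχc.fderiv_apply ℝ (1, 0)).fderiv_apply ℝ (1, 0)) (contDiff_partialX hχ).continuous
    (hχc.fderiv_apply ℝ (1, 0)) 2
  refine tendstoUniformly_of_eventuallyEq h ((eventually_ne_atTop 0).mono fun k hk => ?_)
  funext p
  simp only [partialX_partialX_oscStream hχ hk]
  ring

end Oscillation

section AddStream

variable {α T x t : ℝ} {b bx c f u ux uxx ut v vx vxx vxxx vt : ℝ → ℝ → ℝ} {d : ℝ → ℝ}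
  {φ : ℝ × ℝ → ℝ} {W : PairData} {p : ℝ × ℝ}

theorem C21.add_contDiff (h : C21 T u ux uxx ut) (hφ : ContDiff ℝ (⊤ : ℕ∞) φ) :
    C21 T (fun x t => u x t + φ (x, t)) (fun x t => ux x t + partialX φ (x, t))
      (fun x t => uxx x t + partialX (partialX φ) (x, t))
      (fun x t => ut x t + partialT φ (x, t)) where
  dx p hp := (h.dx p hp).add
    (hasDerivAt_partialX (hφ.differentiable (by simp) p)).hasDerivWithinAt
  dxx p hp := (h.dxx p hp).add
    (hasDerivAt_partialX ((contDiff_partialX hφ).differentiable (by simp) p)).hasDerivWithinAt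
  dt p hp := (h.dt p hp).add
    (hasDerivAt_partialT (hφ.differentiable (by simp) p)).hasDerivWithinAt
  cont := h.cont.add hφ.continuous.continuousOn
  cont_x := h.cont_x.add (contDiff_partialX hφ).continuous.continuousOn
  cont_xx := h.cont_xx.add (contDiff_partialX (contDiff_partialX hφ)).continuous.continuousOn
  cont_t := h.cont_t.add (contDiff_partialT hφ).continuous.continuousOn

theorem C31.add_contDiff (h : C31 T v vx vxx vxxx vt) (hφ : ContDiff ℝ (⊤ : ℕ∞) φ) :
    C31 T (fun x t => v x t + φ (x, t)) (fun x t => vx x t + partialX φ (x, t))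
      (fun x t => vxx x t + partialX (partialX φ) (x, t))
      (fun x t => vxxx x t + partialX (partialX (partialX φ)) (x, t))
      (fun x t => vt x t + partialT φ (x, t)) :=
  have hφx := contDiff_partialX hφ
  have hφxx := contDiff_partialX hφx
  { dx := fun p hp => (h.dx p hp).add
      (hasDerivAt_partialX (hφ.differentiable (by simp) p)).hasDerivWithinAt
    dxx := fun p hp => (h.dxx p hp).add
      (hasDerivAt_partialX (hφx.differentiable (by simp) p)).hasDerivWithinAt
    dxxx := fun p hp => (h.dxxx p hp).add
      (hasDerivAt_partialX (hφxx.differentiable (by simp) p)).hasDerivWithinAt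
    dt := fun p hp => (h.dt p hp).add
      (hasDerivAt_partialT (hφ.differentiable (by simp) p)).hasDerivWithinAt
    cont := h.cont.add hφ.continuous.continuousOn
    cont_x := h.cont_x.add hφx.continuous.continuousOn
    cont_xx := h.cont_xx.add hφxx.continuous.continuousOn
    cont_xxx := h.cont_xxx.add (contDiff_partialX hφxx).continuous.continuousOn
    cont_t := h.cont_t.add (contDiff_partialT hφ).continuous.continuousOn }

/-- The pair `(u + φ_x, v + φ)` together with its derivative data: perturbing `w = (u,v)` by a
stream function `φ` preserves the relation `v_x = u`. -/
def PairData.addStream (W : PairData) (φ : ℝ × ℝ → ℝ) : PairData where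
  u x t := W.u x t + partialX φ (x, t)
  ux x t := W.ux x t + partialX (partialX φ) (x, t)
  uxx x t := W.uxx x t + partialX (partialX (partialX φ)) (x, t)
  ut x t := W.ut x t + partialT (partialX φ) (x, t)
  v x t := W.v x t + φ (x, t)
  vx x t := W.vx x t + partialX φ (x, t)
  vxx x t := W.vxx x t + partialX (partialX φ) (x, t)
  vxxx x t := W.vxxx x t + partialX (partialX (partialX φ)) (x, t)
  vt x t := W.vt x t + partialT φ (x, t)

theorem Pot_addStream (hcoeff : CoeffHyp α T b bx c f d)
    (hu : ContinuousOn (fun p : ℝ × ℝ => W.u p.1 p.2) (ClOmegaT T))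
    (hφ : ContDiff ℝ (⊤ : ℕ∞) φ) (hφs : tsupport φ ⊆ OmegaT T) (hp : p ∈ ClOmegaT T) :
    Pot c bx (W.addStream φ).u p.1 p.2 = Pot c bx W.u p.1 p.2 + d p.2 * φ p := by
  have hφ0 : φ (0, p.2) = 0 :=
    image_eq_zero_of_notMem_tsupport fun h => lt_irrefl _ (hφs h).1.1
  have hφx : Continuous fun y : ℝ => partialX φ (y, p.2) :=
    (contDiff_partialX hφ).continuous.comp (by fun_prop)
  have hint : ∫ y in (0 : ℝ)..p.1, partialX φ (y, p.2) = φ p := by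
    rw [intervalIntegral.integral_eq_sub_of_hasDerivAt (f := fun y => φ (y, p.2))
      (fun y _ => hasDerivAt_partialX (hφ.differentiable (by simp) (y, p.2)))
      (hφx.intervalIntegrable _ _), hφ0, sub_zero]
  rw [Pot_eq_mul_integral hcoeff hp.1 hp.2, Pot_eq_mul_integral hcoeff hp.1 hp.2, ← hint,
    ← mul_add]
  congr 1
  exact intervalIntegral.integral_add
    (intervalIntegrable_of_continuousOn_Icc (continuousOn_slice_fst hu hp.2) hp.1)
    (hφx.intervalIntegrable _ _)

theorem GVal_addStream (hcoeff : CoeffHyp α T b bx c f d)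
    (hu : ContinuousOn (fun p : ℝ × ℝ => W.u p.1 p.2) (ClOmegaT T))
    (hφ : ContDiff ℝ (⊤ : ℕ∞) φ) (hφs : tsupport φ ⊆ OmegaT T) (hp : p ∈ ClOmegaT T) :
    GVal b c bx f (W.addStream φ).u (W.addStream φ).vt p.1 p.2 = GVal b c bx f W.u W.vt p.1 p.2
      + (partialT φ p - b p.1 p.2 * partialX φ p - d p.2 * φ p) := by
  rw [GVal, Pot_addStream hcoeff hu hφ hφs hp]
  simp only [GVal, PairData.addStream]
  ring

theorem partialX_eq_zero_of_notMem_tsupport (hp : p ∉ tsupport φ) : partialX φ p = 0 :=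
  image_eq_zero_of_notMem_tsupport fun h => hp (tsupport_partialX_subset φ h)

theorem partialT_eq_zero_of_notMem_tsupport (hp : p ∉ tsupport φ) : partialT φ p = 0 :=
  image_eq_zero_of_notMem_tsupport fun h => hp (tsupport_partialT_subset φ h)

theorem addStream_uv_of_notMem_tsupport (hp : p ∉ tsupport φ) :
    (W.addStream φ).u p.1 p.2 = W.u p.1 p.2 ∧ (W.addStream φ).v p.1 p.2 = W.v p.1 p.2 :=
  ⟨add_eq_left.2 (partialX_eq_zero_of_notMem_tsupport hp),
    add_eq_left.2 (image_eq_zero_of_notMem_tsupport hp)⟩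

theorem addStream_ux_of_notMem_tsupport (hp : p ∉ tsupport φ) :
    (W.addStream φ).ux p.1 p.2 = W.ux p.1 p.2 :=
  add_eq_left.2 (partialX_eq_zero_of_notMem_tsupport fun h => hp (tsupport_partialX_subset φ h))

theorem addStream_ut_of_notMem_tsupport (hp : p ∉ tsupport φ) :
    (W.addStream φ).ut p.1 p.2 = W.ut p.1 p.2 :=
  add_eq_left.2 (partialT_eq_zero_of_notMem_tsupport fun h => hp (tsupport_partialX_subset φ h))

theorem Pot_addStream_of_notMem_tsupport (hcoeff : CoeffHyp α T b bx c f d)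
    (hu : ContinuousOn (fun p : ℝ × ℝ => W.u p.1 p.2) (ClOmegaT T))
    (hφ : ContDiff ℝ (⊤ : ℕ∞) φ) (hφs : tsupport φ ⊆ OmegaT T) (hp : p ∈ ClOmegaT T)
    (hpφ : p ∉ tsupport φ) : Pot c bx (W.addStream φ).u p.1 p.2 = Pot c bx W.u p.1 p.2 := by
  rw [Pot_addStream hcoeff hu hφ hφs hp, image_eq_zero_of_notMem_tsupport hpφ, mul_zero, add_zero]

theorem GVal_addStream_of_notMem_tsupport (hcoeff : CoeffHyp α T b bx c f d)
    (hu : ContinuousOn (fun p : ℝ × ℝ => W.u p.1 p.2) (ClOmegaT T))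
    (hφ : ContDiff ℝ (⊤ : ℕ∞) φ) (hφs : tsupport φ ⊆ OmegaT T) (hp : p ∈ ClOmegaT T)
    (hpφ : p ∉ tsupport φ) :
    GVal b c bx f (W.addStream φ).u (W.addStream φ).vt p.1 p.2
      = GVal b c bx f W.u W.vt p.1 p.2 := by
  rw [GVal_addStream hcoeff hu hφ hφs hp, image_eq_zero_of_notMem_tsupport hpφ,
    partialX_eq_zero_of_notMem_tsupport hpφ, partialT_eq_zero_of_notMem_tsupport hpφ]
  ring

end AddStream

/-- `sm` and `sp` are the two forward branches `s_r^-`, `s_r^+` of the inverse of the flux: they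
are continuous and nondecreasing on `[r1, r2]`, with separated ranges. -/
structure BranchPair (sm sp : ℝ → ℝ) (r1 r2 : ℝ) : Prop where
  continuousOn_left : ContinuousOn sm (Icc r1 r2)
  continuousOn_right : ContinuousOn sp (Icc r1 r2)
  monotoneOn_left : MonotoneOn sm (Icc r1 r2)
  monotoneOn_right : MonotoneOn sp (Icc r1 r2)
  left_top_lt_right_bot : sm r2 < sp r1

namespace BranchPair

variable {sm sp : ℝ → ℝ} {r1 r2 r : ℝ}

theorem left_mem_Icc (h : BranchPair sm sp r1 r2) (hr : r ∈ Icc r1 r2) :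
    sm r ∈ Icc (sm r1) (sm r2) :=
  have h12 := hr.1.trans hr.2
  ⟨h.monotoneOn_left (Set.left_mem_Icc.2 h12) hr hr.1,
    h.monotoneOn_left hr (Set.right_mem_Icc.2 h12) hr.2⟩

theorem right_mem_Icc (h : BranchPair sm sp r1 r2) (hr : r ∈ Icc r1 r2) :
    sp r ∈ Icc (sp r1) (sp r2) :=
  have h12 := hr.1.trans hr.2
  ⟨h.monotoneOn_right (Set.left_mem_Icc.2 h12) hr hr.1,
    h.monotoneOn_right hr (Set.right_mem_Icc.2 h12) hr.2⟩

theorem left_lt_right (h : BranchPair sm sp r1 r2) (hr : r ∈ Icc r1 r2) : sm r < sp r :=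
  ((h.left_mem_Icc hr).2.trans_lt h.left_top_lt_right_bot).trans_le (h.right_mem_Icc hr).1

end BranchPair

theorem snd_mem_Icc_of_mem_Uprime {sm sp : ℝ → ℝ} {r1 r2 : ℝ} {q : ℝ × ℝ}
    (hq : q ∈ Uprime sm sp r1 r2) : q.2 ∈ Icc r1 r2 := ⟨hq.1.le, hq.2.1.le⟩

section PhaseGap

variable {α T r1 r2 τ : ℝ} {sm sp d : ℝ → ℝ} {b bx c f u ux vt : ℝ → ℝ → ℝ} {E : Set (ℝ × ℝ)}
  {g : ℝ × ℝ → ℝ} {p : ℝ × ℝ}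

theorem integrableOn_of_continuousOn_of_abs_le {C : ℝ} (hE : IsOpen E) (hEΩ : E ⊆ OmegaT T)
    (hg : ContinuousOn g E) (hC : ∀ p ∈ E, |g p| ≤ C) : IntegrableOn g E :=
  .of_bound ((measure_mono hEΩ).trans_lt (volume_OmegaT_lt_top T))
    (hg.aestronglyMeasurable hE.measurableSet) C (ae_restrict_of_forall_mem hE.measurableSet hC)

theorem BranchPair.continuousOn_comp_GVal (hBr : BranchPair sm sp r1 r2)
    (hcoeff : CoeffHyp α T b bx c f d) (hE : E ⊆ OmegaT T)
    (hu : ContinuousOn (fun p : ℝ × ℝ => u p.1 p.2) (ClOmegaT T))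
    (hvt : ContinuousOn (fun p : ℝ × ℝ => vt p.1 p.2) (ClOmegaT T))
    (hU : ∀ p ∈ E, (ux p.1 p.2, GVal b c bx f u vt p.1 p.2) ∈ Uprime sm sp r1 r2) :
    ContinuousOn (fun p : ℝ × ℝ => sm (GVal b c bx f u vt p.1 p.2)) E ∧
      ContinuousOn (fun p : ℝ × ℝ => sp (GVal b c bx f u vt p.1 p.2)) E :=
  have hG := (continuousOn_GVal hcoeff hu hvt).mono (hE.trans (OmegaT_subset_ClOmegaT T))
  have hmaps : MapsTo _ E (Icc r1 r2) := fun p hp => snd_mem_Icc_of_mem_Uprime (hU p hp)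
  ⟨hBr.continuousOn_left.comp hG hmaps, hBr.continuousOn_right.comp hG hmaps⟩

/-- The part of `E` on which `u_x` keeps a distance more than `τ` from both forward branches
`s^±` at the level `v_t - b u - P_u - F`. -/
def phaseGap (sm sp : ℝ → ℝ) (b bx c f u ux vt : ℝ → ℝ → ℝ) (τ : ℝ) (E : Set (ℝ × ℝ)) :
    Set (ℝ × ℝ) :=
  {p ∈ E | sm (GVal b c bx f u vt p.1 p.2) + τ < ux p.1 p.2 ∧
    ux p.1 p.2 + τ < sp (GVal b c bx f u vt p.1 p.2)}

theorem isOpen_phaseGap (hBr : BranchPair sm sp r1 r2) (hcoeff : CoeffHyp α T b bx c f d)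
    (hEo : IsOpen E) (hE : E ⊆ OmegaT T)
    (hu : ContinuousOn (fun p : ℝ × ℝ => u p.1 p.2) (ClOmegaT T))
    (hux : ContinuousOn (fun p : ℝ × ℝ => ux p.1 p.2) (ClOmegaT T))
    (hvt : ContinuousOn (fun p : ℝ × ℝ => vt p.1 p.2) (ClOmegaT T))
    (hU : ∀ p ∈ E, (ux p.1 p.2, GVal b c bx f u vt p.1 p.2) ∈ Uprime sm sp r1 r2) :
    IsOpen (phaseGap sm sp b bx c f u ux vt τ E) := by
  obtain ⟨hsm, hsp⟩ := hBr.continuousOn_comp_GVal hcoeff hE hu hvt hU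
  replace hux := hux.mono (hE.trans (OmegaT_subset_ClOmegaT T))
  have hl := (hux.sub hsm).isOpen_inter_preimage hEo (isOpen_Ioi (a := τ))
  have hr := (hsp.sub hux).isOpen_inter_preimage hEo (isOpen_Ioi (a := τ))
  convert hl.inter hr using 1
  ext p
  simp only [phaseGap, mem_ofPred_eq, mem_inter_iff, mem_preimage, mem_Ioi,
    Pi.sub_apply, lt_sub_iff_add_lt']
  exact and_and_left

theorem Zfun_mem_Icc
    (hp : (ux p.1 p.2, GVal b c bx f u vt p.1 p.2) ∈ Uprime sm sp r1 r2) :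
    Zfun sm sp b bx c f u vt ux p ∈ Icc 0 1 := by
  obtain ⟨-, -, hl, hr⟩ := hp
  have hD := sub_pos.2 (hl.trans hr)
  exact ⟨div_nonneg (sub_pos.2 hl).le hD.le, (div_le_one hD).2 (by linarith)⟩

theorem integrableOn_Zfun (hBr : BranchPair sm sp r1 r2) (hcoeff : CoeffHyp α T b bx c f d)
    (hEo : IsOpen E) (hE : E ⊆ OmegaT T)
    (hu : ContinuousOn (fun p : ℝ × ℝ => u p.1 p.2) (ClOmegaT T))
    (hux : ContinuousOn (fun p : ℝ × ℝ => ux p.1 p.2) (ClOmegaT T))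
    (hvt : ContinuousOn (fun p : ℝ × ℝ => vt p.1 p.2) (ClOmegaT T))
    (hU : ∀ p ∈ E, (ux p.1 p.2, GVal b c bx f u vt p.1 p.2) ∈ Uprime sm sp r1 r2) :
    IntegrableOn (Zfun sm sp b bx c f u vt ux) E := by
  obtain ⟨hsm, hsp⟩ := hBr.continuousOn_comp_GVal hcoeff hE hu hvt hU
  have hD : ∀ p ∈ E, sp (GVal b c bx f u vt p.1 p.2) - sm (GVal b c bx f u vt p.1 p.2) ≠ 0 :=
    fun p hp => (sub_pos.2 (hBr.left_lt_right (snd_mem_Icc_of_mem_Uprime (hU p hp)))).ne'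
  exact integrableOn_of_continuousOn_of_abs_le hEo hE
    (((hux.mono (hE.trans (OmegaT_subset_ClOmegaT T))).sub hsm).div (hsp.sub hsm) hD)
    fun p hp => abs_le.2 ⟨by linarith [(Zfun_mem_Icc (hU p hp)).1], (Zfun_mem_Icc (hU p hp)).2⟩

end PhaseGap

section OscillatingPerturbation

open Filter

variable {α T r1 r2 mstar τ : ℝ} {sm sp d : ℝ → ℝ} {b bx c f : ℝ → ℝ → ℝ} {E : Set (ℝ × ℝ)}
  {W : PairData} {χ : ℝ × ℝ → ℝ}

/-- The perturbation of `W` by the high-frequency stream function `oscStream χ k`. -/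
abbrev PairData.oscillate (W : PairData) (χ : ℝ × ℝ → ℝ) (k : ℝ) : PairData :=
  W.addStream (oscStream χ k)

theorem tendstoUniformlyOn_GVal_oscillate (hcoeff : CoeffHyp α T b bx c f d)
    (hu : ContinuousOn (fun p : ℝ × ℝ => W.u p.1 p.2) (ClOmegaT T))
    (hχ : ContDiff ℝ (⊤ : ℕ∞) χ) (hχc : HasCompactSupport χ) (hχs : tsupport χ ⊆ OmegaT T) :
    TendstoUniformlyOn
      (fun k p => GVal b c bx f (W.oscillate χ k).u (W.oscillate χ k).vt p.1 p.2)
      (fun p => GVal b c bx f W.u W.vt p.1 p.2) atTop (ClOmegaT T) := by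
  obtain ⟨M, hM, hb⟩ := exists_abs_le_of_continuousOn_ClOmegaT hcoeff.b_cont
  obtain ⟨N, hN, hd⟩ := exists_abs_le_of_continuousOn_ClOmegaT (T := T)
    (g := fun p => d p.2) (hcoeff.d_cont.comp continuousOn_snd fun p hp => hp.2)
  rw [Metric.tendstoUniformlyOn_iff]
  intro δ hδ
  have hη : 0 < δ / (1 + M + N) := by positivity
  filter_upwards [eventually_forall_abs_lt (tendstoUniformly_oscStream hχ.continuous hχc) hη,
    eventually_forall_abs_lt (tendstoUniformly_partialX_oscStream hχ hχc) hη,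
    eventually_forall_abs_lt (tendstoUniformly_partialT_oscStream hχ hχc) hη] with k h₀ hx ht p hp
  rw [GVal_addStream hcoeff hu (contDiff_oscStream hχ k)
    ((tsupport_oscStream_subset χ k).trans hχs) hp, dist_comm, Real.dist_eq, add_sub_cancel_left]
  set φ := oscStream χ k
  calc |partialT φ p - b p.1 p.2 * partialX φ p - d p.2 * φ p|
      ≤ |partialT φ p| + |b p.1 p.2| * |partialX φ p| + |d p.2| * |φ p| := by
        rw [← abs_mul, ← abs_mul]
        exact (abs_sub _ _).trans (add_le_add_left (abs_sub _ _) _)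
    _ < δ / (1 + M + N) + M * (δ / (1 + M + N)) + N * (δ / (1 + M + N)) := by
        refine add_lt_add_of_lt_of_le (add_lt_add_of_lt_of_le (ht p) ?_) ?_ <;> gcongr
        exacts [hb p hp, (hx p).le, hd p hp, (h₀ p).le]
    _ = δ := by field_simp

theorem tendstoUniformlyOn_comp_of_continuousOn_Icc {X : Type*} {F : ℝ → X → ℝ} {g : X → ℝ}
    {s : ℝ → ℝ} {S : Set X} {l : Filter ℝ} (hs : ContinuousOn s (Icc r1 r2))
    (hF : ∀ᶠ k in l, MapsTo (F k) S (Icc r1 r2)) (hg : MapsTo g S (Icc r1 r2))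
    (h : TendstoUniformlyOn F g l S) :
    TendstoUniformlyOn (fun k p => s (F k p)) (fun p => s (g p)) l S :=
  (isCompact_Icc.uniformContinuousOn_of_continuous hs).comp_tendstoUniformlyOn_eventually hF hg h

/-- The hypotheses under which `W` is perturbed along `oscStream χ k`: `W` satisfies the gradient
constraint on the open set `E`, and the amplitude `χ ≤ τ / 2` is supported where `u_x` is farther
than `τ` from both forward branches. -/
structure IsGapCutOff (T r1 r2 mstar τ : ℝ) (sm sp : ℝ → ℝ) (b bx c f : ℝ → ℝ → ℝ)
    (E : Set (ℝ × ℝ)) (W : PairData) (χ : ℝ × ℝ → ℝ) : Prop where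
  c21 : C21 T W.u W.ux W.uxx W.ut
  c31 : C31 T W.v W.vx W.vxx W.vxxx W.vt
  gradInU : ∀ p ∈ E, GradInU r1 r2 mstar sm sp b c bx f W.u W.ux W.ut W.vx W.vt p
  isOpen : IsOpen E
  subset : E ⊆ OmegaT T
  contDiff : ContDiff ℝ (⊤ : ℕ∞) χ
  hasCompactSupport : HasCompactSupport χ
  tsupport_subset : tsupport χ ⊆ phaseGap sm sp b bx c f W.u W.ux W.vt τ E
  mem_Icc : ∀ p, χ p ∈ Icc 0 (τ / 2)
  pos : 0 < τ

namespace IsGapCutOff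

theorem tsupport_subset_OmegaT
    (h : IsGapCutOff T r1 r2 mstar τ sm sp b bx c f E W χ) : tsupport χ ⊆ OmegaT T :=
  fun _ hp => h.subset (h.tsupport_subset hp).1

theorem subset_ClOmegaT (h : IsGapCutOff T r1 r2 mstar τ sm sp b bx c f E W χ) :
    E ⊆ ClOmegaT T := h.subset.trans (OmegaT_subset_ClOmegaT T)

theorem mapsTo_GVal (h : IsGapCutOff T r1 r2 mstar τ sm sp b bx c f E W χ) :
    MapsTo (fun p => GVal b c bx f W.u W.vt p.1 p.2) E (Ioo r1 r2) :=
  fun p hp => ⟨(h.gradInU p hp).2.2.1, (h.gradInU p hp).2.2.2.1⟩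

theorem eventually_mem_on_tsupport (hcoeff : CoeffHyp α T b bx c f d)
    (h : IsGapCutOff T r1 r2 mstar τ sm sp b bx c f E W χ) :
    ∀ᶠ k in atTop, ∀ p ∈ tsupport χ,
      |(W.oscillate χ k).ut p.1 p.2| < mstar ∧
      GVal b c bx f (W.oscillate χ k).u (W.oscillate χ k).vt p.1 p.2
        ∈ Ioo r1 r2 := by
  have hE : tsupport χ ⊆ E := fun _ hp => (h.tsupport_subset hp).1
  have hCl := hE.trans h.subset_ClOmegaT
  have hut : TendstoUniformlyOn (fun k p => (W.oscillate χ k).ut p.1 p.2)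
      (fun p => W.ut p.1 p.2) atTop (tsupport χ) :=
    Metric.tendstoUniformlyOn_iff.2 fun δ hδ => (eventually_forall_abs_lt
      (tendstoUniformly_partialT_partialX_oscStream h.contDiff h.hasCompactSupport) hδ).mono
      fun k hk p _ => by simpa [PairData.addStream, Real.dist_eq] using hk p
  filter_upwards [eventually_mapsTo_of_tendstoUniformlyOn hut h.hasCompactSupport
      (h.c21.cont_t.mono hCl) (isOpen_Ioo (a := -mstar) (b := mstar))
      fun p hp => abs_lt.1 (h.gradInU p (hE hp)).2.1,
    eventually_mapsTo_of_tendstoUniformlyOn ((tendstoUniformlyOn_GVal_oscillate hcoeff h.c21.cont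
      h.contDiff h.hasCompactSupport h.tsupport_subset_OmegaT).mono hCl) h.hasCompactSupport
      ((continuousOn_GVal hcoeff h.c21.cont h.c31.cont_t).mono hCl) isOpen_Ioo
      (h.mapsTo_GVal.mono_left hE)] with k ht hG p hp
  exact ⟨abs_lt.2 (ht hp), hG hp⟩

theorem eventually_mem_Uprime_on_tsupport (hcoeff : CoeffHyp α T b bx c f d)
    (hBr : BranchPair sm sp r1 r2) (h : IsGapCutOff T r1 r2 mstar τ sm sp b bx c f E W χ) :
    ∀ᶠ k in atTop, ∀ p ∈ tsupport χ,
      ((W.oscillate χ k).ux p.1 p.2,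
        GVal b c bx f (W.oscillate χ k).u (W.oscillate χ k).vt p.1 p.2)
        ∈ Uprime sm sp r1 r2 := by
  have hE : tsupport χ ⊆ E := fun _ hp => (h.tsupport_subset hp).1
  have hGu := (tendstoUniformlyOn_GVal_oscillate hcoeff h.c21.cont
    h.contDiff h.hasCompactSupport h.tsupport_subset_OmegaT).mono (hE.trans h.subset_ClOmegaT)
  have hG := h.eventually_mem_on_tsupport hcoeff
  have hmaps := hG.mono fun k hk p hp => Ioo_subset_Icc_self (hk p hp).2
  have hmaps₀ := (h.mapsTo_GVal.mono_left hE).mono_right Ioo_subset_Icc_self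
  have hτ : 0 < τ / 4 := by linarith [h.pos]
  filter_upwards [hG,
    eventually_forall_abs_lt (tendstoUniformly_partialX_partialX_oscStream h.contDiff
      h.hasCompactSupport) hτ,
    Metric.tendstoUniformlyOn_iff.1 (tendstoUniformlyOn_comp_of_continuousOn_Icc
      hBr.continuousOn_left hmaps hmaps₀ hGu) _ hτ,
    Metric.tendstoUniformlyOn_iff.1 (tendstoUniformlyOn_comp_of_continuousOn_Icc
      hBr.continuousOn_right hmaps hmaps₀ hGu) _ hτ] with k hk hxx hsm hsp p hp
  obtain ⟨-, hl, hr⟩ := h.tsupport_subset hp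
  have hcos : |χ p * Real.cos (k * p.1)| ≤ τ / 2 := by
    rw [abs_mul, abs_of_nonneg (h.mem_Icc p).1]
    exact (mul_le_of_le_one_right (h.mem_Icc p).1 (Real.abs_cos_le_one _)).trans (h.mem_Icc p).2
  have hxx := abs_lt.1 (hxx p)
  have hsm := abs_lt.1 (hsm p hp)
  have hsp := abs_lt.1 (hsp p hp)
  have hcos := abs_le.1 hcos
  refine ⟨(hk p hp).2.1, (hk p hp).2.2, ?_, ?_⟩ <;>
    simp only [PairData.addStream] at * <;> linarith

theorem eventually_gradInU (hcoeff : CoeffHyp α T b bx c f d) (hBr : BranchPair sm sp r1 r2)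
    (h : IsGapCutOff T r1 r2 mstar τ sm sp b bx c f E W χ) :
    ∀ᶠ k in atTop, ∀ p ∈ E, GradInU r1 r2 mstar sm sp b c bx f (W.oscillate χ k).u
      (W.oscillate χ k).ux (W.oscillate χ k).ut (W.oscillate χ k).vx (W.oscillate χ k).vt p := by
  filter_upwards [h.eventually_mem_on_tsupport hcoeff,
    h.eventually_mem_Uprime_on_tsupport hcoeff hBr] with k hk hU p hp
  obtain ⟨hvx, hut, hUp⟩ := h.gradInU p hp
  refine ⟨congrArg (· + partialX (oscStream χ k) p) hvx, ?_⟩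
  by_cases hpχ : p ∈ tsupport χ
  · exact ⟨(hk p hpχ).1, hU p hpχ⟩
  · have hpφ : p ∉ tsupport (oscStream χ k) := fun hp' => hpχ (tsupport_oscStream_subset χ k hp')
    rw [addStream_ut_of_notMem_tsupport hpφ, addStream_ux_of_notMem_tsupport hpφ,
      GVal_addStream_of_notMem_tsupport hcoeff h.c21.cont (contDiff_oscStream h.contDiff k)
      ((tsupport_oscStream_subset χ k).trans h.tsupport_subset_OmegaT) (h.subset_ClOmegaT hp) hpφ]
    exact ⟨hut, hUp⟩

end IsGapCutOff

end OscillatingPerturbation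

section Gauge

open Filter

variable {α T r1 r2 mstar τ : ℝ} {sm sp d : ℝ → ℝ} {b bx c f : ℝ → ℝ → ℝ} {E : Set (ℝ × ℝ)}
  {W : PairData} {χ g : ℝ × ℝ → ℝ} {p : ℝ × ℝ}

theorem tendsto_add_sub_div_sub {ι : Type*} {l : Filter ι} {e w s S : ι → ℝ} {a M s₀ S₀ : ℝ}
    (he : Tendsto e l (nhds 0)) (hw : ∀ i, |w i| ≤ M) (hs : Tendsto s l (nhds s₀))
    (hS : Tendsto S l (nhds S₀)) (h : s₀ < S₀) :
    Tendsto (fun i => (a + e i + w i - s i) / (S i - s i) - (a - s₀) / (S₀ - s₀)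
      - w i / (S₀ - s₀)) l (nhds 0) := by
  have hD : Tendsto (fun i => (S i - s i)⁻¹) l (nhds (S₀ - s₀)⁻¹) :=
    (hS.sub hs).inv₀ (sub_pos.2 h).ne'
  have hmain : Tendsto (fun i => (a + e i - s i) * (S i - s i)⁻¹ - (a - s₀) * (S₀ - s₀)⁻¹) l
      (nhds 0) := by
    simpa using (((he.const_add a).sub hs).mul hD).sub_const ((a - s₀) * (S₀ - s₀)⁻¹)
  have hosc : Tendsto (fun i => w i * ((S i - s i)⁻¹ - (S₀ - s₀)⁻¹)) l (nhds 0) :=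
    bdd_le_mul_tendsto_zero' M (.of_forall hw) (by simpa using hD.sub_const (S₀ - s₀)⁻¹)
  have hsum := hmain.add hosc
  rw [add_zero] at hsum
  refine hsum.congr fun i => ?_
  simp only [div_eq_mul_inv]
  ring

/-- The amplitude `χ` relative to the distance `S_w^+ - S_w^-` of the forward branches. -/
def relativeAmplitude (sm sp : ℝ → ℝ) (b bx c f : ℝ → ℝ → ℝ) (W : PairData) (χ : ℝ × ℝ → ℝ)
    (p : ℝ × ℝ) : ℝ :=
  χ p / (sp (GVal b c bx f W.u W.vt p.1 p.2) - sm (GVal b c bx f W.u W.vt p.1 p.2))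

namespace IsGapCutOff

theorem relativeAmplitude_mem_Icc (h : IsGapCutOff T r1 r2 mstar τ sm sp b bx c f E W χ)
    (hp : p ∈ E) : relativeAmplitude sm sp b bx c f W χ p ∈ Icc 0 1 := by
  have hD := sub_pos.2 ((h.gradInU p hp).2.2.2.2.1.trans (h.gradInU p hp).2.2.2.2.2)
  refine ⟨div_nonneg (h.mem_Icc p).1 hD.le, (div_le_one hD).2 ?_⟩
  by_cases hpχ : p ∈ tsupport χ
  · obtain ⟨-, hl, hr⟩ := h.tsupport_subset hpχ
    linarith [(h.mem_Icc p).2, h.pos]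
  · exact (image_eq_zero_of_notMem_tsupport hpχ).trans_le hD.le

theorem continuousOn_relativeAmplitude (hcoeff : CoeffHyp α T b bx c f d)
    (hBr : BranchPair sm sp r1 r2) (h : IsGapCutOff T r1 r2 mstar τ sm sp b bx c f E W χ) :
    ContinuousOn (relativeAmplitude sm sp b bx c f W χ) E := by
  obtain ⟨hsm, hsp⟩ := hBr.continuousOn_comp_GVal hcoeff h.subset h.c21.cont h.c31.cont_t
    fun p hp => (h.gradInU p hp).2.2
  exact h.contDiff.continuous.continuousOn.div (hsp.sub hsm) fun p hp =>
    (sub_pos.2 (hBr.left_lt_right (Ioo_subset_Icc_self (h.mapsTo_GVal hp)))).ne'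

theorem integrableOn_relativeAmplitude_mul_cos (hcoeff : CoeffHyp α T b bx c f d)
    (hBr : BranchPair sm sp r1 r2) (h : IsGapCutOff T r1 r2 mstar τ sm sp b bx c f E W χ) (k : ℝ) :
    IntegrableOn (fun p => relativeAmplitude sm sp b bx c f W χ p * Real.cos (k * p.1)) E := by
  refine integrableOn_of_continuousOn_of_abs_le (C := 1) h.isOpen h.subset
    ((h.continuousOn_relativeAmplitude hcoeff hBr).mul (by fun_prop)) fun p hp => ?_
  have hA := h.relativeAmplitude_mem_Icc hp
  rw [abs_mul, abs_of_nonneg hA.1]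
  exact mul_le_one₀ hA.2 (abs_nonneg _) (Real.abs_cos_le_one _)

theorem tendsto_Zfun_oscillate (hcoeff : CoeffHyp α T b bx c f d)
    (hBr : BranchPair sm sp r1 r2) (h : IsGapCutOff T r1 r2 mstar τ sm sp b bx c f E W χ)
    (hp : p ∈ E) :
    Tendsto (fun k => Zfun sm sp b bx c f (W.oscillate χ k).u (W.oscillate χ k).vt
        (W.oscillate χ k).ux p - Zfun sm sp b bx c f W.u W.vt W.ux p
        + relativeAmplitude sm sp b bx c f W χ p * Real.cos (k * p.1)) atTop (nhds 0) := by
  have hG₀ := Ioo_subset_Icc_self (h.mapsTo_GVal hp)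
  have hG : Tendsto (fun k => GVal b c bx f (W.oscillate χ k).u (W.oscillate χ k).vt p.1 p.2) atTop
      (nhdsWithin (GVal b c bx f W.u W.vt p.1 p.2) (Icc r1 r2)) :=
    tendsto_nhdsWithin_iff.2 ⟨(tendstoUniformlyOn_GVal_oscillate hcoeff h.c21.cont h.contDiff
      h.hasCompactSupport h.tsupport_subset_OmegaT).tendsto_at (h.subset_ClOmegaT hp),
      (h.eventually_gradInU hcoeff hBr).mono fun k hk => snd_mem_Icc_of_mem_Uprime (hk p hp).2.2⟩
  obtain ⟨M, hM⟩ := exists_abs_mul_cos_le h.contDiff.continuous h.hasCompactSupport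
  refine (tendsto_add_sub_div_sub (a := W.ux p.1 p.2)
    ((tendstoUniformly_partialX_partialX_oscStream h.contDiff h.hasCompactSupport).tendsto_at p)
    (fun k => (abs_neg _).trans_le (hM k p)) ((hBr.continuousOn_left _ hG₀).tendsto.comp hG)
    ((hBr.continuousOn_right _ hG₀).tendsto.comp hG)
    (hBr.left_lt_right hG₀)).congr fun k => ?_
  simp only [Function.comp_apply, Zfun, relativeAmplitude, PairData.addStream]
  ring

theorem eventually_integrableOn_Zfun_oscillate (hcoeff : CoeffHyp α T b bx c f d)
    (hBr : BranchPair sm sp r1 r2) (h : IsGapCutOff T r1 r2 mstar τ sm sp b bx c f E W χ) :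
    ∀ᶠ k in atTop, IntegrableOn (Zfun sm sp b bx c f (W.oscillate χ k).u (W.oscillate χ k).vt
      (W.oscillate χ k).ux) E := by
  filter_upwards [h.eventually_gradInU hcoeff hBr] with k hk
  have hφ := contDiff_oscStream h.contDiff k
  have hC21 := h.c21.add_contDiff (contDiff_partialX hφ)
  exact integrableOn_Zfun hBr hcoeff h.isOpen h.subset hC21.cont hC21.cont_x
    (h.c31.add_contDiff hφ).cont_t fun p hp => (hk p hp).2.2

theorem tendsto_setIntegral_Zfun_oscillate_sub (hcoeff : CoeffHyp α T b bx c f d)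
    (hBr : BranchPair sm sp r1 r2) (h : IsGapCutOff T r1 r2 mstar τ sm sp b bx c f E W χ) :
    Tendsto (fun k => ∫ p in E, (Zfun sm sp b bx c f (W.oscillate χ k).u
      (W.oscillate χ k).vt (W.oscillate χ k).ux p - Zfun sm sp b bx c f W.u W.vt W.ux p
      + relativeAmplitude sm sp b bx c f W χ p * Real.cos (k * p.1))) atTop (nhds 0) := by
  have hU : ∀ p ∈ E, (W.ux p.1 p.2, GVal b c bx f W.u W.vt p.1 p.2) ∈ Uprime sm sp r1 r2 :=
    fun p hp => (h.gradInU p hp).2.2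
  have hZ := integrableOn_Zfun hBr hcoeff h.isOpen h.subset h.c21.cont h.c21.cont_x h.c31.cont_t hU
  rw [← integral_zero (ℝ × ℝ) ℝ (μ := volume.restrict E)]
  refine tendsto_integral_filter_of_dominated_convergence (fun _ => 2)
    ((h.eventually_integrableOn_Zfun_oscillate hcoeff hBr).mono fun k hk => ((hk.sub hZ).add
      (h.integrableOn_relativeAmplitude_mul_cos hcoeff hBr k)).aestronglyMeasurable) ?_
    (integrable_const_iff.2 (.inr ⟨?_⟩)) (ae_restrict_of_forall_mem h.isOpen.measurableSet
      fun p hp => h.tendsto_Zfun_oscillate hcoeff hBr hp)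
  · filter_upwards [h.eventually_gradInU hcoeff hBr] with k hk
    refine ae_restrict_of_forall_mem h.isOpen.measurableSet fun p hp => ?_
    have hZ₁ := Zfun_mem_Icc (hk p hp).2.2
    have hZ₀ := Zfun_mem_Icc (hU p hp)
    have hA := h.relativeAmplitude_mem_Icc hp
    have hc := abs_le.1 (Real.abs_cos_le_one (k * p.1))
    rw [Real.norm_eq_abs, abs_le]
    constructor <;> nlinarith [hZ₁.1, hZ₁.2, hZ₀.1, hZ₀.2, hA.1, hA.2, hc.1, hc.2]
  · simpa using (measure_mono h.subset).trans_lt (volume_OmegaT_lt_top T)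

theorem tendsto_setIntegral_Zfun_oscillate (hcoeff : CoeffHyp α T b bx c f d)
    (hBr : BranchPair sm sp r1 r2) (h : IsGapCutOff T r1 r2 mstar τ sm sp b bx c f E W χ) :
    Tendsto (fun k => ∫ p in E, Zfun sm sp b bx c f (W.oscillate χ k).u (W.oscillate χ k).vt
        (W.oscillate χ k).ux p) atTop (nhds (∫ p in E, Zfun sm sp b bx c f W.u W.vt W.ux p)) := by
  have hZ := integrableOn_Zfun hBr hcoeff h.isOpen h.subset h.c21.cont h.c21.cont_x h.c31.cont_t
    fun p hp => (h.gradInU p hp).2.2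
  have hcos := h.integrableOn_relativeAmplitude_mul_cos hcoeff hBr
  have hRL := tendsto_setIntegral_mul_cos_fst h.isOpen.measurableSet
    (by simpa using hcos 0 : IntegrableOn (relativeAmplitude sm sp b bx c f W χ) E)
  have hsum := ((h.tendsto_setIntegral_Zfun_oscillate_sub hcoeff hBr).add_const
    (∫ p in E, Zfun sm sp b bx c f W.u W.vt W.ux p)).sub hRL
  rw [zero_add, sub_zero] at hsum
  refine hsum.congr' ((h.eventually_integrableOn_Zfun_oscillate hcoeff hBr).mono fun k hk => ?_)
  have hdiff : IntegrableOn (fun p => Zfun sm sp b bx c f (W.oscillate χ k).u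
      (W.oscillate χ k).vt (W.oscillate χ k).ux p - Zfun sm sp b bx c f W.u W.vt W.ux p) E :=
    hk.sub hZ
  beta_reduce
  rw [integral_add hdiff (hcos k), integral_sub hk hZ]
  ring

end IsGapCutOff

end Gauge

section LowerBound

open Filter

theorem tendsto_setIntegral_mul_cos_sq_fst {g : ℝ × ℝ → ℝ} {s : Set (ℝ × ℝ)}
    (hs : MeasurableSet s) (hg : IntegrableOn g s) :
    Tendsto (fun k : ℝ => ∫ p in s, g p * Real.cos (k * p.1) ^ 2) atTop
      (nhds ((∫ p in s, g p) / 2)) := by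
  have hRL := ((tendsto_setIntegral_mul_cos_fst hs hg).comp
    (tendsto_id.const_mul_atTop two_pos)).div_const 2
  refine (((hRL.const_add ((∫ p in s, g p) / 2)).congr fun k => ?_)).trans (by simp)
  have hcos : IntegrableOn (fun p => g p * Real.cos (2 * k * p.1)) s :=
    hg.mul_bdd (c := 1) (Continuous.aestronglyMeasurable (by fun_prop))
      (.of_forall fun p => Real.abs_cos_le_one _)
  rw [Function.comp_apply, id, ← integral_div, ← integral_div,
    ← integral_add (hg.div_const 2) (hcos.div_const 2)]
  congr 1 with p
  rw [Real.cos_sq, mul_assoc]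
  ring

-- `|χ cos(kx)| ≥ χ cos²(kx)`, whose integral tends to half of the integral of `χ`.
theorem eventually_le_setIntegral_abs_partialX_partialX_oscStream {χ : ℝ × ℝ → ℝ}
    {s : Set (ℝ × ℝ)} {a : ℝ} (hs : MeasurableSet s) (hsfin : volume s ≠ ⊤)
    (hχ : ContDiff ℝ (⊤ : ℕ∞) χ) (hχc : HasCompactSupport χ) (hχ0 : ∀ p, 0 ≤ χ p)
    (ha : a < (∫ p in s, χ p) / 2) :
    ∀ᶠ k in atTop, a ≤ ∫ p in s, |partialX (partialX (oscStream χ k)) p| := by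
  obtain ⟨δ, hδ, hδa⟩ := exists_pos_mul_lt (sub_pos.2 ha) (volume.real s)
  have hχi : IntegrableOn χ s := (hχ.continuous.integrable_of_hasCompactSupport hχc).integrableOn
  filter_upwards [(tendsto_setIntegral_mul_cos_sq_fst hs hχi).eventually_const_lt
      (lt_sub_iff_add_lt'.1 hδa),
    eventually_forall_abs_lt (tendstoUniformly_partialX_partialX_oscStream hχ hχc) hδ] with k hk hxx
  have hφ := contDiff_oscStream hχ k
  have hχcos : IntegrableOn (fun p => χ p * Real.cos (k * p.1) ^ 2) s :=
    ((hχ.continuous.mul (by fun_prop)).integrable_of_hasCompactSupport hχc.mul_right).integrableOn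
  have hφc : HasCompactSupport (oscStream χ k) :=
    hχc.of_isClosed_subset (isClosed_tsupport _) (tsupport_oscStream_subset χ k)
  have hφxx : IntegrableOn (partialX (partialX (oscStream χ k))) s :=
    ((contDiff_partialX (contDiff_partialX hφ)).continuous.integrable_of_hasCompactSupport
      ((hφc.fderiv_apply ℝ (1, 0)).fderiv_apply ℝ (1, 0))).integrableOn
  have hδs : IntegrableOn (fun _ => δ) s := integrableOn_const hsfin
  calc a ≤ ∫ p in s, (χ p * Real.cos (k * p.1) ^ 2 - δ) := by
        rw [integral_sub hχcos hδs, setIntegral_const, smul_eq_mul]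
        linarith
    _ ≤ ∫ p in s, |partialX (partialX (oscStream χ k)) p| := by
        refine integral_mono (hχcos.sub hδs) hφxx.abs fun p => ?_
        have hcos : χ p * Real.cos (k * p.1) ^ 2 ≤ |χ p * Real.cos (k * p.1)| := by
          rw [abs_mul, abs_of_nonneg (hχ0 p), ← sq_abs, sq]
          exact mul_le_mul_of_nonneg_left
            (mul_le_of_le_one_left (abs_nonneg _) (Real.abs_cos_le_one _)) (hχ0 p)
        have htri := abs_sub (partialX (partialX (oscStream χ k)) p + χ p * Real.cos (k * p.1))
          (partialX (partialX (oscStream χ k)) p)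
        rw [add_sub_cancel_left] at htri
        linarith [hxx p]

end LowerBound

section Perturbation

open Filter

variable {α T r1 r2 mstar τ ε GammaStar : ℝ} {sigma sm sp d : ℝ → ℝ}
  {b bx c f us ust vs : ℝ → ℝ → ℝ} {E : Set (ℝ × ℝ)} {W : PairData} {χ : ℝ × ℝ → ℝ}

theorem eventually_EssSupAbs_add_lt {ι : Type*} {l : Filter ι} {F : ι → ℝ × ℝ → ℝ}
    {g : ℝ → ℝ → ℝ} {a : ℝ} (hT : 0 < T)
    (hg : ContinuousOn (fun p : ℝ × ℝ => g p.1 p.2) (ClOmegaT T))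
    (hF : TendstoUniformly F 0 l) (ha : EssSupAbs T g < a) :
    ∀ᶠ i in l, EssSupAbs T (fun x t => g x t + F i (x, t)) < a := by
  obtain ⟨δ, hδ, hδa⟩ := exists_between ha
  filter_upwards [eventually_forall_abs_lt hF (sub_pos.2 hδ)] with i hi
  refine (EssSupAbs_le_of_forall_le hT fun p hp => ?_).trans_lt hδa
  linarith [abs_add_le (g p.1 p.2) (F i p), abs_le_EssSupAbs hg p hp, hi p]

/-- `w` agrees with `w* = (u*, v*)` off an open set of null boundary compactly contained in `E`,
and so do the potentials. -/
def AgreesOffCompactlyContained (T : ℝ) (c bx us vs : ℝ → ℝ → ℝ) (E : Set (ℝ × ℝ))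
    (W : PairData) : Prop :=
  ∃ O : Set (ℝ × ℝ), IsOpen O ∧ closure O ⊆ E ∧ IsCompact (closure O) ∧
    volume (frontier O) = 0 ∧
    (∀ p ∈ OmegaT T \ closure O, W.u p.1 p.2 = us p.1 p.2 ∧ W.v p.1 p.2 = vs p.1 p.2) ∧
    (∀ p ∈ OmegaT T \ closure O, Pot c bx W.u p.1 p.2 = Pot c bx us p.1 p.2)

theorem AgreesOffCompactlyContained.addStream {φ : ℝ × ℝ → ℝ} (hcoeff : CoeffHyp α T b bx c f d)
    (hu : ContinuousOn (fun p : ℝ × ℝ => W.u p.1 p.2) (ClOmegaT T)) (hEo : IsOpen E)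
    (hE : E ⊆ OmegaT T) (h : AgreesOffCompactlyContained T c bx us vs E W)
    (hφ : ContDiff ℝ (⊤ : ℕ∞) φ) (hφc : HasCompactSupport φ) (hφE : tsupport φ ⊆ E) :
    AgreesOffCompactlyContained T c bx us vs E (W.addStream φ) := by
  obtain ⟨O, hO, hOE, hOc, hO0, huv, hPot⟩ := h
  obtain ⟨V, hV, hφV, hVE, hVc, hV0⟩ :=
    exists_isOpen_superset_null_frontier (volume : Measure (ℝ × ℝ)) hφc hEo hφE
  have hoff : ∀ p ∈ OmegaT T \ closure (O ∪ V), p ∈ OmegaT T \ closure O ∧ p ∉ tsupport φ := by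
    rintro p ⟨hp, hpOV⟩
    rw [closure_union, mem_union, not_or] at hpOV
    exact ⟨⟨hp, hpOV.1⟩, fun h => hpOV.2 (subset_closure (hφV h))⟩
  refine ⟨O ∪ V, hO.union hV, ?_, ?_, ?_, fun p hp => ?_, fun p hp => ?_⟩
  · exact closure_union.subset.trans (union_subset hOE hVE)
  · rw [closure_union]
    exact hOc.union hVc
  · refine measure_mono_null (frontier_union_subset O V) (measure_union_null ?_ ?_)
    exacts [measure_mono_null inter_subset_left hO0, measure_mono_null inter_subset_right hV0]
  · obtain ⟨hpO, hpφ⟩ := hoff p hp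
    obtain ⟨hu', hv'⟩ := addStream_uv_of_notMem_tsupport (W := W) hpφ
    exact ⟨hu'.trans (huv p hpO).1, hv'.trans (huv p hpO).2⟩
  · obtain ⟨hpO, hpφ⟩ := hoff p hp
    exact (Pot_addStream_of_notMem_tsupport hcoeff hu hφ (hφE.trans hE)
      (OmegaT_subset_ClOmegaT T hp.1) hpφ).trans (hPot p hpO)

theorem InAdmissible.eventually_oscillate (hT : 0 < T) (hcoeff : CoeffHyp α T b bx c f d)
    (hBr : BranchPair sm sp r1 r2)
    (hus : ContinuousOn (fun p : ℝ × ℝ => us p.1 p.2) (ClOmegaT T))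
    (hust : ContinuousOn (fun p : ℝ × ℝ => ust p.1 p.2) (ClOmegaT T))
    (hW : InAdmissible T r1 r2 mstar ε GammaStar sigma sm sp b bx c f us ust vs E W)
    (h : IsGapCutOff T r1 r2 mstar τ sm sp b bx c f E W χ) :
    ∀ᶠ k in atTop, InAdmissible T r1 r2 mstar ε GammaStar sigma sm sp b bx c f us ust vs E
      (W.oscillate χ k) := by
  obtain ⟨hC21, hC31, hoff, hu, hut, -, hGauge⟩ := hW
  have hlim := (((h.tendsto_setIntegral_Zfun_oscillate hcoeff hBr).const_mul
    (volume E).toReal⁻¹).sub_const GammaStar).abs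
  filter_upwards [eventually_EssSupAbs_add_lt hT (hC21.cont.sub hus)
      (tendstoUniformly_partialX_oscStream h.contDiff h.hasCompactSupport) hu,
    eventually_EssSupAbs_add_lt hT (hC21.cont_t.sub hust)
      (tendstoUniformly_partialT_partialX_oscStream h.contDiff h.hasCompactSupport) hut,
    h.eventually_gradInU hcoeff hBr, hlim.eventually_lt_const hGauge] with k huk hutk hgrad hΓ
  have hφ := contDiff_oscStream h.contDiff k
  have hφχ := tsupport_oscStream_subset χ k
  refine ⟨hC21.add_contDiff (contDiff_partialX hφ), hC31.add_contDiff hφ,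
    AgreesOffCompactlyContained.addStream hcoeff hC21.cont h.isOpen h.subset hoff hφ
      (h.hasCompactSupport.of_isClosed_subset (isClosed_tsupport _) hφχ)
      (hφχ.trans (h.tsupport_subset.trans (sep_subset _ _))), ?_, ?_, hgrad, hΓ⟩
  · simpa only [PairData.addStream, add_sub_right_comm] using huk
  · simpa only [PairData.addStream, add_sub_right_comm] using hutk

theorem InAdmissible.exists_isGapCutOff (hcoeff : CoeffHyp α T b bx c f d)
    (hBr : BranchPair sm sp r1 r2) (hEo : IsOpen E) (hE : E ⊆ OmegaT T)
    (hW : InAdmissible T r1 r2 mstar ε GammaStar sigma sm sp b bx c f us ust vs E W)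
    (hτ : 0 < τ) {m : ENNReal}
    (hm : m < volume (phaseGap sm sp b bx c f W.u W.ux W.vt τ E)) :
    ∃ χ, IsGapCutOff T r1 r2 mstar τ sm sp b bx c f E W χ ∧
      τ / 2 * m.toReal < ∫ p in OmegaT T, χ p := by
  obtain ⟨hC21, hC31, -, -, -, hgrad, -⟩ := hW
  have hgap := isOpen_phaseGap (τ := τ) hBr hcoeff hEo hE hC21.cont hC21.cont_x hC31.cont_t
    fun p hp => (hgrad p hp).2.2
  obtain ⟨K, hKgap, hK, hmK⟩ := hgap.exists_lt_isCompact hm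
  obtain ⟨χ, hχ, hχc, hχgap, hχτ, hχK⟩ := exists_contDiff_plateau hK hgap hKgap (half_pos hτ).le
  refine ⟨χ, ⟨hC21, hC31, hgrad, hEo, hE, hχ, hχc, hχgap, hχτ, hτ⟩, ?_⟩
  have hKΩ : K ⊆ OmegaT T := hKgap.trans ((sep_subset _ _).trans hE)
  calc τ / 2 * m.toReal < τ / 2 * volume.real K := by
        gcongr
        exact ENNReal.toReal_strict_mono hK.measure_lt_top.ne hmK
    _ = ∫ p in K, χ p := by
        rw [setIntegral_congr_fun hK.measurableSet hχK, setIntegral_const, smul_eq_mul, mul_comm]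
    _ ≤ ∫ p in OmegaT T, χ p := setIntegral_mono_set
        (hχ.continuous.integrable_of_hasCompactSupport hχc).integrableOn
        (.of_forall fun p => (hχτ p).1) hKΩ.eventuallyLE

theorem InAdmissible.exists_perturbation (hT : 0 < T) (hcoeff : CoeffHyp α T b bx c f d)
    (hBr : BranchPair sm sp r1 r2) (hEo : IsOpen E) (hE : E ⊆ OmegaT T)
    (hus : ContinuousOn (fun p : ℝ × ℝ => us p.1 p.2) (ClOmegaT T))
    (hust : ContinuousOn (fun p : ℝ × ℝ => ust p.1 p.2) (ClOmegaT T))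
    (hW : InAdmissible T r1 r2 mstar ε GammaStar sigma sm sp b bx c f us ust vs E W)
    (hτ : 0 < τ) {η : ℝ} (hη : 0 < η) :
    ∃ W', InAdmissible T r1 r2 mstar ε GammaStar sigma sm sp b bx c f us ust vs E W' ∧
      (∀ p : ℝ × ℝ, |W'.u p.1 p.2 - W.u p.1 p.2| < η ∧ |W'.v p.1 p.2 - W.v p.1 p.2| < η) ∧
      τ / 8 * (volume (phaseGap sm sp b bx c f W.u W.ux W.vt τ E)).toReal
        ≤ ∫ p in OmegaT T, |W'.ux p.1 p.2 - W.ux p.1 p.2| := by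
  rcases eq_or_ne (volume (phaseGap sm sp b bx c f W.u W.ux W.vt τ E)) 0 with h0 | h0
  · exact ⟨W, hW, fun p => by simpa using hη, by simp [h0]⟩
  have hfin : volume (phaseGap sm sp b bx c f W.u W.ux W.vt τ E) ≠ ⊤ :=
    ((measure_mono ((sep_subset _ _).trans hE)).trans_lt (volume_OmegaT_lt_top T)).ne
  obtain ⟨χ, h, hmχ⟩ := hW.exists_isGapCutOff hcoeff hBr hEo hE hτ (ENNReal.half_lt_self h0 hfin)
  rw [ENNReal.toReal_div, ENNReal.toReal_ofNat] at hmχ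
  have hgain := eventually_le_setIntegral_abs_partialX_partialX_oscStream
    (a := τ / 8 * (volume (phaseGap sm sp b bx c f W.u W.ux W.vt τ E)).toReal)
    (measurableSet_OmegaT T) (volume_OmegaT_lt_top T).ne h.contDiff h.hasCompactSupport
    (fun p => (h.mem_Icc p).1) (by linarith)
  have hsmall_u := eventually_forall_abs_lt
    (tendstoUniformly_partialX_oscStream h.contDiff h.hasCompactSupport) hη
  have hsmall_v := eventually_forall_abs_lt
    (tendstoUniformly_oscStream h.contDiff.continuous h.hasCompactSupport) hη
  obtain ⟨k, ⟨⟨hadm, hu⟩, hv⟩, hux⟩ := (((hW.eventually_oscillate hT hcoeff hBr hus hust h).and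
    hsmall_u).and hsmall_v |>.and hgain).exists
  refine ⟨_, hadm, fun p => ?_, ?_⟩ <;> simp only [PairData.addStream, add_sub_cancel_left]
  exacts [⟨hu p, hv p⟩, hux]

end Perturbation

section LipschitzDerivative

theorem integrableOn_of_hasLineDerivAt {V : Type*} [NormedAddCommGroup V] [NormedSpace ℝ V]
    [MeasurableSpace V] [OpensMeasurableSpace V] {μ : Measure V} {U : Set V} {g g' : V → ℝ}
    {K : ℝ≥0} {e : V} (hU : IsOpen U) (hμU : μ U < ⊤) (hg : LipschitzOnWith K g U)
    (hderiv : ∀ᵐ p ∂(μ.restrict U), HasLineDerivAt ℝ g (g' p) p e) : IntegrableOn g' U μ := by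
  obtain ⟨h, hh, hgh⟩ := hg.extend_real
  have heq : g' =ᵐ[μ.restrict U] fun p => lineDeriv ℝ h p e := by
    filter_upwards [hderiv, ae_restrict_mem hU.measurableSet] with p hp hpU
    exact (hp.congr_of_eventuallyEq
      (hgh.symm.eventuallyEq_of_mem (hU.mem_nhds hpU))).lineDeriv.symm
  exact (IntegrableOn.of_bound hμU (measurable_lineDeriv hh.continuous).aestronglyMeasurable
    (K * ‖e‖) (.of_forall fun _ => norm_lineDeriv_le_of_lipschitz ℝ hh)).congr heq.symm

variable {T : ℝ} {g g' : ℝ → ℝ → ℝ} {K : ℝ≥0}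

theorem integrableOn_of_hasDerivAt_fst
    (hg : LipschitzOnWith K (fun p : ℝ × ℝ => g p.1 p.2) (ClOmegaT T))
    (h : ∀ᵐ p ∂(volume.restrict (OmegaT T)), HasDerivAt (fun y => g y p.2) (g' p.1 p.2) p.1) :
    IntegrableOn (fun p => g' p.1 p.2) (OmegaT T) := by
  refine integrableOn_of_hasLineDerivAt (e := (1, 0)) (isOpen_OmegaT T) (volume_OmegaT_lt_top T)
    (hg.mono (OmegaT_subset_ClOmegaT T)) (h.mono fun p hp => ?_)
  simpa [HasLineDerivAt] using
    HasDerivAt.comp_const_add (f := fun y => g y p.2) p.1 0 (by rwa [add_zero])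

theorem integrableOn_of_hasDerivAt_snd
    (hg : LipschitzOnWith K (fun p : ℝ × ℝ => g p.1 p.2) (ClOmegaT T))
    (h : ∀ᵐ p ∂(volume.restrict (OmegaT T)), HasDerivAt (fun τ => g p.1 τ) (g' p.1 p.2) p.2) :
    IntegrableOn (fun p => g' p.1 p.2) (OmegaT T) := by
  refine integrableOn_of_hasLineDerivAt (e := (0, 1)) (isOpen_OmegaT T) (volume_OmegaT_lt_top T)
    (hg.mono (OmegaT_subset_ClOmegaT T)) (h.mono fun p hp => ?_)
  simpa [HasLineDerivAt] using
    HasDerivAt.comp_const_add (f := fun τ => g p.1 τ) p.2 0 (by rwa [add_zero])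

end LipschitzDerivative

/-- A Lipschitz pair `w = (u, v)` on `cl Ω_T`, with its a.e. partial derivatives. -/
structure LipschitzPair (T : ℝ) (u v ux ut vx vt : ℝ → ℝ → ℝ) : Prop where
  lip_u : ∃ K : ℝ≥0, LipschitzOnWith K (fun p : ℝ × ℝ => u p.1 p.2) (ClOmegaT T)
  lip_v : ∃ K : ℝ≥0, LipschitzOnWith K (fun p : ℝ × ℝ => v p.1 p.2) (ClOmegaT T)
  ux_deriv : ∀ᵐ p ∂(volume.restrict (OmegaT T)),
    HasDerivAt (fun y => u y p.2) (ux p.1 p.2) p.1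
  ut_deriv : ∀ᵐ p ∂(volume.restrict (OmegaT T)),
    HasDerivAt (fun τ => u p.1 τ) (ut p.1 p.2) p.2
  vx_deriv : ∀ᵐ p ∂(volume.restrict (OmegaT T)),
    HasDerivAt (fun y => v y p.2) (vx p.1 p.2) p.1
  vt_deriv : ∀ᵐ p ∂(volume.restrict (OmegaT T)),
    HasDerivAt (fun τ => v p.1 τ) (vt p.1 p.2) p.2

section PairDistance

/-- The `L∞(Ω_T; ℝ²)`-distance between `W = (W.u, W.v)` and `w = (u, v)`. -/
def pairDist (T : ℝ) (W : PairData) (u v : ℝ → ℝ → ℝ) : ℝ :=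
  EssSupAbs T fun x t => Real.sqrt ((W.u x t - u x t) ^ 2 + (W.v x t - v x t) ^ 2)

variable {T η : ℝ} {u v : ℝ → ℝ → ℝ} {W : PairData} {p : ℝ × ℝ}

theorem abs_sub_le_pairDist (hT : 0 < T)
    (hWu : ContinuousOn (fun p : ℝ × ℝ => W.u p.1 p.2) (ClOmegaT T))
    (hWv : ContinuousOn (fun p : ℝ × ℝ => W.v p.1 p.2) (ClOmegaT T))
    (hu : ContinuousOn (fun p : ℝ × ℝ => u p.1 p.2) (ClOmegaT T))
    (hv : ContinuousOn (fun p : ℝ × ℝ => v p.1 p.2) (ClOmegaT T)) (hp : p ∈ ClOmegaT T) :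
    |W.u p.1 p.2 - u p.1 p.2| ≤ pairDist T W u v ∧
      |W.v p.1 p.2 - v p.1 p.2| ≤ pairDist T W u v := by
  have hcont : ContinuousOn (fun p : ℝ × ℝ => Real.sqrt ((W.u p.1 p.2 - u p.1 p.2) ^ 2
      + (W.v p.1 p.2 - v p.1 p.2) ^ 2)) (ClOmegaT T) :=
    (((hWu.sub hu).pow 2).add ((hWv.sub hv).pow 2)).sqrt
  have hle : Real.sqrt ((W.u p.1 p.2 - u p.1 p.2) ^ 2 + (W.v p.1 p.2 - v p.1 p.2) ^ 2)
      ≤ pairDist T W u v := by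
    rw [← closure_OmegaT hT] at hcont hp
    refine le_on_closure (fun q hq => ?_) hcont continuousOn_const hp
    exact (le_abs_self _).trans (abs_le_EssSupAbs (g := fun x t =>
      Real.sqrt ((W.u x t - u x t) ^ 2 + (W.v x t - v x t) ^ 2)) (closure_OmegaT hT ▸ hcont) q hq)
  exact ⟨(Real.abs_le_sqrt (by linarith [sq_nonneg (W.v p.1 p.2 - v p.1 p.2)])).trans hle,
    (Real.abs_le_sqrt (by linarith [sq_nonneg (W.u p.1 p.2 - u p.1 p.2)])).trans hle⟩

theorem pairDist_nonneg (hT : 0 < T)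
    (hWu : ContinuousOn (fun p : ℝ × ℝ => W.u p.1 p.2) (ClOmegaT T))
    (hWv : ContinuousOn (fun p : ℝ × ℝ => W.v p.1 p.2) (ClOmegaT T))
    (hu : ContinuousOn (fun p : ℝ × ℝ => u p.1 p.2) (ClOmegaT T))
    (hv : ContinuousOn (fun p : ℝ × ℝ => v p.1 p.2) (ClOmegaT T)) : 0 ≤ pairDist T W u v :=
  (abs_nonneg _).trans (abs_sub_le_pairDist (p := (0, 0)) hT hWu hWv hu hv
    ⟨left_mem_Icc.2 zero_le_one, left_mem_Icc.2 hT.le⟩).1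

theorem pairDist_le_two_mul (hT : 0 < T)
    (h : ∀ p ∈ OmegaT T, |W.u p.1 p.2 - u p.1 p.2| ≤ η ∧ |W.v p.1 p.2 - v p.1 p.2| ≤ η) :
    pairDist T W u v ≤ 2 * η := by
  refine EssSupAbs_le_of_forall_le hT fun p hp => ?_
  obtain ⟨hu, hv⟩ := h p hp
  have hη := (abs_nonneg _).trans hu
  rw [abs_of_nonneg (Real.sqrt_nonneg _), Real.sqrt_le_left (by positivity)]
  nlinarith [sq_le_sq' (abs_le.1 hu).1 (abs_le.1 hu).2, sq_le_sq' (abs_le.1 hv).1 (abs_le.1 hv).2]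

end PairDistance

section GradContinuity

open Filter Topology

/-- The `ℓ¹`-distance between `∇W` and the matrix with rows `(ux, ut)` and `(vx, vt)`. -/
def gradError (W : PairData) (ux ut vx vt : ℝ → ℝ → ℝ) (p : ℝ × ℝ) : ℝ :=
  |W.ux p.1 p.2 - ux p.1 p.2| + |W.ut p.1 p.2 - ut p.1 p.2|
    + |W.vx p.1 p.2 - vx p.1 p.2| + |W.vt p.1 p.2 - vt p.1 p.2|

/-- Sequential continuity at `w = (u, v)`, along the pairs satisfying `A`, of the gradient map from
`L∞(Ω_T; ℝ²)` to `L¹(Ω_T; M^{2×2})`. -/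
def GradContinuousAt (T : ℝ) (A : PairData → Prop) (u v ux ut vx vt : ℝ → ℝ → ℝ) : Prop :=
  ∀ W : ℕ → PairData, (∀ j, A (W j)) → Tendsto (fun j => pairDist T (W j) u v) atTop (𝓝 0) →
    Tendsto (fun j => ∫ p in OmegaT T, gradError (W j) ux ut vx vt p) atTop (𝓝 0)

/-- Convergence of a sequence of classical pairs to a Lipschitz pair with first component `u`:
uniform for `u`, almost everywhere for `u_x`, `u_t` and `v_t`. -/
structure GradConvergesTo (T : ℝ) (W : ℕ → PairData) (u ux ut vt : ℝ → ℝ → ℝ) : Prop where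
  u_tendsto : TendstoUniformlyOn (fun j p => (W j).u p.1 p.2) (fun p : ℝ × ℝ => u p.1 p.2) atTop
    (ClOmegaT T)
  ux_tendsto : ∀ᵐ p ∂(volume.restrict (OmegaT T)),
    Tendsto (fun j => (W j).ux p.1 p.2) atTop (𝓝 (ux p.1 p.2))
  ut_tendsto : ∀ᵐ p ∂(volume.restrict (OmegaT T)),
    Tendsto (fun j => (W j).ut p.1 p.2) atTop (𝓝 (ut p.1 p.2))
  vt_tendsto : ∀ᵐ p ∂(volume.restrict (OmegaT T)),
    Tendsto (fun j => (W j).vt p.1 p.2) atTop (𝓝 (vt p.1 p.2))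

theorem exists_subseq_tendsto_ae_zero {X : Type*} [MeasurableSpace X] {μ : Measure X}
    {H : ℕ → X → ℝ} (hH : ∀ j, Integrable (H j) μ) (h0 : ∀ j, 0 ≤ H j)
    (h : Tendsto (fun j => ∫ x, H j x ∂μ) atTop (𝓝 0)) :
    ∃ ns : ℕ → ℕ, StrictMono ns ∧ ∀ᵐ x ∂μ, Tendsto (fun j => H (ns j) x) atTop (𝓝 0) := by
  have hnorm : ∀ j, eLpNorm (H j - 0) 1 μ = ENNReal.ofReal (∫ x, H j x ∂μ) := fun j => by
    rw [sub_zero, eLpNorm_one_eq_lintegral_enorm, ← ofReal_integral_norm_eq_lintegral_enorm (hH j)]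
    simp only [Real.norm_of_nonneg (h0 j _)]
  refine (tendstoInMeasure_of_tendsto_eLpNorm one_ne_zero (fun j => (hH j).aestronglyMeasurable)
    aestronglyMeasurable_zero ?_).exists_seq_tendsto_ae
  simpa only [hnorm, ENNReal.ofReal_zero] using ENNReal.tendsto_ofReal h

variable {T : ℝ} {u v ux ut vx vt : ℝ → ℝ → ℝ} {W : PairData} {A : PairData → Prop}
  {Wseq : ℕ → PairData}

theorem LipschitzPair.integrableOn_gradError (hw : LipschitzPair T u v ux ut vx vt)
    (hWu : C21 T W.u W.ux W.uxx W.ut) (hWv : C31 T W.v W.vx W.vxx W.vxxx W.vt) :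
    IntegrableOn (gradError W ux ut vx vt) (OmegaT T) := by
  obtain ⟨⟨K, hu⟩, ⟨L, hv⟩, hux, hut, hvx, hvt⟩ := hw
  have hint {g : ℝ → ℝ → ℝ} (hg : ContinuousOn (fun p : ℝ × ℝ => g p.1 p.2) (ClOmegaT T)) :
      IntegrableOn (fun p => g p.1 p.2) (OmegaT T) :=
    integrableOn_OmegaT_of_continuousOn_ClOmegaT hg le_rfl
  exact ((((hint hWu.cont_x).sub (integrableOn_of_hasDerivAt_fst hu hux)).abs.add
    ((hint hWu.cont_t).sub (integrableOn_of_hasDerivAt_snd hu hut)).abs).add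
    ((hint hWv.cont_x).sub (integrableOn_of_hasDerivAt_fst hv hvx)).abs).add
    ((hint hWv.cont_t).sub (integrableOn_of_hasDerivAt_snd hv hvt)).abs

theorem gradError_nonneg : 0 ≤ gradError W ux ut vx vt := fun _ => by
  unfold gradError
  positivity

theorem abs_sub_le_gradError (p : ℝ × ℝ) :
    |W.ux p.1 p.2 - ux p.1 p.2| ≤ gradError W ux ut vx vt p ∧
      |W.ut p.1 p.2 - ut p.1 p.2| ≤ gradError W ux ut vx vt p ∧
      |W.vt p.1 p.2 - vt p.1 p.2| ≤ gradError W ux ut vx vt p := by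
  have h1 := abs_nonneg (W.ux p.1 p.2 - ux p.1 p.2)
  have h2 := abs_nonneg (W.ut p.1 p.2 - ut p.1 p.2)
  have h3 := abs_nonneg (W.vx p.1 p.2 - vx p.1 p.2)
  have h4 := abs_nonneg (W.vt p.1 p.2 - vt p.1 p.2)
  unfold gradError
  refine ⟨?_, ?_, ?_⟩ <;> linarith

theorem GradContinuousAt.tendsto_setIntegral_abs_ux_sub
    (hA : GradContinuousAt T A u v ux ut vx vt) (hw : LipschitzPair T u v ux ut vx vt)
    (hW : ∀ j, A (Wseq j)) (hu : ∀ j, C21 T (Wseq j).u (Wseq j).ux (Wseq j).uxx (Wseq j).ut)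
    (hv : ∀ j, C31 T (Wseq j).v (Wseq j).vx (Wseq j).vxx (Wseq j).vxxx (Wseq j).vt)
    (hdist : Tendsto (fun j => pairDist T (Wseq j) u v) atTop (𝓝 0)) :
    Tendsto (fun j => ∫ p in OmegaT T, |(Wseq j).ux p.1 p.2 - ux p.1 p.2|) atTop (𝓝 0) :=
  squeeze_zero (fun _ => integral_nonneg fun _ => abs_nonneg _)
    (fun j => integral_mono_of_nonneg (.of_forall fun _ => abs_nonneg _)
      (hw.integrableOn_gradError (hu j) (hv j)) (.of_forall fun p => (abs_sub_le_gradError p).1))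
    (hA Wseq hW hdist)

theorem LipschitzPair.tendstoUniformlyOn_u (hT : 0 < T) (hw : LipschitzPair T u v ux ut vx vt)
    (hu : ∀ j, C21 T (Wseq j).u (Wseq j).ux (Wseq j).uxx (Wseq j).ut)
    (hv : ∀ j, C31 T (Wseq j).v (Wseq j).vx (Wseq j).vxx (Wseq j).vxxx (Wseq j).vt)
    (hdist : Tendsto (fun j => pairDist T (Wseq j) u v) atTop (𝓝 0)) :
    TendstoUniformlyOn (fun j p => (Wseq j).u p.1 p.2) (fun p : ℝ × ℝ => u p.1 p.2) atTop
      (ClOmegaT T) := by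
  obtain ⟨⟨K, hK⟩, ⟨L, hL⟩, -⟩ := hw
  rw [Metric.tendstoUniformlyOn_iff]
  intro η hη
  filter_upwards [hdist.eventually_lt_const hη] with j hj p hp
  rw [dist_comm, Real.dist_eq]
  exact (abs_sub_le_pairDist hT (hu j).cont (hv j).cont hK.continuousOn hL.continuousOn
    hp).1.trans_lt hj

theorem GradContinuousAt.exists_subseq (hA : GradContinuousAt T A u v ux ut vx vt) (hT : 0 < T)
    (hw : LipschitzPair T u v ux ut vx vt)
    (hW : ∀ j, A (Wseq j)) (hu : ∀ j, C21 T (Wseq j).u (Wseq j).ux (Wseq j).uxx (Wseq j).ut)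
    (hv : ∀ j, C31 T (Wseq j).v (Wseq j).vx (Wseq j).vxx (Wseq j).vxxx (Wseq j).vt)
    (hdist : Tendsto (fun j => pairDist T (Wseq j) u v) atTop (𝓝 0)) :
    ∃ ns : ℕ → ℕ, StrictMono ns ∧ GradConvergesTo T (Wseq ∘ ns) u ux ut vt := by
  obtain ⟨ns, hns, hae⟩ := exists_subseq_tendsto_ae_zero
    (fun j => hw.integrableOn_gradError (hu j) (hv j)) (fun _ => gradError_nonneg)
    (hA Wseq hW hdist)
  have hsub {a : ℕ → ℝ} {l : ℝ} {H : ℕ → ℝ} (hH : Tendsto H atTop (𝓝 0))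
      (h : ∀ j, |a j - l| ≤ H j) : Tendsto a atTop (𝓝 l) :=
    tendsto_iff_norm_sub_tendsto_zero.2 (squeeze_zero (fun _ => norm_nonneg _) h hH)
  exact ⟨ns, hns, hw.tendstoUniformlyOn_u hT (fun j => hu (ns j)) (fun j => hv (ns j))
      (hdist.comp hns.tendsto_atTop),
    hae.mono fun p hp => hsub hp fun j => (abs_sub_le_gradError p).1,
    hae.mono fun p hp => hsub hp fun j => (abs_sub_le_gradError p).2.1,
    hae.mono fun p hp => hsub hp fun j => (abs_sub_le_gradError p).2.2⟩

end GradContinuity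

section Limits

open Filter Topology

variable {α T r1 r2 ε s : ℝ} {sm sp sigmat u0 d : ℝ → ℝ}
  {b bx c f us usx ust u ux ut vt : ℝ → ℝ → ℝ} {E : Set (ℝ × ℝ)} {W : ℕ → PairData}
  {p : ℝ × ℝ} {φ : ℝ × ℝ → ℝ}

theorem tendsto_Pot (hcoeff : CoeffHyp α T b bx c f d)
    (hW : ∀ j, ContinuousOn (fun p : ℝ × ℝ => (W j).u p.1 p.2) (ClOmegaT T))
    (h : TendstoUniformlyOn (fun j p => (W j).u p.1 p.2) (fun p : ℝ × ℝ => u p.1 p.2) atTop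
      (ClOmegaT T)) (hp : p ∈ ClOmegaT T) :
    Tendsto (fun j => Pot c bx (W j).u p.1 p.2) atTop (𝓝 (Pot c bx u p.1 p.2)) := by
  simp only [Pot_eq_mul_integral hcoeff hp.1 hp.2]
  have hsub : uIcc 0 p.1 ⊆ (fun y => (y, p.2)) ⁻¹' ClOmegaT T := fun y hy => by
    rw [uIcc_of_le hp.1.1] at hy
    exact ⟨⟨hy.1, hy.2.trans hp.1.2⟩, hp.2⟩
  refine (TendstoUniformlyOn.tendsto_intervalIntegral_of_continuousOn
    (.of_forall fun j => ?_) ((h.comp fun y => (y, p.2)).mono hsub)).const_mul _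
  exact (hW j).comp (by fun_prop) hsub

namespace GradConvergesTo

theorem tendsto_GVal (h : GradConvergesTo T W u ux ut vt) (hcoeff : CoeffHyp α T b bx c f d)
    (hW : ∀ j, ContinuousOn (fun p : ℝ × ℝ => (W j).u p.1 p.2) (ClOmegaT T)) :
    ∀ᵐ p ∂(volume.restrict (OmegaT T)),
      Tendsto (fun j => GVal b c bx f (W j).u (W j).vt p.1 p.2) atTop
        (𝓝 (GVal b c bx f u vt p.1 p.2)) := by
  filter_upwards [h.vt_tendsto, ae_restrict_mem (measurableSet_OmegaT T)] with p hvt hp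
  have hpC := OmegaT_subset_ClOmegaT T hp
  exact ((hvt.sub ((h.u_tendsto.tendsto_at hpC).const_mul _)).sub
    (tendsto_Pot hcoeff hW h.u_tendsto hpC)).sub_const _

theorem u_eq_off (h : GradConvergesTo T W u ux ut vt)
    (hW : ∀ j, IsStarModification T r1 r2 ε sm sp sigmat b bx c f u0 us usx ust E (W j)) :
    ∀ p ∈ OmegaT T \ E, u p.1 p.2 = us p.1 p.2 := fun p hp =>
  tendsto_nhds_unique (h.u_tendsto.tendsto_at (OmegaT_subset_ClOmegaT T hp.1))
    (by simp only [(hW _).u_eq p hp, tendsto_const_nhds_iff])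

theorem ux_eq_off (h : GradConvergesTo T W u ux ut vt) (hE : MeasurableSet E)
    (hW : ∀ j, IsStarModification T r1 r2 ε sm sp sigmat b bx c f u0 us usx ust E (W j)) :
    ∀ᵐ p ∂(volume.restrict (OmegaT T \ E)), ux p.1 p.2 = usx p.1 p.2 := by
  filter_upwards [ae_restrict_of_ae_restrict_of_subset sdiff_subset h.ux_tendsto,
    ae_restrict_mem ((measurableSet_OmegaT T).diff hE)] with p hp hpE
  exact tendsto_nhds_unique hp (by simp only [(hW _).ux_eq p hpE, tendsto_const_nhds_iff])

theorem GVal_eq_off (h : GradConvergesTo T W u ux ut vt) (hcoeff : CoeffHyp α T b bx c f d)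
    (hE : MeasurableSet E)
    (hW : ∀ j, IsStarModification T r1 r2 ε sm sp sigmat b bx c f u0 us usx ust E (W j)) :
    ∀ᵐ p ∂(volume.restrict (OmegaT T \ E)),
      GVal b c bx f u vt p.1 p.2 = sigmat (usx p.1 p.2) := by
  filter_upwards [ae_restrict_of_ae_restrict_of_subset sdiff_subset
      (h.tendsto_GVal hcoeff fun j => (hW j).c21.cont),
    ae_restrict_mem ((measurableSet_OmegaT T).diff hE)] with p hp hpE
  exact tendsto_nhds_unique hp (by simp only [(hW _).GVal_eq p hpE, tendsto_const_nhds_iff])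

theorem abs_u_sub_le (h : GradConvergesTo T W u ux ut vt)
    (hW : ∀ j, IsStarModification T r1 r2 ε sm sp sigmat b bx c f u0 us usx ust E (W j)) :
    ∀ p ∈ OmegaT T, |u p.1 p.2 - us p.1 p.2| ≤ ε / 2 := fun p hp =>
  le_of_tendsto' ((h.u_tendsto.tendsto_at (OmegaT_subset_ClOmegaT T hp)).sub_const _).abs
    fun j => (hW j).abs_u_sub_le p hp

theorem abs_ut_sub_le (h : GradConvergesTo T W u ux ut vt)
    (hW : ∀ j, IsStarModification T r1 r2 ε sm sp sigmat b bx c f u0 us usx ust E (W j)) :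
    ∀ᵐ p ∂(volume.restrict (OmegaT T)), |ut p.1 p.2 - ust p.1 p.2| ≤ ε / 2 := by
  filter_upwards [h.ut_tendsto, ae_restrict_mem (measurableSet_OmegaT T)] with p hut hp
  exact le_of_tendsto' (hut.sub_const _).abs fun j => (hW j).abs_ut_sub_le p hp

end GradConvergesTo

theorem BranchPair.tendsto_comp (hBr : BranchPair sm sp r1 r2) {q : ℕ → ℝ} {l : ℝ}
    (hq : ∀ j, q j ∈ Icc r1 r2) (hl : Tendsto q atTop (𝓝 l)) :
    l ∈ Icc r1 r2 ∧ Tendsto (fun j => sm (q j)) atTop (𝓝 (sm l)) ∧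
      Tendsto (fun j => sp (q j)) atTop (𝓝 (sp l)) := by
  have hmem := isClosed_Icc.mem_of_tendsto hl (.of_forall hq)
  have hlim := tendsto_nhdsWithin_iff.2 ⟨hl, .of_forall hq⟩
  exact ⟨hmem, (hBr.continuousOn_left l hmem).tendsto.comp hlim,
    (hBr.continuousOn_right l hmem).tendsto.comp hlim⟩

namespace GradConvergesTo

theorem ae_tendsto_branches (h : GradConvergesTo T W u ux ut vt)
    (hBr : BranchPair sm sp r1 r2) (hcoeff : CoeffHyp α T b bx c f d)
    (hE : MeasurableSet E) (hEΩ : E ⊆ OmegaT T)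
    (hW : ∀ j, IsStarModification T r1 r2 ε sm sp sigmat b bx c f u0 us usx ust E (W j)) :
    ∀ᵐ p ∂(volume.restrict E), GVal b c bx f u vt p.1 p.2 ∈ Icc r1 r2 ∧
      Tendsto (fun j => (W j).ux p.1 p.2) atTop (𝓝 (ux p.1 p.2)) ∧
      Tendsto (fun j => sm (GVal b c bx f (W j).u (W j).vt p.1 p.2)) atTop
        (𝓝 (sm (GVal b c bx f u vt p.1 p.2))) ∧
      Tendsto (fun j => sp (GVal b c bx f (W j).u (W j).vt p.1 p.2)) atTop
        (𝓝 (sp (GVal b c bx f u vt p.1 p.2))) := by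
  filter_upwards [ae_restrict_of_ae_restrict_of_subset hEΩ h.ux_tendsto,
    ae_restrict_of_ae_restrict_of_subset hEΩ (h.tendsto_GVal hcoeff fun j => (hW j).c21.cont),
    ae_restrict_mem hE] with p hux hG hp
  obtain ⟨hmem, hsm, hsp⟩ := hBr.tendsto_comp
    (fun j => snd_mem_Icc_of_mem_Uprime ((hW j).mem_Uprime p hp)) hG
  exact ⟨hmem, hux, hsm, hsp⟩

theorem ae_mem_Icc (h : GradConvergesTo T W u ux ut vt)
    (hBr : BranchPair sm sp r1 r2) (hcoeff : CoeffHyp α T b bx c f d)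
    (hE : MeasurableSet E) (hEΩ : E ⊆ OmegaT T)
    (hW : ∀ j, IsStarModification T r1 r2 ε sm sp sigmat b bx c f u0 us usx ust E (W j)) :
    ∀ᵐ p ∂(volume.restrict E), GVal b c bx f u vt p.1 p.2 ∈ Icc r1 r2 ∧
      ux p.1 p.2 ∈ Icc (sm (GVal b c bx f u vt p.1 p.2)) (sp (GVal b c bx f u vt p.1 p.2)) := by
  filter_upwards [h.ae_tendsto_branches hBr hcoeff hE hEΩ hW, ae_restrict_mem hE]
    with p ⟨hG, hux, hsm, hsp⟩ hp
  exact ⟨hG, le_of_tendsto_of_tendsto' hsm hux fun j => ((hW j).mem_Uprime p hp).2.2.1.le,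
    le_of_tendsto_of_tendsto' hux hsp fun j => ((hW j).mem_Uprime p hp).2.2.2.le⟩

theorem tendsto_Gauge (h : GradConvergesTo T W u ux ut vt)
    (hBr : BranchPair sm sp r1 r2) (hcoeff : CoeffHyp α T b bx c f d)
    (hE : IsOpen E) (hEΩ : E ⊆ OmegaT T)
    (hW : ∀ j, IsStarModification T r1 r2 ε sm sp sigmat b bx c f u0 us usx ust E (W j)) :
    Tendsto (fun j => Gauge sm sp b bx c f (W j).u (W j).vt (W j).ux E) atTop
      (𝓝 (Gauge sm sp b bx c f u vt ux E)) := by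
  have hfin : IsFiniteMeasure (volume.restrict E) :=
    ⟨by simpa using (measure_mono hEΩ).trans_lt (volume_OmegaT_lt_top T)⟩
  refine (tendsto_integral_filter_of_norm_le_const (.of_forall fun j => ?_)
    ⟨1, .of_forall fun j => ae_restrict_of_forall_mem hE.measurableSet fun p hp => ?_⟩
    ?_).const_mul _
  · exact (integrableOn_Zfun hBr hcoeff hE hEΩ (hW j).c21.cont (hW j).c21.cont_x
      (hW j).c31.cont_t (hW j).mem_Uprime).aestronglyMeasurable
  · have hZ := Zfun_mem_Icc ((hW j).mem_Uprime p hp)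
    rw [Real.norm_of_nonneg hZ.1]
    exact hZ.2
  · filter_upwards [h.ae_tendsto_branches hBr hcoeff hE.measurableSet hEΩ hW]
      with p ⟨hG, hux, hsm, hsp⟩
    exact (hux.sub hsm).div (hsp.sub hsm) (sub_pos.2 (hBr.left_lt_right hG)).ne'

theorem abs_Gauge_sub_le (h : GradConvergesTo T W u ux ut vt)
    (hBr : BranchPair sm sp r1 r2) (hcoeff : CoeffHyp α T b bx c f d)
    (hE : IsOpen E) (hEΩ : E ⊆ OmegaT T)
    (hW : ∀ j, IsStarModification T r1 r2 ε sm sp sigmat b bx c f u0 us usx ust E (W j))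
    {Γ δ : ℝ} (hΓ : ∀ j, |Gauge sm sp b bx c f (W j).u (W j).vt (W j).ux E - Γ| ≤ δ) :
    |Gauge sm sp b bx c f u vt ux E - Γ| ≤ δ :=
  le_of_tendsto' ((h.tendsto_Gauge hBr hcoeff hE hEΩ hW).sub_const Γ).abs hΓ

end GradConvergesTo

end Limits

section WeakLimit

open Filter Topology

variable {α T r1 r2 ε M s : ℝ} {sm sp sigmat u0 d : ℝ → ℝ}
  {b bx c f us usx ust u ux ut vt q : ℝ → ℝ → ℝ} {E : Set (ℝ × ℝ)} {φ : ℝ × ℝ → ℝ}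

theorem BranchPair.isBounded_Uprime (hBr : BranchPair sm sp r1 r2) :
    Bornology.IsBounded (Uprime sm sp r1 r2) := by
  obtain ⟨A, hA⟩ := isCompact_Icc.exists_bound_of_continuousOn hBr.continuousOn_left
  obtain ⟨B, hB⟩ := isCompact_Icc.exists_bound_of_continuousOn hBr.continuousOn_right
  refine ((Metric.isBounded_Icc (-A) B).prod (Metric.isBounded_Icc r1 r2)).subset fun q hq => ?_
  have hqI := snd_mem_Icc_of_mem_Uprime hq
  exact ⟨⟨(abs_le.1 (hA _ hqI)).1.trans hq.2.2.1.le, hq.2.2.2.le.trans (abs_le.1 (hB _ hqI)).2⟩,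
    hqI⟩

theorem exists_bound_of_isStarModification (hT : 0 < T) (hBr : BranchPair sm sp r1 r2)
    (hσ : Continuous sigmat) (hus : ContinuousOn (fun p : ℝ × ℝ => us p.1 p.2) (ClOmegaT T))
    (husx : ContinuousOn (fun p : ℝ × ℝ => usx p.1 p.2) (ClOmegaT T)) :
    ∃ M, ∀ W, IsStarModification T r1 r2 ε sm sp sigmat b bx c f u0 us usx ust E W →
      (∀ p ∈ ClOmegaT T, |W.u p.1 p.2| ≤ M) ∧
      ∀ p ∈ OmegaT T, |W.ux p.1 p.2| ≤ M ∧ |GVal b c bx f W.u W.vt p.1 p.2| ≤ M := by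
  obtain ⟨A, -, hA⟩ := exists_abs_le_of_continuousOn_ClOmegaT hus
  obtain ⟨B, hB0, hB⟩ := exists_abs_le_of_continuousOn_ClOmegaT husx
  obtain ⟨D, hD0, hD⟩ := exists_abs_le_of_continuousOn_ClOmegaT (hσ.comp_continuousOn husx)
  obtain ⟨R, hR⟩ := hBr.isBounded_Uprime.exists_norm_le
  refine ⟨max (A + ε / 2) (max R (B + D)), fun W hW => ⟨fun p hp => ?_, fun p hp => ?_⟩⟩
  · rw [← closure_OmegaT hT] at hp
    refine le_on_closure (f := fun p => |W.u p.1 p.2|) (fun z hz => le_max_of_le_left ?_)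
      (closure_OmegaT hT ▸ hW.c21.cont.abs) continuousOn_const hp
    have h1 := abs_le.1 (hW.abs_u_sub_le z hz)
    have h2 := abs_le.1 (hA z (OmegaT_subset_ClOmegaT T hz))
    exact abs_le.2 ⟨by linarith, by linarith⟩
  · by_cases hpE : p ∈ E
    · have h := norm_prod_le_iff.1 (hR _ (hW.mem_Uprime p hpE))
      exact h.imp (·.trans (le_max_of_le_right (le_max_left _ _)))
        (·.trans (le_max_of_le_right (le_max_left _ _)))
    · have hpC := OmegaT_subset_ClOmegaT T hp
      rw [hW.ux_eq p ⟨hp, hpE⟩, hW.GVal_eq p ⟨hp, hpE⟩]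
      refine ⟨le_max_of_le_right (le_max_of_le_right ((hB p hpC).trans ?_)),
        le_max_of_le_right (le_max_of_le_right ((hD p hpC).trans ?_))⟩ <;> linarith

theorem exists_abs_weakDensity_le (hcoeff : CoeffHyp α T b bx c f d)
    (hφ : ContDiff ℝ (⊤ : ℕ∞) φ) (M : ℝ) :
    ∃ C, ∀ (u ux q : ℝ → ℝ → ℝ), ∀ p ∈ ClOmegaT T, |u p.1 p.2| ≤ M → |ux p.1 p.2| ≤ M →
      |q p.1 p.2| ≤ M → |weakDensity b c f u ux q φ p| ≤ C := by
  have hfst : MapsTo Prod.fst (ClOmegaT T ×ˢ (Icc (-M) M ×ˢ (Icc (-M) M ×ˢ Icc (-M) M)))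
      (ClOmegaT T) := fun z hz => hz.1
  have hcomp {g : ℝ × ℝ → ℝ} (hg : ContinuousOn g (ClOmegaT T)) :=
    hg.comp continuousOn_fst hfst
  have hcont : ContinuousOn (fun z : (ℝ × ℝ) × ℝ × ℝ × ℝ =>
      z.2.1 * partialT φ z.1 - z.2.2.2 * partialX φ z.1
        + (b z.1.1 z.1.2 * z.2.2.1 + c z.1.1 z.1.2 * z.2.1 + f z.1.1 z.1.2) * φ z.1)
      (ClOmegaT T ×ˢ (Icc (-M) M ×ˢ (Icc (-M) M ×ˢ Icc (-M) M))) := by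
    have hu : Continuous fun z : (ℝ × ℝ) × ℝ × ℝ × ℝ => z.2.1 := by fun_prop
    have hux : Continuous fun z : (ℝ × ℝ) × ℝ × ℝ × ℝ => z.2.2.1 := by fun_prop
    have hq : Continuous fun z : (ℝ × ℝ) × ℝ × ℝ × ℝ => z.2.2.2 := by fun_prop
    exact ((hu.continuousOn.mul (hcomp (contDiff_partialT hφ).continuous.continuousOn)).sub
      (hq.continuousOn.mul (hcomp (contDiff_partialX hφ).continuous.continuousOn))).add
      (((((hcomp hcoeff.b_cont).mul hux.continuousOn).add
        ((hcomp hcoeff.c_cont).mul hu.continuousOn)).add (hcomp hcoeff.f_cont)).mul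
          (hcomp hφ.continuous.continuousOn))
  obtain ⟨C, hC⟩ := ((isCompact_ClOmegaT T).prod (isCompact_Icc.prod
    (isCompact_Icc.prod isCompact_Icc))).exists_bound_of_continuousOn hcont
  exact ⟨C, fun u ux q p hp hu hux hq => hC (p, u p.1 p.2, ux p.1 p.2, q p.1 p.2)
    ⟨hp, abs_le.1 hu, abs_le.1 hux, abs_le.1 hq⟩⟩

namespace GradConvergesTo

variable {W : ℕ → PairData}

theorem tendsto_weakDensity (h : GradConvergesTo T W u ux ut vt)
    (hcoeff : CoeffHyp α T b bx c f d)
    (hW : ∀ j, ContinuousOn (fun p : ℝ × ℝ => (W j).u p.1 p.2) (ClOmegaT T)) :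
    ∀ᵐ p ∂(volume.restrict (OmegaT T)), Tendsto
      (fun j => weakDensity b c f (W j).u (W j).ux (GVal b c bx f (W j).u (W j).vt) φ p) atTop
      (𝓝 (weakDensity b c f u ux (GVal b c bx f u vt) φ p)) := by
  filter_upwards [h.ux_tendsto, h.tendsto_GVal hcoeff hW,
    ae_restrict_mem (measurableSet_OmegaT T)] with p hux hG hp
  have hu := h.u_tendsto.tendsto_at (OmegaT_subset_ClOmegaT T hp)
  exact ((hu.mul_const _).sub (hG.mul_const _)).add
    ((((hux.const_mul _).add (hu.const_mul _)).add_const _).mul_const _)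

theorem integrableOn_weakDensity_and_tendsto (h : GradConvergesTo T W u ux ut vt)
    (hT : 0 < T) (hcoeff : CoeffHyp α T b bx c f d) (hBr : BranchPair sm sp r1 r2)
    (hσ : Continuous sigmat) (hus : ContinuousOn (fun p : ℝ × ℝ => us p.1 p.2) (ClOmegaT T))
    (husx : ContinuousOn (fun p : ℝ × ℝ => usx p.1 p.2) (ClOmegaT T))
    (hW : ∀ j, IsStarModification T r1 r2 ε sm sp sigmat b bx c f u0 us usx ust E (W j))
    (hφ : ContDiff ℝ (⊤ : ℕ∞) φ) (hs : s ≤ T) :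
    IntegrableOn (weakDensity b c f u ux (GVal b c bx f u vt) φ) (OmegaT s) ∧
    Tendsto (fun j => ∫ p in OmegaT s,
        weakDensity b c f (W j).u (W j).ux (GVal b c bx f (W j).u (W j).vt) φ p) atTop
      (𝓝 (∫ p in OmegaT s, weakDensity b c f u ux (GVal b c bx f u vt) φ p)) := by
  have hsub : OmegaT s ⊆ OmegaT T := prod_mono subset_rfl (Ioo_subset_Ioo_right hs)
  obtain ⟨M, hM⟩ := exists_bound_of_isStarModification (ε := ε) (b := b) (bx := bx) (c := c)
    (f := f) (u0 := u0) (ust := ust) (E := E) hT hBr hσ hus husx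
  obtain ⟨C, hC⟩ := exists_abs_weakDensity_le hcoeff hφ M
  have hlim := ae_restrict_of_ae_restrict_of_subset hsub
    (h.tendsto_weakDensity (φ := φ) hcoeff fun j => (hW j).c21.cont)
  have hmeas : ∀ j, AEStronglyMeasurable (weakDensity b c f (W j).u (W j).ux
      (GVal b c bx f (W j).u (W j).vt) φ) (volume.restrict (OmegaT s)) := fun j =>
    (integrableOn_OmegaT_of_continuousOn_ClOmegaT (continuousOn_weakDensity hcoeff (hW j).c21.cont
      (hW j).c21.cont_x ((hW j).continuousOn_GVal hcoeff) hφ) hs).aestronglyMeasurable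
  have hbound : ∀ j, ∀ᵐ p ∂(volume.restrict (OmegaT s)), ‖weakDensity b c f (W j).u (W j).ux
      (GVal b c bx f (W j).u (W j).vt) φ p‖ ≤ C := fun j =>
    ae_restrict_of_forall_mem (measurableSet_OmegaT s) fun p hp =>
      have hpC := OmegaT_subset_ClOmegaT T (hsub hp)
      have hMj := hM _ (hW j)
      hC _ _ _ p hpC (hMj.1 p hpC) (hMj.2 p (hsub hp)).1 (hMj.2 p (hsub hp)).2
  refine ⟨.of_bound (volume_OmegaT_lt_top s) (aestronglyMeasurable_of_tendsto_ae atTop hmeas hlim)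
    C ?_, tendsto_integral_filter_of_norm_le_const (.of_forall hmeas)
      ⟨C, .of_forall hbound⟩ hlim⟩
  filter_upwards [hlim, ae_all_iff.2 hbound] with p hp hb
  exact le_of_tendsto' hp.norm hb

theorem tendsto_integral_slice (h : GradConvergesTo T W u ux ut vt)
    (hW : ∀ j, ContinuousOn (fun p : ℝ × ℝ => (W j).u p.1 p.2) (ClOmegaT T))
    (hφ : Continuous φ) {k : ℝ → ℝ} (hk : ContinuousOn k (Icc 0 1)) (hs : s ∈ Icc 0 T) :
    Tendsto (fun j => ∫ x in Ioo (0 : ℝ) 1, ((W j).u x s * φ (x, s) - k x)) atTop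
      (𝓝 (∫ x in Ioo (0 : ℝ) 1, (u x s * φ (x, s) - k x))) := by
  have hφs : ContinuousOn (fun x => φ (x, s)) (Icc 0 1) := by fun_prop
  have hconst (m : ℝ → ℝ) : TendstoUniformlyOn (fun _ : ℕ => m) m atTop (Icc 0 1) :=
    fun _ hV => .of_forall fun _ _ _ => refl_mem_uniformity hV
  have hslice : TendstoUniformlyOn (fun j x => (W j).u x s) (fun x => u x s) atTop (Icc 0 1) :=
    (h.u_tendsto.comp fun x => (x, s)).mono fun x hx => ⟨hx, hs⟩
  have hWs j : ContinuousOn (fun x => (W j).u x s) (Icc 0 1) := continuousOn_slice_fst (hW j) hs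
  have hu : ContinuousOn (fun x => u x s) (Icc 0 1) :=
    hslice.continuousOn (Eventually.of_forall hWs).frequently
  have hprod : TendstoUniformlyOn (fun j x => (W j).u x s * φ (x, s))
      (fun x => u x s * φ (x, s)) atTop (Icc 0 1) :=
    (tendstoLocallyUniformlyOn_iff_tendstoUniformlyOn_of_compact isCompact_Icc).1
      (hslice.tendstoLocallyUniformlyOn.mul₀ (hconst _).tendstoLocallyUniformlyOn hu hφs)
  simp only [← integral_Ioc_eq_integral_Ioo, ← intervalIntegral.integral_of_le zero_le_one]
  rw [← uIcc_of_le zero_le_one] at *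
  exact TendstoUniformlyOn.tendsto_intervalIntegral_of_continuousOn
    (.of_forall fun j => ((hWs j).mul hφs).sub hk) (hprod.sub (hconst k))

theorem setIntegral_weakDensity (h : GradConvergesTo T W u ux ut vt)
    (hT : 0 < T) (hcoeff : CoeffHyp α T b bx c f d) (hBr : BranchPair sm sp r1 r2)
    (hσ : Continuous sigmat) (hus : ContinuousOn (fun p : ℝ × ℝ => us p.1 p.2) (ClOmegaT T))
    (husx : ContinuousOn (fun p : ℝ × ℝ => usx p.1 p.2) (ClOmegaT T))
    (hW : ∀ j, IsStarModification T r1 r2 ε sm sp sigmat b bx c f u0 us usx ust E (W j))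
    (hφ : ContDiff ℝ (⊤ : ℕ∞) φ) (hs : s ∈ Icc 0 T) :
    ∫ p in OmegaT s, weakDensity b c f u ux (GVal b c bx f u vt) φ p
      = ∫ x in Ioo (0 : ℝ) 1, (u x s * φ (x, s) - u0 x * φ (x, 0)) := by
  have hlim := (h.integrableOn_weakDensity_and_tendsto hT hcoeff hBr hσ hus husx hW hφ hs.2).2
  simp only [(hW _).setIntegral_weakDensity hT hcoeff hφ hs] at hlim
  have hu0 : ContinuousOn u0 (Icc 0 1) :=
    (continuousOn_slice_fst (hW 0).c21.cont (left_mem_Icc.2 hT.le)).congr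
      fun x hx => ((hW 0).u_init x hx).symm
  have hφ0 : Continuous fun x : ℝ => φ (x, 0) := hφ.continuous.comp (by fun_prop)
  exact tendsto_nhds_unique hlim (h.tendsto_integral_slice (fun j => (hW j).c21.cont)
    hφ.continuous (hu0.mul hφ0.continuousOn) hs)

end GradConvergesTo

theorem LipschitzPair.isLipschitzSolution {v vx : ℝ → ℝ → ℝ} {sigma : ℝ → ℝ}
    (hw : LipschitzPair T u v ux ut vx vt)
    (hq : ∀ᵐ p ∂(volume.restrict (OmegaT T)), q p.1 p.2 = sigma (ux p.1 p.2))
    (hint : ∀ (φ : ℝ × ℝ → ℝ), ContDiff ℝ (⊤ : ℕ∞) φ → ∀ s ∈ Icc 0 T,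
      IntegrableOn (weakDensity b c f u ux q φ) (OmegaT s))
    (hweak : ∀ (φ : ℝ × ℝ → ℝ), ContDiff ℝ (⊤ : ℕ∞) φ → ∀ s ∈ Icc 0 T,
      ∫ p in OmegaT s, weakDensity b c f u ux q φ p
        = ∫ x in Ioo (0 : ℝ) 1, (u x s * φ (x, s) - u0 x * φ (x, 0))) :
    IsLipschitzSolution T sigma b c f u0 u ux := by
  refine ⟨hw.lip_u, hw.ux_deriv, fun ζ hζ s hs => ?_⟩
  have heq : weakDensity b c f u ux q (fun p => ζ p.1 p.2) =ᵐ[volume.restrict (OmegaT s)]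
      fun p => u p.1 p.2 * deriv (fun τ => ζ p.1 τ) p.2
        - sigma (ux p.1 p.2) * deriv (fun y => ζ y p.2) p.1
        + (b p.1 p.2 * ux p.1 p.2 + c p.1 p.2 * u p.1 p.2 + f p.1 p.2) * ζ p.1 p.2 := by
    refine (ae_restrict_of_ae_restrict_of_subset
      (prod_mono subset_rfl (Ioo_subset_Ioo_right hs.2)) hq).mono fun p hp => ?_
    have hd : DifferentiableAt ℝ (fun p : ℝ × ℝ => ζ p.1 p.2) p :=
      (hζ.differentiable (by simp)).differentiableAt
    have hX : deriv (fun y => ζ y p.2) p.1 = partialX (fun p => ζ p.1 p.2) p :=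
      (hasDerivAt_partialX hd).deriv
    have hT : deriv (fun τ => ζ p.1 τ) p.2 = partialT (fun p => ζ p.1 p.2) p :=
      (hasDerivAt_partialT hd).deriv
    simp only [weakDensity, hp, hX, hT]
  rw [← hweak _ hζ s hs, integral_congr_ae heq]
  exact (setIntegral_OmegaT_eq_integral_snd ((hint _ hζ s hs).congr heq)).symm

end WeakLimit

section Extremality

open Filter Topology

variable {α T r1 r2 mstar ε τ GammaStar : ℝ} {sigma sm sp sigmat u0 d : ℝ → ℝ}
  {b bx c f us usx ust vs u v ux ut vx vt : ℝ → ℝ → ℝ} {E : Set (ℝ × ℝ)} {W : ℕ → PairData}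

theorem LipschitzPair.setIntegral_abs_ux_sub_le (hw : LipschitzPair T u v ux ut vx vt)
    {W W' : PairData} (hW : C21 T W.u W.ux W.uxx W.ut) (hW' : C21 T W'.u W'.ux W'.uxx W'.ut) :
    ∫ p in OmegaT T, |W'.ux p.1 p.2 - W.ux p.1 p.2|
      ≤ (∫ p in OmegaT T, |W'.ux p.1 p.2 - ux p.1 p.2|)
        + ∫ p in OmegaT T, |W.ux p.1 p.2 - ux p.1 p.2| := by
  obtain ⟨K, hK⟩ := hw.lip_u
  have hint {V : PairData} (hV : C21 T V.u V.ux V.uxx V.ut) :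
      IntegrableOn (fun p => |V.ux p.1 p.2 - ux p.1 p.2|) (OmegaT T) :=
    ((integrableOn_OmegaT_of_continuousOn_ClOmegaT hV.cont_x le_rfl).sub
      (integrableOn_of_hasDerivAt_fst hK hw.ux_deriv)).abs
  rw [← integral_add (hint hW') (hint hW)]
  refine integral_mono_of_nonneg (.of_forall fun _ => abs_nonneg _)
    ((hint hW').add (hint hW)) (.of_forall fun p => ?_)
  beta_reduce
  rw [abs_sub_comm (W.ux p.1 p.2)]
  exact abs_sub_le _ _ _

/- The oscillating perturbations form a second admissible sequence with the same limit, whose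
gradients stay at `L¹`-distance at least `τ / 8` times the measure of the gap set from those of the
first. -/
theorem GradContinuousAt.tendsto_volume_phaseGap
    (hA : GradContinuousAt T
      (InAdmissible T r1 r2 mstar ε GammaStar sigma sm sp b bx c f us ust vs E) u v ux ut vx vt)
    (hT : 0 < T) (hcoeff : CoeffHyp α T b bx c f d) (hBr : BranchPair sm sp r1 r2)
    (hEo : IsOpen E) (hE : E ⊆ OmegaT T)
    (hus : ContinuousOn (fun p : ℝ × ℝ => us p.1 p.2) (ClOmegaT T))
    (hust : ContinuousOn (fun p : ℝ × ℝ => ust p.1 p.2) (ClOmegaT T))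
    (hw : LipschitzPair T u v ux ut vx vt)
    (hW : ∀ j, InAdmissible T r1 r2 mstar ε GammaStar sigma sm sp b bx c f us ust vs E (W j))
    (hdist : Tendsto (fun j => pairDist T (W j) u v) atTop (𝓝 0)) (hτ : 0 < τ) :
    Tendsto (fun j => volume (phaseGap sm sp b bx c f (W j).u (W j).ux (W j).vt τ E)) atTop
      (𝓝 0) := by
  obtain ⟨⟨K, hu⟩, ⟨L, hv⟩, -⟩ := id hw
  choose W' hW' hclose hgain using fun j => (hW j).exists_perturbation hT hcoeff hBr hEo hE hus
    hust hτ (Nat.one_div_pos_of_nat (n := j))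
  have hdist' : Tendsto (fun j => pairDist T (W' j) u v) atTop (𝓝 0) := by
    refine squeeze_zero (fun j => pairDist_nonneg hT (hW' j).1.cont (hW' j).2.1.cont
      hu.continuousOn hv.continuousOn) (fun j => pairDist_le_two_mul hT fun p hp => ?_)
      (by simpa only [mul_zero, add_zero] using
        (tendsto_one_div_add_atTop_nhds_zero_nat.add hdist).const_mul 2)
    obtain ⟨hju, hjv⟩ := abs_sub_le_pairDist hT (hW j).1.cont (hW j).2.1.cont hu.continuousOn
      hv.continuousOn (OmegaT_subset_ClOmegaT T hp)
    exact ⟨(abs_sub_le _ _ _).trans (add_le_add (hclose j p).1.le hju),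
      (abs_sub_le _ _ _).trans (add_le_add (hclose j p).2.le hjv)⟩
  have hlim := (hA.tendsto_setIntegral_abs_ux_sub hw hW' (fun j => (hW' j).1)
    (fun j => (hW' j).2.1) hdist').add (hA.tendsto_setIntegral_abs_ux_sub hw hW
      (fun j => (hW j).1) (fun j => (hW j).2.1) hdist)
  have hfin j : volume (phaseGap sm sp b bx c f (W j).u (W j).ux (W j).vt τ E) ≠ ⊤ :=
    ((measure_mono ((sep_subset _ _).trans hE)).trans_lt (volume_OmegaT_lt_top T)).ne
  rw [← ENNReal.tendsto_toReal_zero_iff hfin]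
  refine squeeze_zero (fun _ => ENNReal.toReal_nonneg) (fun j => ?_)
    (by simpa only [mul_zero, add_zero] using hlim.const_mul (τ / 8)⁻¹)
  rw [← div_eq_inv_mul, le_div_iff₀' (by positivity)]
  exact (hgain j).trans (hw.setIntegral_abs_ux_sub_le (hW j).1 (hW' j).1)

theorem ae_frequently_notMem_of_tendsto_measure_zero {X : Type*} [MeasurableSpace X]
    {μ : Measure X} {s : ℕ → Set X} (h : Tendsto (fun j => μ (s j)) atTop (𝓝 0)) :
    ∀ᵐ x ∂μ, ∃ᶠ j in atTop, x ∉ s j := by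
  simp only [frequently_atTop, ae_all_iff]
  intro n
  refine le_antisymm (ge_of_tendsto h ?_) zero_le
  filter_upwards [eventually_ge_atTop n] with j hj
  exact measure_mono fun x hx => by_contra fun hxj => hx ⟨j, hj, hxj⟩

theorem GradConvergesTo.ae_ux_eq_left_or_right (h : GradConvergesTo T W u ux ut vt)
    (hBr : BranchPair sm sp r1 r2) (hcoeff : CoeffHyp α T b bx c f d)
    (hE : MeasurableSet E) (hEΩ : E ⊆ OmegaT T)
    (hW : ∀ j, IsStarModification T r1 r2 ε sm sp sigmat b bx c f u0 us usx ust E (W j))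
    (hgap : ∀ τ > 0, Tendsto (fun j =>
      volume (phaseGap sm sp b bx c f (W j).u (W j).ux (W j).vt τ E)) atTop (𝓝 0)) :
    ∀ᵐ p ∂(volume.restrict E), GVal b c bx f u vt p.1 p.2 ∈ Icc r1 r2 ∧
      (ux p.1 p.2 = sm (GVal b c bx f u vt p.1 p.2) ∨
        ux p.1 p.2 = sp (GVal b c bx f u vt p.1 p.2)) := by
  have hfreq : ∀ᵐ p, ∀ i : ℕ, ∃ᶠ j in atTop,
      p ∉ phaseGap sm sp b bx c f (W j).u (W j).ux (W j).vt (1 / ((i : ℝ) + 1)) E :=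
    ae_all_iff.2 fun i => ae_frequently_notMem_of_tendsto_measure_zero
      (hgap _ Nat.one_div_pos_of_nat)
  filter_upwards [ae_restrict_of_ae hfreq, h.ae_mem_Icc hBr hcoeff hE hEΩ hW,
    h.ae_tendsto_branches hBr hcoeff hE hEΩ hW, ae_restrict_mem hE]
    with p hfreq ⟨hG, hl, hr⟩ ⟨_, hux, hsm, hsp⟩ hp
  refine ⟨hG, ?_⟩
  by_contra! ⟨hnl, hnr⟩
  obtain ⟨i, hi⟩ := exists_nat_one_div_lt
    (lt_min (sub_pos.2 (hl.lt_of_ne' hnl)) (sub_pos.2 (hr.lt_of_ne hnr)))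
  refine hfreq i ?_
  filter_upwards [(hux.sub hsm).eventually_const_lt (hi.trans_le (min_le_left _ _)),
    (hsp.sub hux).eventually_const_lt (hi.trans_le (min_le_right _ _))] with j hjl hjr
  exact not_not.2 ⟨hp, lt_sub_iff_add_lt'.1 hjl, lt_sub_iff_add_lt'.1 hjr⟩

end Extremality

section PhaseVolumes

variable {T r1 r2 : ℝ} {sm sp : ℝ → ℝ} {b bx c f u ux vt : ℝ → ℝ → ℝ} {E : Set (ℝ × ℝ)}
  {p : ℝ × ℝ}

theorem setIntegral_eq_measure_of_ae_eq_indicator {X Y : Type*} [MeasurableSpace X]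
    [MeasurableSpace Y] {μ : Measure X} {E : Set X} {g : X → Y} {I : Set Y} {z : X → ℝ}
    (hE : MeasurableSet E) (hμE : μ E ≠ ⊤) (hg : AEMeasurable g (μ.restrict E))
    (hI : MeasurableSet I) (hz : ∀ᵐ x ∂(μ.restrict E), z x = I.indicator 1 (g x)) :
    IntegrableOn z E μ ∧ ∫ x in E, z x ∂μ = (μ {x ∈ E | g x ∈ I}).toReal := by
  have hfin : IsFiniteMeasure (μ.restrict E) := ⟨by simpa using hμE.lt_top⟩
  have hpre : NullMeasurableSet (g ⁻¹' I) (μ.restrict E) := hg.nullMeasurableSet_preimage hI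
  have hz' : z =ᵐ[μ.restrict E] (g ⁻¹' I).indicator fun _ => 1 := hz
  refine ⟨((integrable_const 1).indicator₀ hpre).congr hz'.symm, ?_⟩
  rw [integral_congr_ae hz', integral_indicator₀ hpre, setIntegral_const, smul_eq_mul, mul_one,
    measureReal_def, Measure.restrict_apply' hE, inter_comm]
  rfl

theorem Gauge_mul_volume (hE : volume E ≠ ⊤) :
    Gauge sm sp b bx c f u vt ux E * (volume E).toReal
      = ∫ p in E, Zfun sm sp b bx c f u vt ux p := by
  rcases eq_or_ne (volume E) 0 with h0 | h0
  · rw [h0, ENNReal.toReal_zero, mul_zero, setIntegral_measure_zero _ h0]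
  · rw [Gauge, mul_right_comm, inv_mul_cancel₀ (ENNReal.toReal_ne_zero.2 ⟨h0, hE⟩), one_mul]

theorem BranchPair.Zfun_eq_indicator (hBr : BranchPair sm sp r1 r2)
    (hG : GVal b c bx f u vt p.1 p.2 ∈ Icc r1 r2)
    (hux : ux p.1 p.2 = sm (GVal b c bx f u vt p.1 p.2) ∨
      ux p.1 p.2 = sp (GVal b c bx f u vt p.1 p.2)) :
    Zfun sm sp b bx c f u vt ux p = (Icc (sp r1) (sp r2)).indicator 1 (ux p.1 p.2) ∧
      1 - Zfun sm sp b bx c f u vt ux p = (Icc (sm r1) (sm r2)).indicator 1 (ux p.1 p.2) := by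
  have hl := hBr.left_mem_Icc hG
  have hr := hBr.right_mem_Icc hG
  have hlt := hBr.left_top_lt_right_bot
  rcases hux with h | h
  · have hnot : ux p.1 p.2 ∉ Icc (sp r1) (sp r2) :=
      fun hmem => (h ▸ hl.2).not_gt (hlt.trans_le hmem.1)
    rw [indicator_of_notMem hnot, indicator_of_mem (h ▸ hl), Zfun, h, sub_self, zero_div]
    exact ⟨rfl, sub_zero 1⟩
  · have hnot : ux p.1 p.2 ∉ Icc (sm r1) (sm r2) :=
      fun hmem => (hmem.2.trans_lt hlt).not_ge (h ▸ hr.1)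
    rw [indicator_of_notMem hnot, indicator_of_mem (h ▸ hr), Zfun, h,
      div_self (sub_pos.2 (hBr.left_lt_right hG)).ne']
    exact ⟨rfl, sub_self 1⟩

theorem BranchPair.ae_mem_phases (hBr : BranchPair sm sp r1 r2)
    (hux : ∀ᵐ p ∂(volume.restrict E), GVal b c bx f u vt p.1 p.2 ∈ Icc r1 r2 ∧
      (ux p.1 p.2 = sm (GVal b c bx f u vt p.1 p.2) ∨
        ux p.1 p.2 = sp (GVal b c bx f u vt p.1 p.2))) :
    ∀ᵐ p ∂(volume.restrict E), ux p.1 p.2 ∈ Icc (sm r1) (sm r2) ∪ Icc (sp r1) (sp r2) :=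
  hux.mono fun _ hp => hp.2.imp (fun h => by rw [h]; exact hBr.left_mem_Icc hp.1)
    fun h => by rw [h]; exact hBr.right_mem_Icc hp.1

theorem BranchPair.volume_phases (hBr : BranchPair sm sp r1 r2) (hE : MeasurableSet E)
    (hEfin : volume E ≠ ⊤)
    (hmeas : AEMeasurable (fun p : ℝ × ℝ => ux p.1 p.2) (volume.restrict E))
    (hux : ∀ᵐ p ∂(volume.restrict E), GVal b c bx f u vt p.1 p.2 ∈ Icc r1 r2 ∧
      (ux p.1 p.2 = sm (GVal b c bx f u vt p.1 p.2) ∨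
        ux p.1 p.2 = sp (GVal b c bx f u vt p.1 p.2))) :
    (volume {p ∈ E | ux p.1 p.2 ∈ Icc (sp r1) (sp r2)}).toReal
        = Gauge sm sp b bx c f u vt ux E * (volume E).toReal ∧
      (volume {p ∈ E | ux p.1 p.2 ∈ Icc (sm r1) (sm r2)}).toReal
        = (1 - Gauge sm sp b bx c f u vt ux E) * (volume E).toReal := by
  obtain ⟨hint, hright⟩ := setIntegral_eq_measure_of_ae_eq_indicator hE hEfin hmeas
    measurableSet_Icc (hux.mono fun p hp => (hBr.Zfun_eq_indicator hp.1 hp.2).1)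
  obtain ⟨-, hleft⟩ := setIntegral_eq_measure_of_ae_eq_indicator hE hEfin hmeas
    measurableSet_Icc (hux.mono fun p hp => (hBr.Zfun_eq_indicator hp.1 hp.2).2)
  have hone : IntegrableOn (fun _ : ℝ × ℝ => (1 : ℝ)) E := integrableOn_const hEfin
  rw [← hright, ← hleft, integral_sub hone hint, sub_mul, Gauge_mul_volume hEfin,
    setIntegral_const, smul_eq_mul, mul_one, one_mul, measureReal_def]
  exact ⟨rfl, rfl⟩

end PhaseVolumes

section Regions

open Filter Topology

variable {α s1 s2 lam Lam s1star s2star T r1 r2 ε A B : ℝ}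
  {sigma sigma' sm sp sigmat u0 d : ℝ → ℝ} {b bx c f us usx ust u ux ut vt : ℝ → ℝ → ℝ}
  {E : Set (ℝ × ℝ)} {W : ℕ → PairData}

theorem FluxHyp.branchPair (h : FluxHyp α s1 s2 lam Lam sigma sigma')
    (hs1star : sigma s1star = sigma s2) (hs2star : sigma s2star = sigma s1)
    (hsm : ∀ r ∈ Icc (sigma s2) (sigma s1), sm r ∈ Icc s1star s1 ∧ sigma (sm r) = r)
    (hsp : ∀ r ∈ Icc (sigma s2) (sigma s1), sp r ∈ Icc s2 s2star ∧ sigma (sp r) = r)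
    (hr1 : sigma s2 < r1) (hr12 : r1 ≤ r2) (hr2 : r2 < sigma s1) : BranchPair sm sp r1 r2 := by
  have hIoo : Icc r1 r2 ⊆ Ioo (sigma s2) (sigma s1) := Icc_subset_Ioo hr1 hr2
  have hIcc : Icc r1 r2 ⊆ Icc (sigma s2) (sigma s1) := hIoo.trans Ioo_subset_Icc_self
  have hl : Icc s1star s1 ⊆ Iic s1 := Icc_subset_Iic_self
  have hr : Icc s2 s2star ⊆ Ici s2 := Icc_subset_Ici_self
  exact {
    continuousOn_left :=
      (continuousOn_Ioo_of_rightInverse h.strictMonoOn_Iic hl hs1star rfl hsm).mono hIoo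
    continuousOn_right :=
      (continuousOn_Ioo_of_rightInverse h.strictMonoOn_Ici hr rfl hs2star hsp).mono hIoo
    monotoneOn_left := ((strictMonoOn_of_rightInverse h.strictMonoOn_Iic
      fun r hr => ⟨hl (hsm r hr).1, (hsm r hr).2⟩).mono hIcc).monotoneOn
    monotoneOn_right := ((strictMonoOn_of_rightInverse h.strictMonoOn_Ici
      fun r h => ⟨hr (hsp r h).1, (hsp r h).2⟩).mono hIcc).monotoneOn
    left_top_lt_right_bot :=
      ((hsm r2 (hIcc (right_mem_Icc.2 hr12))).1.2.trans_lt h.s1_lt_s2).trans_le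
        (hsp r1 (hIcc (left_mem_Icc.2 hr12))).1.1 }

theorem isOpen_Omega2 (husx : ContinuousOn (fun p : ℝ × ℝ => usx p.1 p.2) (ClOmegaT T)) :
    IsOpen (Omega2 T A B usx) :=
  (husx.mono (OmegaT_subset_ClOmegaT T)).isOpen_inter_preimage (isOpen_OmegaT T) isOpen_Ioo

theorem Omega1_union_Omega3_subset_sdiff_Omega2 :
    Omega1 T A usx ∪ Omega3 T B usx ⊆ OmegaT T \ Omega2 T A B usx := by
  rintro p (⟨hp, hA⟩ | ⟨hp, hB⟩)
  · exact ⟨hp, fun h => hA.asymm h.2.1⟩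
  · exact ⟨hp, fun h => hB.asymm h.2.2⟩

theorem TildeHyp.continuous {lamt Lamt : ℝ} {sigmat' : ℝ → ℝ}
    (h : TildeHyp α r1 r2 lamt Lamt sigma sm sp sigmat sigmat') : Continuous sigmat :=
  continuous_iff_continuousAt.2 fun s => (h.deriv s).continuousAt

theorem LipschitzPair.aemeasurable_ux {v vx : ℝ → ℝ → ℝ} (hw : LipschitzPair T u v ux ut vx vt) :
    AEMeasurable (fun p : ℝ × ℝ => ux p.1 p.2) (volume.restrict (OmegaT T)) := by
  obtain ⟨K, hK⟩ := hw.lip_u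
  exact (integrableOn_of_hasDerivAt_fst hK hw.ux_deriv).aemeasurable

theorem measurableSet_inter_preimage_of_continuousOn {X Y : Type*} [TopologicalSpace X]
    [MeasurableSpace X] [BorelSpace X] [TopologicalSpace Y] [MeasurableSpace Y] [BorelSpace Y]
    {s : Set X} {g : X → Y} {t : Set Y} (hg : ContinuousOn g s) (hs : MeasurableSet s)
    (ht : MeasurableSet t) : MeasurableSet (s ∩ g ⁻¹' t) := by
  rw [← Subtype.image_preimage_val]
  exact hs.subtype_image (hg.domRestrict.measurable ht)

namespace GradConvergesTo

theorem ae_ux_mem_of_forall_le_or_le (h : GradConvergesTo T W u ux ut vt)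
    (husx : ContinuousOn (fun p : ℝ × ℝ => usx p.1 p.2) (ClOmegaT T))
    (hW : ∀ j, IsStarModification T r1 r2 ε sm sp sigmat b bx c f u0 us usx ust
      (Omega2 T A B usx) (W j))
    {I : Set ℝ} (hI : MeasurableSet I) (hAB : ∀ s ∈ I, s ≤ A ∨ B ≤ s) :
    ∀ᵐ p ∂(volume.restrict {p ∈ OmegaT T | usx p.1 p.2 ∈ I}), ux p.1 p.2 ∈ I := by
  have hsub : {p ∈ OmegaT T | usx p.1 p.2 ∈ I} ⊆ OmegaT T \ Omega2 T A B usx :=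
    fun p hp => ⟨hp.1, fun h => (hAB _ hp.2).elim h.2.1.not_ge h.2.2.not_ge⟩
  filter_upwards [ae_restrict_of_ae_restrict_of_subset hsub
      (h.ux_eq_off (isOpen_Omega2 husx).measurableSet hW),
    ae_restrict_mem (measurableSet_inter_preimage_of_continuousOn
      (husx.mono (OmegaT_subset_ClOmegaT T)) (measurableSet_OmegaT T) hI)] with p hp hpI
  exact hp ▸ hpI.2

/- On `Ω²_T` the flux is `σ(s_G^±) = G`; elsewhere `u_x = u*_x` lies where `σ̃ = σ`. -/
theorem ae_GVal_eq_sigma (h : GradConvergesTo T W u ux ut vt)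
    (hcoeff : CoeffHyp α T b bx c f d)
    (husx : ContinuousOn (fun p : ℝ × ℝ => usx p.1 p.2) (ClOmegaT T))
    (hsm : ∀ r ∈ Icc r1 r2, sigma (sm r) = r) (hsp : ∀ r ∈ Icc r1 r2, sigma (sp r) = r)
    (hleft : ∀ s ≤ A, sigmat s = sigma s) (hright : ∀ s, B ≤ s → sigmat s = sigma s)
    (hW : ∀ j, IsStarModification T r1 r2 ε sm sp sigmat b bx c f u0 us usx ust
      (Omega2 T A B usx) (W j))
    (hux : ∀ᵐ p ∂(volume.restrict (Omega2 T A B usx)), GVal b c bx f u vt p.1 p.2 ∈ Icc r1 r2 ∧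
      (ux p.1 p.2 = sm (GVal b c bx f u vt p.1 p.2) ∨
        ux p.1 p.2 = sp (GVal b c bx f u vt p.1 p.2))) :
    ∀ᵐ p ∂(volume.restrict (OmegaT T)), GVal b c bx f u vt p.1 p.2 = sigma (ux p.1 p.2) := by
  have hE := (isOpen_Omega2 (A := A) (B := B) husx).measurableSet
  have hEΩ : Omega2 T A B usx ⊆ OmegaT T := sep_subset _ _
  rw [← union_sdiff_cancel hEΩ, ae_restrict_union_iff]
  constructor
  · filter_upwards [hux] with p ⟨hG, hp⟩
    rcases hp with hp | hp
    · rw [hp, hsm _ hG]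
    · rw [hp, hsp _ hG]
  · filter_upwards [h.GVal_eq_off hcoeff hE hW, h.ux_eq_off hE hW,
      ae_restrict_mem ((measurableSet_OmegaT T).diff hE)] with p hG hp hpE
    rw [hG, hp]
    rcases le_or_gt (usx p.1 p.2) A with hA | hA
    · exact hleft _ hA
    · exact hright _ (not_lt.1 fun hB => hpE.2 ⟨hpE.1, hA, hB⟩)

theorem isLipschitzSolution (h : GradConvergesTo T W u ux ut vt) {v vx : ℝ → ℝ → ℝ}
    (hw : LipschitzPair T u v ux ut vx vt) (hT : 0 < T) (hcoeff : CoeffHyp α T b bx c f d)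
    (hBr : BranchPair sm sp r1 r2) (hσ : Continuous sigmat)
    (hus : ContinuousOn (fun p : ℝ × ℝ => us p.1 p.2) (ClOmegaT T))
    (husx : ContinuousOn (fun p : ℝ × ℝ => usx p.1 p.2) (ClOmegaT T))
    (hW : ∀ j, IsStarModification T r1 r2 ε sm sp sigmat b bx c f u0 us usx ust E (W j))
    (hq : ∀ᵐ p ∂(volume.restrict (OmegaT T)),
      GVal b c bx f u vt p.1 p.2 = sigma (ux p.1 p.2)) :
    IsLipschitzSolution T sigma b c f u0 u ux :=
  hw.isLipschitzSolution hq
    (fun _ hφ _ hs =>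
      (h.integrableOn_weakDensity_and_tendsto hT hcoeff hBr hσ hus husx hW hφ hs.2).1)
    fun _ hφ _ hs => h.setIntegral_weakDensity hT hcoeff hBr hσ hus husx hW hφ hs

end GradConvergesTo

theorem GradContinuousAt.exists_seq_of_mem_closure {mstar GammaStar : ℝ} {sigmat' : ℝ → ℝ}
    {usxx v vx : ℝ → ℝ → ℝ}
    (hA : GradContinuousAt T (InAdmissible T r1 r2 mstar ε GammaStar sigma sm sp b bx c f us ust
      (VStar sigmat b bx c f u0 us usx) E) u v ux ut vx vt)
    (hT : 0 < T) (hcoeff : CoeffHyp α T b bx c f d) (hBr : BranchPair sm sp r1 r2)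
    (hEo : IsOpen E) (hE : E ⊆ OmegaT T) (hσ' : ∀ s, HasDerivAt sigmat (sigmat' s) s)
    (hσ0 : sigmat 0 = 0) (hstar : StarSol α T sigmat sigmat' b bx c f u0 us usx usxx ust)
    (hw : LipschitzPair T u v ux ut vx vt)
    (hmem : ∃ W : ℕ → PairData,
      (∀ j, InAdmissible T r1 r2 mstar ε GammaStar sigma sm sp b bx c f us ust
        (VStar sigmat b bx c f u0 us usx) E (W j)) ∧
      Tendsto (fun j => pairDist T (W j) u v) atTop (𝓝 0)) :
    ∃ W : ℕ → PairData,
      (∀ j, |Gauge sm sp b bx c f (W j).u (W j).vt (W j).ux E - GammaStar| < ε / 2) ∧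
      (∀ j, IsStarModification T r1 r2 ε sm sp sigmat b bx c f u0 us usx ust E (W j)) ∧
      GradConvergesTo T W u ux ut vt ∧
      ∀ᵐ p ∂(volume.restrict E), GVal b c bx f u vt p.1 p.2 ∈ Icc r1 r2 ∧
        (ux p.1 p.2 = sm (GVal b c bx f u vt p.1 p.2) ∨
          ux p.1 p.2 = sp (GVal b c bx f u vt p.1 p.2)) := by
  obtain ⟨W, hadm, hdist⟩ := hmem
  obtain ⟨n, hn, h⟩ := hA.exists_subseq hT hw hadm (fun j => (hadm j).1)
    (fun j => (hadm j).2.1) hdist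
  have hW j := (hadm (n j)).isStarModification hT hcoeff hσ' hσ0 hstar hE
  exact ⟨fun j => W (n j), fun j => (hadm (n j)).2.2.2.2.2.2, hW, h,
    h.ae_ux_eq_left_or_right hBr hcoeff hEo.measurableSet hE hW fun τ hτ =>
      (hA.tendsto_volume_phaseGap hT hcoeff hBr hEo hE hstar.reg.cont hstar.reg.cont_t hw hadm
        hdist hτ).comp hn.tendsto_atTop⟩

end Regions

/-- If `w = (u,v)` lies in the `L∞`-closure `𝒳` of the admissible set `𝒜`
and the a.e.-gradient map `∇` is continuous at `w`, then `u` is a Lipschitz solution of the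
initial–Neumann problem satisfying properties (a)–(d). -/
theorem continuity_point_gives_solution
    (α s1 s2 lam Lam T s1star s2star r1 r2 x0 lamt Lamt mstar GammaStar ε : ℝ)
    (sigma sigma' sm sp sigmat sigmat' : ℝ → ℝ)
    (b bx c f : ℝ → ℝ → ℝ) (d : ℝ → ℝ) (u0 u0' u0'' : ℝ → ℝ)
    (us usx usxx ust : ℝ → ℝ → ℝ)
    (hT : 0 < T)
    (hflux : FluxHyp α s1 s2 lam Lam sigma sigma')
    (hcoeff : CoeffHyp α T b bx c f d)
    (hinit : InitHyp α u0 u0' u0'')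
    (hs1star : 0 ≤ s1star) (hs1star' : s1star < s1) (hs1star_eq : sigma s1star = sigma s2)
    (hs2star : s2 < s2star) (hs2star_eq : sigma s2star = sigma s1)
    (hsm : ∀ r ∈ Icc (sigma s2) (sigma s1), sm r ∈ Icc s1star s1 ∧ sigma (sm r) = r)
    (hsp : ∀ r ∈ Icc (sigma s2) (sigma s1), sp r ∈ Icc s2 s2star ∧ sigma (sp r) = r)
    (hr1 : sigma s2 < r1) (hr12 : r1 < r2) (hr2 : r2 < sigma s1)
    (hx0 : x0 ∈ Ioo (0:ℝ) 1) (hx0l : sm r1 < u0' x0) (hx0r : u0' x0 < sp r2)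
    (htilde : TildeHyp α r1 r2 lamt Lamt sigma sm sp sigmat sigmat')
    (hstar : StarSol α T sigmat sigmat' b bx c f u0 us usx usxx ust)
    (hmstar : mstar = EssSupAbs T ust + 1)
    (hGammaStar : GammaStar = Gauge sm sp b bx c f us (VStarT sigmat b bx c f us usx) usx
      (Omega2 T (sm r1) (sp r2) usx))
    (hε : 0 < ε)
    -- `w = (u,v)`, a Lipschitz pair with a.e. gradient data `(ux, ut, vx, vt)`
    (u v ux ut vx vt : ℝ → ℝ → ℝ)
    (hlip_u : ∃ K : ℝ≥0, LipschitzOnWith K (fun p : ℝ × ℝ => u p.1 p.2) (ClOmegaT T))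
    (hlip_v : ∃ K : ℝ≥0, LipschitzOnWith K (fun p : ℝ × ℝ => v p.1 p.2) (ClOmegaT T))
    (hux : ∀ᵐ p ∂(volume.restrict (OmegaT T)), HasDerivAt (fun y => u y p.2) (ux p.1 p.2) p.1)
    (hut : ∀ᵐ p ∂(volume.restrict (OmegaT T)), HasDerivAt (fun τ => u p.1 τ) (ut p.1 p.2) p.2)
    (hvx : ∀ᵐ p ∂(volume.restrict (OmegaT T)), HasDerivAt (fun y => v y p.2) (vx p.1 p.2) p.1)
    (hvt : ∀ᵐ p ∂(volume.restrict (OmegaT T)), HasDerivAt (fun τ => v p.1 τ) (vt p.1 p.2) p.2)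
    -- `w ∈ 𝒳`: `w` is an `L∞(Ω_T;ℝ²)`-limit of elements of `𝒜`
    (hclosure : ∃ Wseq : ℕ → PairData,
      (∀ j, InAdmissible T r1 r2 mstar ε GammaStar sigma sm sp b bx c f
        us ust (VStar sigmat b bx c f u0 us usx) (Omega2 T (sm r1) (sp r2) usx) (Wseq j)) ∧
      Filter.Tendsto (fun j => EssSupAbs T (fun x t =>
          Real.sqrt (((Wseq j).u x t - u x t) ^ 2 + ((Wseq j).v x t - v x t) ^ 2)))
        Filter.atTop (nhds 0))
    -- the gradient operator `∇` is continuous at `w`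
    (hcont : ∀ Wseq : ℕ → PairData,
      (∀ j, InAdmissible T r1 r2 mstar ε GammaStar sigma sm sp b bx c f
        us ust (VStar sigmat b bx c f u0 us usx) (Omega2 T (sm r1) (sp r2) usx) (Wseq j)) →
      Filter.Tendsto (fun j => EssSupAbs T (fun x t =>
          Real.sqrt (((Wseq j).u x t - u x t) ^ 2 + ((Wseq j).v x t - v x t) ^ 2)))
        Filter.atTop (nhds 0) →
      Filter.Tendsto (fun j => ∫ p in OmegaT T,
          (|(Wseq j).ux p.1 p.2 - ux p.1 p.2| + |(Wseq j).ut p.1 p.2 - ut p.1 p.2|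
            + |(Wseq j).vx p.1 p.2 - vx p.1 p.2| + |(Wseq j).vt p.1 p.2 - vt p.1 p.2|))
        Filter.atTop (nhds 0)) :
    IsLipschitzSolution T sigma b c f u0 u ux ∧
    -- (a)
    (∀ p ∈ Omega1 T (sm r1) usx ∪ Omega3 T (sp r2) usx, u p.1 p.2 = us p.1 p.2) ∧
    EssSupAbs T (fun x t => u x t - us x t) < ε ∧
    EssSupAbs T (fun x t => ut x t - ust x t) < ε ∧
    -- (b)
    (∀ᵐ p ∂(volume.restrict (Omega1 T (sm r1) usx)), ux p.1 p.2 < sm r1) ∧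
    (∀ᵐ p ∂(volume.restrict (Omega2 T (sm r1) (sp r2) usx)),
      ux p.1 p.2 ∈ Icc (sm r1) (sm r2) ∪ Icc (sp r1) (sp r2)) ∧
    (∀ᵐ p ∂(volume.restrict (Omega3 T (sp r2) usx)), sp r2 < ux p.1 p.2) ∧
    -- (c)
    (∀ᵐ p ∂(volume.restrict (Omega0m T (sm r1) usx)), ux p.1 p.2 = sm r1) ∧
    (∀ᵐ p ∂(volume.restrict (Omega0p T (sp r2) usx)), ux p.1 p.2 = sp r2) ∧
    -- (d)
    ((volume {p ∈ Omega2 T (sm r1) (sp r2) usx | ux p.1 p.2 ∈ Icc (sp r1) (sp r2)}).toReal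
      = Gauge sm sp b bx c f u vt ux (Omega2 T (sm r1) (sp r2) usx)
          * (volume (Omega2 T (sm r1) (sp r2) usx)).toReal) ∧
    ((volume {p ∈ Omega2 T (sm r1) (sp r2) usx | ux p.1 p.2 ∈ Icc (sm r1) (sm r2)}).toReal
      = (1 - Gauge sm sp b bx c f u vt ux (Omega2 T (sm r1) (sp r2) usx))
          * (volume (Omega2 T (sm r1) (sp r2) usx)).toReal) ∧
    |Gauge sm sp b bx c f u vt ux (Omega2 T (sm r1) (sp r2) usx) - GammaStar| < ε := by
  have hBr := hflux.branchPair hs1star_eq hs2star_eq hsm hsp hr1 hr12.le hr2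
  have hIcc : Icc r1 r2 ⊆ Icc (sigma s2) (sigma s1) := Icc_subset_Icc hr1.le hr2.le
  have hσ0 : sigmat 0 = 0 := (htilde.eq_left 0
    (hs1star.trans (hsm r1 (hIcc (left_mem_Icc.2 hr12.le))).1.1)).trans hflux.sigma_zero
  have hw : LipschitzPair T u v ux ut vx vt := ⟨hlip_u, hlip_v, hux, hut, hvx, hvt⟩
  have husx := hstar.reg.cont_x
  have hE : IsOpen (Omega2 T (sm r1) (sp r2) usx) := isOpen_Omega2 husx
  have hEΩ : Omega2 T (sm r1) (sp r2) usx ⊆ OmegaT T := sep_subset _ _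
  have hhalf := half_lt_self hε
  obtain ⟨W, hΓ, hW, h, hext⟩ := GradContinuousAt.exists_seq_of_mem_closure hcont hT hcoeff hBr hE
    hEΩ htilde.deriv hσ0 hstar hw hclosure
  have hG := h.ae_GVal_eq_sigma hcoeff husx (fun r hr => (hsm r (hIcc hr)).2)
    (fun r hr => (hsp r (hIcc hr)).2) htilde.eq_left htilde.eq_right hW hext
  refine ⟨h.isLipschitzSolution hw hT hcoeff hBr htilde.continuous hstar.reg.cont husx hW hG,
    fun p hp => h.u_eq_off hW p (Omega1_union_Omega3_subset_sdiff_Omega2 hp),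
    (EssSupAbs_le_of_forall_le hT (h.abs_u_sub_le hW)).trans_lt hhalf,
    (EssSupAbs_le_of_ae_le hT (h.abs_ut_sub_le hW)).trans_lt hhalf,
    h.ae_ux_mem_of_forall_le_or_le husx hW measurableSet_Iio fun s hs => .inl hs.le,
    hBr.ae_mem_phases hext,
    h.ae_ux_mem_of_forall_le_or_le husx hW measurableSet_Ioi fun s hs => .inr (le_of_lt hs),
    h.ae_ux_mem_of_forall_le_or_le husx hW (measurableSet_singleton _) fun s hs => .inl hs.le,
    h.ae_ux_mem_of_forall_le_or_le husx hW (measurableSet_singleton _) fun s hs => .inr hs.ge,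
    and_assoc.1 ⟨hBr.volume_phases hE.measurableSet ?_ (hw.aemeasurable_ux.mono_set hEΩ) hext,
      (h.abs_Gauge_sub_le hBr hcoeff hE hEΩ hW fun j => (hΓ j).le).trans_lt hhalf⟩⟩
  exact ((measure_mono hEΩ).trans_lt (volume_OmegaT_lt_top T)).ne
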